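/- arXiv:1710.07233 — 6 statements merged into one kernel-verified Lean document; each statement's English description precedes it below -/
import Mathlib

section
/- Let n ≥ 1, let 0 < β < n and set q = n/(n−β). There exists a constant C = C(n,β) > 0 with the following property: for every radial, continuously differentiable function f : ℝⁿ → ℝ such that f and its gradient ∇f are Lebesgue integrable on ℝⁿ, and such that the fractional maximal function M_β f is (totally) differentiable at almost every point of ℝⁿ, one has (∫_{ℝⁿ} |∇M_β f(x)|^q dx)^{1/q} ≤ C ∫_{ℝⁿ} |∇f(x)| dx. -/
open MeasureTheory Metric Filter
open scoped Topology RealInnerProductSpace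

noncomputable section

/-- The set of competitor values for the non-centered fractional maximal function at `x`:
values `r ^ β ⨍_{B(z,r)} |f|` over all open balls `B(z,r)` whose closure contains `x`. -/
def maxSet {n : ℕ} (β : ℝ) (f : EuclideanSpace ℝ (Fin n) → ℝ)
    (x : EuclideanSpace ℝ (Fin n)) : Set ℝ :=
  {t | ∃ z : EuclideanSpace ℝ (Fin n), ∃ r : ℝ, 0 < r ∧ x ∈ closedBall z r ∧
    t = r ^ β * ⨍ y in ball z r, |f y|}

/-- The non-centered fractional maximal function `M_β f`. -/
def fracMax {n : ℕ} (β : ℝ) (f : EuclideanSpace ℝ (Fin n) → ℝ)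
    (x : EuclideanSpace ℝ (Fin n)) : ℝ :=
  sSup (maxSet β f x)

open Module
open scoped ENNReal

/-!
Let `B(z, r)` be a nearly optimal ball for `M_β f(x)` of nearly smallest radius, and let `A` be the
average of `|f|` over it. Enlarging the ball shows `|∇M_β f(x)| ≲ M_β f(x) / r ≲ r ^ (β - 1) * A`.
Since `β > 0`, the averages of `|f|` over much larger balls near `x` are a small fraction of `A`, so
`f` must vary at the scale `r`, in one of two ways.

* If `|x| ≫ r`, then, as `f` is radial, `|f|` crosses the range `[A/2, A]` along each segment of
  length `≲ r` parallel to `x` and centred in `B(x, r)`. Hence `A * r ^ (n - 1)` is controlled by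
  the integral of `|∇f|` over the points `y` near `x` with `A/2 ≤ |f y| ≤ A`. From such a `y` the
  scale `r` can be recovered up to a constant, as the largest radius of a ball through `y` on which
  the average of `|f|` is comparable with `|f y|`.
* If `|x| ≲ r`, comparing concentric balls at the origin by dilation controls `A * r ^ n` by the
  integral of `|∇f y| * |y|` over a ball of radius `≲ r`.

Either way `A ≲ r ^ (1 - n) ∫ |∇f y| min (1, r ^ n K(x, y)) dy` for a kernel `K`, depending on `f`
but not on `r`, of bounded mass in `x`. The exponent `q = n / (n - β)` is the one for which the
powers of `r` cancel: `|∇M_β f(x)| ^ q ≲ ‖∇f‖₁ ^ (q - 1) ∫ |∇f y| K(x, y) dy`. It remains to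
integrate in `x`.
-/

section LineOscillation

variable {E F : Type*} [NormedAddCommGroup E] [NormedSpace ℝ E] [NormedAddCommGroup F]
  [NormedSpace ℝ F]

theorem abs_sub_left_lt_of_mem_uIoo {a b u : ℝ} (hu : u ∈ Set.uIoo a b) : |a - u| < |a - b| := by
  grind [Set.uIoo]

theorem abs_sub_right_lt_of_mem_uIoo {a b u : ℝ} (hu : u ∈ Set.uIoo a b) : |u - b| < |a - b| := by
  grind [Set.uIoo]

-- A pair of points realising the two level sets at minimal distance has no further such point
-- strictly between its members.
theorem exists_mapsTo_uIoo_Icc {φ : ℝ → ℝ} (hφ : Continuous φ) {s t lo hi : ℝ}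
    (hs : hi ≤ φ s) (ht : φ t ≤ lo) :
    ∃ s' ∈ Set.uIcc s t, ∃ t' ∈ Set.uIcc s t, hi ≤ φ s' ∧ φ t' ≤ lo ∧
      Set.MapsTo φ (Set.uIoo s' t') (Set.Icc lo hi) := by
  have compact_hi : IsCompact (Set.uIcc s t ∩ {u | hi ≤ φ u}) :=
    isCompact_uIcc.inter_right (isClosed_le continuous_const hφ)
  have compact_lo : IsCompact (Set.uIcc s t ∩ {u | φ u ≤ lo}) :=
    isCompact_uIcc.inter_right (isClosed_le hφ continuous_const)
  obtain ⟨⟨s', t'⟩, ⟨⟨hs', hs'hi⟩, ht', ht'lo⟩, hmin⟩ :=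
    (compact_hi.prod compact_lo).exists_isMinOn
      ⟨(s, t), ⟨Set.left_mem_uIcc, hs⟩, Set.right_mem_uIcc, ht⟩
      (f := fun p : ℝ × ℝ => |p.1 - p.2|) (by fun_prop)
  refine ⟨s', hs', t', ht', hs'hi, ht'lo, fun u hu => ?_⟩
  have hu_mem : u ∈ Set.uIcc s t :=
    Set.uIcc_subset_uIcc hs' ht' (Set.uIoo_subset_uIcc_self hu)
  constructor
  · by_contra! hlt
    exact (abs_sub_left_lt_of_mem_uIoo hu).not_ge
      (hmin (a := (s', u)) ⟨⟨hs', hs'hi⟩, hu_mem, hlt.le⟩)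
  · by_contra! hlt
    exact (abs_sub_right_lt_of_mem_uIoo hu).not_ge
      (hmin (a := (u, t')) ⟨⟨hu_mem, hlt.le⟩, ht', ht'lo⟩)

theorem enorm_sub_le_lintegral_fderiv_line {f : E → F} (hf : ContDiff ℝ 1 f) (p v : E) (a b : ℝ) :
    ‖f (p + b • v) - f (p + a • v)‖ₑ ≤
      ∫⁻ t in Set.uIoo a b, ‖fderiv ℝ f (p + t • v)‖ₑ * ‖v‖ₑ := by
  wlog hab : a ≤ b generalizing a b
  · rw [← enorm_neg, neg_sub, Set.uIoo_comm]
    exact this b a (le_of_not_ge hab)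
  have hline (t : ℝ) : HasDerivAt (fun t : ℝ => f (p + t • v)) (fderiv ℝ f (p + t • v) v) t := by
    have hv : HasDerivAt (fun t : ℝ => p + t • v) v t := by
      simpa using ((hasDerivAt_id t).smul_const v).const_add p
    exact (hf.differentiable one_ne_zero _).hasFDerivAt.comp_hasDerivAt t hv
  have hsmooth : ContDiff ℝ 1 fun t : ℝ => f (p + t • v) := by fun_prop
  calc ‖f (p + b • v) - f (p + a • v)‖ₑ
      ≤ ∫⁻ t in Set.Icc a b, ‖deriv (fun t : ℝ => f (p + t • v)) t‖ₑ :=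
        enorm_sub_le_lintegral_deriv_of_contDiffOn_Icc hsmooth.contDiffOn hab
    _ = ∫⁻ t in Set.uIoo a b, ‖fderiv ℝ f (p + t • v) v‖ₑ := by
        rw [Set.uIoo_of_le hab, setLIntegral_congr Ioo_ae_eq_Icc]
        simp only [fun t => (hline t).deriv]
    _ ≤ ∫⁻ t in Set.uIoo a b, ‖fderiv ℝ f (p + t • v)‖ₑ * ‖v‖ₑ :=
        lintegral_mono fun t => ContinuousLinearMap.le_opENorm _ _

theorem ofReal_sub_le_lintegral_fderiv_levelSet {f : E → ℝ} (hf : ContDiff ℝ 1 f) (p v : E)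
    {s t lo hi : ℝ} (hs : hi ≤ |f (p + s • v)|) (ht : |f (p + t • v)| ≤ lo) :
    ENNReal.ofReal (hi - lo) ≤ ∫⁻ u in Set.uIcc s t,
      {y | |f y| ∈ Set.Icc lo hi}.indicator (fun y => ‖fderiv ℝ f y‖ₑ) (p + u • v) * ‖v‖ₑ := by
  have hcont : Continuous fun u : ℝ => |f (p + u • v)| := by
    have := hf.continuous
    fun_prop
  obtain ⟨s', hs', t', ht', hs'hi, ht'lo, hmaps⟩ := exists_mapsTo_uIoo_Icc hcont hs ht
  calc ENNReal.ofReal (hi - lo)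
      ≤ ‖f (p + s' • v) - f (p + t' • v)‖ₑ := by
        rw [Real.enorm_eq_ofReal_abs]
        have := abs_sub_abs_le_abs_sub (f (p + s' • v)) (f (p + t' • v))
        gcongr
        linarith
    _ ≤ ∫⁻ u in Set.uIoo t' s', ‖fderiv ℝ f (p + u • v)‖ₑ * ‖v‖ₑ :=
        enorm_sub_le_lintegral_fderiv_line hf p v t' s'
    _ = ∫⁻ u in Set.uIoo s' t',
          {y | |f y| ∈ Set.Icc lo hi}.indicator (fun y => ‖fderiv ℝ f y‖ₑ) (p + u • v) * ‖v‖ₑ := by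
        rw [Set.uIoo_comm]
        refine setLIntegral_congr_fun measurableSet_Ioo fun u hu => ?_
        rw [Set.indicator_of_mem (show p + u • v ∈ {y | |f y| ∈ Set.Icc lo hi} from hmaps hu)]
    _ ≤ _ := lintegral_mono_set
        (Set.uIoo_subset_uIcc_self.trans (Set.uIcc_subset_uIcc hs' ht'))

end LineOscillation

section RadialOscillation

variable {E : Type*} [NormedAddCommGroup E] [NormedSpace ℝ E]

theorem exists_norm_add_smul_eq_norm {e y w : E} {ρ L : ℝ} (he : ‖e‖ = 1) (hL : L ≤ ρ)
    (hyw : dist y (ρ • e) + dist w (ρ • e) ≤ L) : ∃ t ∈ Set.Icc (-L) L, ‖y + t • e‖ = ‖w‖ := by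
  rw [dist_eq_norm, dist_eq_norm] at hyw
  have hL0 : 0 ≤ L := by linarith [norm_nonneg (y - ρ • e), norm_nonneg (w - ρ • e)]
  have hρ : ‖ρ • e‖ = ρ := by rw [norm_smul, he, mul_one, Real.norm_of_nonneg (hL0.trans hL)]
  have hw_le := norm_sub_norm_le w (ρ • e)
  have hle_w := norm_sub_norm_le (ρ • e) w
  rw [norm_sub_rev] at hle_w
  have hcont : Continuous fun t : ℝ => ‖y + t • e‖ := by fun_prop
  have hlow : ‖y + (-L) • e‖ ≤ ‖w‖ := by
    calc ‖y + (-L) • e‖ = ‖(y - ρ • e) + (ρ - L) • e‖ := by congr 1; module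
      _ ≤ ‖y - ρ • e‖ + (ρ - L) := by
        grw [norm_add_le, norm_smul, he, mul_one, Real.norm_of_nonneg (by linarith)]
      _ ≤ ‖w‖ := by linarith
  have hhigh : ‖w‖ ≤ ‖y + L • e‖ := by
    calc ‖w‖ ≤ (ρ + L) - ‖y - ρ • e‖ := by linarith
      _ = ‖(ρ + L) • e‖ - ‖-(y - ρ • e)‖ := by
        rw [norm_neg, norm_smul, he, mul_one, Real.norm_of_nonneg (by linarith)]
      _ ≤ ‖(ρ + L) • e - -(y - ρ • e)‖ := norm_sub_norm_le _ _
      _ = ‖y + L • e‖ := by congr 1; module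
  exact intermediate_value_Icc (by linarith) hcont.continuousOn ⟨hlow, hhigh⟩

theorem ofReal_sub_le_lintegral_fderiv_levelSet_of_radial {f : E → ℝ} (hf : ContDiff ℝ 1 f)
    (hrad : ∀ x y, ‖x‖ = ‖y‖ → f x = f y) {x e y y₁ y₂ : E} {r s lo hi : ℝ} (he : ‖e‖ = 1)
    (hxe : ‖x‖ • e = x) (hx : r + s ≤ ‖x‖) (hy₁ : dist y₁ x ≤ s) (hy₂ : dist y₂ x ≤ s)
    (h₁ : hi ≤ |f y₁|) (h₂ : |f y₂| ≤ lo) (hy : y ∈ ball x r) :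
    ENNReal.ofReal (hi - lo) ≤ ∫⁻ t in Set.Icc (-(r + s)) (r + s), (ball x (2 * r + s)).indicator
      ({y | |f y| ∈ Set.Icc lo hi}.indicator fun y => ‖fderiv ℝ f y‖ₑ) (y + t • e) := by
  rw [mem_ball] at hy
  obtain ⟨t₁, ht₁, hnorm₁⟩ := exists_norm_add_smul_eq_norm (y := y) (w := y₁) he hx
    (by rw [hxe]; linarith)
  obtain ⟨t₂, ht₂, hnorm₂⟩ := exists_norm_add_smul_eq_norm (y := y) (w := y₂) he hx
    (by rw [hxe]; linarith)
  grw [ofReal_sub_le_lintegral_fderiv_levelSet hf y e (by rwa [hrad _ _ hnorm₁])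
    (by rwa [hrad _ _ hnorm₂]), Set.uIcc_subset_Icc ht₁ ht₂]
  refine setLIntegral_mono' measurableSet_Icc fun t ht => ?_
  have hmem : y + t • e ∈ ball x (2 * r + s) := by
    rw [mem_ball]
    calc dist (y + t • e) x ≤ dist (y + t • e) y + dist y x := dist_triangle _ _ _
      _ = |t| + dist y x := by
        rw [dist_self_add_left, norm_smul, he, mul_one, Real.norm_eq_abs]
      _ < 2 * r + s := by linarith [abs_le.mpr ht]
  rw [Set.indicator_of_mem hmem, ← ofReal_norm e, he, ENNReal.ofReal_one, mul_one]

variable [MeasurableSpace E] [BorelSpace E] [SecondCountableTopology E] {μ : Measure E} [SFinite μ]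
  [μ.IsAddRightInvariant]

theorem setLIntegral_setLIntegral_add_smul_le {h : E → ℝ≥0∞} (hh : Measurable h) (e : E)
    (s : Set E) (I : Set ℝ) :
    ∫⁻ y in s, (∫⁻ t in I, h (y + t • e)) ∂μ ≤ volume I * ∫⁻ y, h y ∂μ := by
  have hmeas : Measurable fun p : E × ℝ => h (p.1 + p.2 • e) := hh.comp (by fun_prop)
  calc ∫⁻ y in s, (∫⁻ t in I, h (y + t • e)) ∂μ
      ≤ ∫⁻ y, (∫⁻ t in I, h (y + t • e)) ∂μ := setLIntegral_le_lintegral _ _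
    _ = ∫⁻ t in I, ∫⁻ y, h (y + t • e) ∂μ := lintegral_lintegral_swap hmeas.aemeasurable
    _ = volume I * ∫⁻ y, h y ∂μ := by
        simp only [lintegral_add_right_eq_self, setLIntegral_const, mul_comm]

theorem ofReal_sub_mul_measure_ball_le_of_radial {f : E → ℝ} (hf : ContDiff ℝ 1 f)
    (hrad : ∀ x y, ‖x‖ = ‖y‖ → f x = f y) {x y₁ y₂ : E} {r s lo hi : ℝ} (hr : 0 < r)
    (hx : r + s ≤ ‖x‖) (hy₁ : dist y₁ x ≤ s) (hy₂ : dist y₂ x ≤ s) (h₁ : hi ≤ |f y₁|)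
    (h₂ : |f y₂| ≤ lo) :
    ENNReal.ofReal (hi - lo) * μ (ball x r) ≤ ENNReal.ofReal (2 * (r + s)) *
      ∫⁻ y in ball x (2 * r + s),
        {y | |f y| ∈ Set.Icc lo hi}.indicator (fun y => ‖fderiv ℝ f y‖ₑ) y ∂μ := by
  have hs : 0 ≤ s := dist_nonneg.trans hy₁
  have hx0 : ‖x‖ ≠ 0 := by linarith
  obtain ⟨e, he, hxe⟩ : ∃ e : E, ‖e‖ = 1 ∧ ‖x‖ • e = x :=
    ⟨‖x‖⁻¹ • x, by rw [norm_smul, norm_inv, norm_norm, inv_mul_cancel₀ hx0],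
      smul_inv_smul₀ hx0 x⟩
  set g : E → ℝ≥0∞ := {y | |f y| ∈ Set.Icc lo hi}.indicator fun y => ‖fderiv ℝ f y‖ₑ
  set I := Set.Icc (-(r + s)) (r + s)
  have hg_meas : Measurable g :=
    (hf.continuous_fderiv one_ne_zero).enorm.measurable.indicator
      (isClosed_Icc.preimage hf.continuous.abs).measurableSet
  have line_bound : ∀ y ∈ ball x r, ENNReal.ofReal (hi - lo) ≤
      ∫⁻ t in I, (ball x (2 * r + s)).indicator g (y + t • e) := fun y hy =>
    ofReal_sub_le_lintegral_fderiv_levelSet_of_radial hf hrad he hxe hx hy₁ hy₂ h₁ h₂ hy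
  calc ENNReal.ofReal (hi - lo) * μ (ball x r)
      = ∫⁻ _ in ball x r, ENNReal.ofReal (hi - lo) ∂μ := (setLIntegral_const _ _).symm
    _ ≤ ∫⁻ y in ball x r, (∫⁻ t in I, (ball x (2 * r + s)).indicator g (y + t • e)) ∂μ :=
        setLIntegral_mono' measurableSet_ball line_bound
    _ ≤ volume I * ∫⁻ y, (ball x (2 * r + s)).indicator g y ∂μ :=
        setLIntegral_setLIntegral_add_smul_le (hg_meas.indicator measurableSet_ball) e _ I
    _ = _ := by
        rw [lintegral_indicator measurableSet_ball, Real.volume_Icc, sub_neg_eq_add, ← two_mul]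

end RadialOscillation

section Dilation

variable {E F : Type*} [NormedAddCommGroup E] [NormedSpace ℝ E] [FiniteDimensional ℝ E]
  [MeasurableSpace E] [BorelSpace E] (μ : Measure E) [μ.IsAddHaarMeasure]
  [NormedAddCommGroup F] [NormedSpace ℝ F]

theorem lintegral_comp_smul_of_pos (g : E → ℝ≥0∞) {s : ℝ} (hs : 0 < s) :
    ∫⁻ u, g (s • u) ∂μ = (ENNReal.ofReal (s ^ finrank ℝ E))⁻¹ * ∫⁻ y, g y ∂μ := by
  have hmap := Measure.map_addHaar_smul μ hs.ne'
  rw [← (measurableEmbedding_const_smul₀ hs.ne').lintegral_map g, hmap, lintegral_smul_measure,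
    abs_of_pos (by positivity), ENNReal.ofReal_inv_of_pos (by positivity), smul_eq_mul]

theorem setLAverage_ball_comp_smul (g : E → ℝ≥0∞) {s : ℝ} (hs : 0 < s) :
    ⨍⁻ u in ball 0 1, g (s • u) ∂μ = ⨍⁻ y in ball 0 s, g y ∂μ := by
  have hpre : (s • ·) ⁻¹' ball (0 : E) s = ball 0 1 := by
    ext u
    rw [Set.mem_preimage, mem_ball_zero_iff, mem_ball_zero_iff, norm_smul,
      Real.norm_of_nonneg hs.le, mul_lt_iff_lt_one_right hs]
  have hint : ∫⁻ u in ball 0 1, g (s • u) ∂μ =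
      (ENNReal.ofReal (s ^ finrank ℝ E))⁻¹ * ∫⁻ y in ball 0 s, g y ∂μ := by
    rw [← lintegral_indicator measurableSet_ball, ← lintegral_indicator measurableSet_ball,
      ← lintegral_comp_smul_of_pos μ _ hs]
    rw [← hpre]
    exact lintegral_congr fun u => Set.indicator_comp_right _
  rw [setLAverage_eq, setLAverage_eq, hint, Measure.addHaar_ball_of_pos μ 0 hs,
    ENNReal.div_eq_inv_mul, ENNReal.div_eq_inv_mul, ENNReal.mul_inv (by simp [hs]) (by simp)]
  ring

theorem setLAverage_ball_comp_smul_mul_enorm_le {g : E → ℝ≥0∞} (hg : Measurable g) {R t R' : ℝ}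
    (hR : 0 < R) (hRt : R ≤ t) (htR' : t ≤ R') :
    ⨍⁻ u in ball 0 1, g (t • u) * ‖u‖ₑ ∂μ ≤
      ENNReal.ofReal R⁻¹ * ((∫⁻ y in ball 0 R', g y * ‖y‖ₑ ∂μ) / μ (ball 0 R)) := by
  have ht : 0 < t := hR.trans_le hRt
  have enorm_le (u : E) : ‖u‖ₑ ≤ ENNReal.ofReal R⁻¹ * ‖t • u‖ₑ := by
    rw [enorm_smul, Real.enorm_of_nonneg ht.le, ← mul_assoc, ← ENNReal.ofReal_mul (by positivity)]
    refine le_mul_of_one_le_left' (ENNReal.one_le_ofReal.mpr ?_)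
    rwa [inv_mul_eq_div, one_le_div hR]
  calc ⨍⁻ u in ball 0 1, g (t • u) * ‖u‖ₑ ∂μ
      ≤ ⨍⁻ u in ball 0 1, ENNReal.ofReal R⁻¹ * (g (t • u) * ‖t • u‖ₑ) ∂μ := by
        refine lintegral_mono fun u => ?_
        grw [enorm_le u]
        exact (mul_left_comm _ _ _).le
    _ = ENNReal.ofReal R⁻¹ * ⨍⁻ u in ball 0 1, g (t • u) * ‖t • u‖ₑ ∂μ :=
        lintegral_const_mul _ (by fun_prop)
    _ = ENNReal.ofReal R⁻¹ * ((∫⁻ y in ball 0 t, g y * ‖y‖ₑ ∂μ) / μ (ball 0 t)) := by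
        rw [setLAverage_ball_comp_smul μ (fun y => g y * ‖y‖ₑ) ht, setLAverage_eq]
    _ ≤ ENNReal.ofReal R⁻¹ * ((∫⁻ y in ball 0 R', g y * ‖y‖ₑ ∂μ) / μ (ball 0 R)) := by
        gcongr

-- Average over the unit ball the increments `f (R • u) - f (R' • u)` along the rays `t ↦ t • u`.
theorem setLAverage_ball_le_add_of_le {f : E → F} (hf : ContDiff ℝ 1 f) {R R' : ℝ} (hR : 0 < R)
    (hRR' : R ≤ R') :
    ⨍⁻ y in ball 0 R, ‖f y‖ₑ ∂μ ≤ ⨍⁻ y in ball 0 R', ‖f y‖ₑ ∂μ + ENNReal.ofReal ((R' - R) / R) *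
      ((∫⁻ y in ball 0 R', ‖fderiv ℝ f y‖ₑ * ‖y‖ₑ ∂μ) / μ (ball 0 R)) := by
  set D := (∫⁻ y in ball 0 R', ‖fderiv ℝ f y‖ₑ * ‖y‖ₑ ∂μ) / μ (ball 0 R)
  have hf' : Continuous (fderiv ℝ f) := hf.continuous_fderiv one_ne_zero
  have ray_bound (u : E) : ‖f (R • u)‖ₑ ≤
      ‖f (R' • u)‖ₑ + ∫⁻ t in Set.Ioo R R', ‖fderiv ℝ f (t • u)‖ₑ * ‖u‖ₑ := by
    have hftc := enorm_sub_le_lintegral_fderiv_line hf 0 u R' R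
    simp only [zero_add, Set.uIoo_of_ge hRR'] at hftc
    calc ‖f (R • u)‖ₑ = ‖f (R' • u) + (f (R • u) - f (R' • u))‖ₑ := by rw [add_sub_cancel]
      _ ≤ _ := by grw [enorm_add_le, hftc]
  have derivative_part : ⨍⁻ u in ball 0 1,
      (∫⁻ t in Set.Ioo R R', ‖fderiv ℝ f (t • u)‖ₑ * ‖u‖ₑ) ∂μ ≤
        ENNReal.ofReal ((R' - R) / R) * D := by
    have hjoint : Continuous fun p : E × ℝ => ‖fderiv ℝ f (p.2 • p.1)‖ₑ := by fun_prop
    have hmeas : Measurable fun p : E × ℝ => ‖fderiv ℝ f (p.2 • p.1)‖ₑ * ‖p.1‖ₑ :=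
      hjoint.measurable.mul (by fun_prop)
    calc _ = ∫⁻ t in Set.Ioo R R', ⨍⁻ u in ball 0 1, ‖fderiv ℝ f (t • u)‖ₑ * ‖u‖ₑ ∂μ := by
          simp only [setLAverage_eq']
          exact lintegral_lintegral_swap hmeas.aemeasurable
      _ ≤ ∫⁻ _ in Set.Ioo R R', ENNReal.ofReal R⁻¹ * D :=
          setLIntegral_mono' measurableSet_Ioo fun t ht =>
            setLAverage_ball_comp_smul_mul_enorm_le μ hf'.enorm.measurable hR ht.1.le ht.2.le
      _ = ENNReal.ofReal ((R' - R) / R) * D := by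
          rw [setLIntegral_const, Real.volume_Ioo, mul_right_comm,
            ← ENNReal.ofReal_mul (by positivity), inv_mul_eq_div]
  calc ⨍⁻ y in ball 0 R, ‖f y‖ₑ ∂μ
      = ⨍⁻ u in ball 0 1, ‖f (R • u)‖ₑ ∂μ := (setLAverage_ball_comp_smul μ _ hR).symm
    _ ≤ ⨍⁻ u in ball 0 1, (‖f (R' • u)‖ₑ +
          ∫⁻ t in Set.Ioo R R', ‖fderiv ℝ f (t • u)‖ₑ * ‖u‖ₑ) ∂μ := lintegral_mono ray_bound
    _ = ⨍⁻ u in ball 0 1, ‖f (R' • u)‖ₑ ∂μ + ⨍⁻ u in ball 0 1,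
          (∫⁻ t in Set.Ioo R R', ‖fderiv ℝ f (t • u)‖ₑ * ‖u‖ₑ) ∂μ :=
        lintegral_add_left (hf.continuous.comp (continuous_const_smul R')).enorm.measurable _
    _ ≤ _ := by
        rw [setLAverage_ball_comp_smul μ (fun y => ‖f y‖ₑ) (hR.trans_le hRR')]
        grw [derivative_part]

end Dilation

section Kernels

theorem lintegral_lintegral_mul_le_of_forall_lintegral_le {α β : Type*} [MeasurableSpace α]
    [MeasurableSpace β] {μ : Measure α} [SFinite μ] {ν : Measure β} [SFinite ν]
    {K : α → β → ℝ≥0∞} (hK : Measurable (Function.uncurry K)) {g : β → ℝ≥0∞} (hg : Measurable g)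
    {W : ℝ≥0∞} (hW : ∀ y, ∫⁻ x, K x y ∂μ ≤ W) :
    ∫⁻ x, ∫⁻ y, g y * K x y ∂ν ∂μ ≤ (∫⁻ y, g y ∂ν) * W := by
  have hmeas : Measurable fun p : α × β => g p.2 * K p.1 p.2 := (hg.comp measurable_snd).mul hK
  calc ∫⁻ x, ∫⁻ y, g y * K x y ∂ν ∂μ
      = ∫⁻ y, ∫⁻ x, g y * K x y ∂μ ∂ν := lintegral_lintegral_swap hmeas.aemeasurable
    _ = ∫⁻ y, g y * ∫⁻ x, K x y ∂μ ∂ν :=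
        lintegral_congr fun y => lintegral_const_mul _ (hK.comp measurable_prodMk_right)
    _ ≤ ∫⁻ y, g y * W ∂ν := lintegral_mono fun y => by grw [hW y]
    _ = (∫⁻ y, g y ∂ν) * W := lintegral_mul_const _ hg

theorem rpow_lintegral_mul_min_one_le {α : Type*} [MeasurableSpace α] (μ : Measure α)
    (g k : α → ℝ≥0∞) {t : ℝ≥0∞} (ht : t ≠ ∞) {p : ℝ} (hp : 1 ≤ p) :
    (∫⁻ y, g y * min 1 (t * k y) ∂μ) ^ p ≤
      (∫⁻ y, g y ∂μ) ^ (p - 1) * (t * ∫⁻ y, g y * k y ∂μ) := by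
  have hp₀ : 0 ≤ p - 1 := sub_nonneg.mpr hp
  have hmass : ∫⁻ y, g y * min 1 (t * k y) ∂μ ≤ ∫⁻ y, g y ∂μ :=
    lintegral_mono fun y => mul_le_of_le_one_right' (min_le_left _ _)
  have hkernel : ∫⁻ y, g y * min 1 (t * k y) ∂μ ≤ t * ∫⁻ y, g y * k y ∂μ := by
    rw [← lintegral_const_mul' _ _ ht]
    refine lintegral_mono fun y => ?_
    grw [min_le_right, mul_left_comm]
  rw [← sub_add_cancel p 1, ENNReal.rpow_add_of_nonneg _ _ hp₀ zero_le_one, ENNReal.rpow_one,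
    sub_add_cancel]
  gcongr

/-- The kernel `(x, y) ↦ 1_{B(y, R y)}(x) / |B(y, R y)|` attached to a radius function `R`; it has
mass at most one in `x`. Radii are extended reals so that `R` may be an unbounded supremum. -/
def ballKernel {X : Type*} [PseudoEMetricSpace X] [MeasurableSpace X] (μ : Measure X)
    (R : X → ℝ≥0∞) (x y : X) : ℝ≥0∞ :=
  (closedEBall y (R y)).indicator (fun _ => (μ (closedEBall y (R y)))⁻¹) x

theorem lintegral_ballKernel_le_one {X : Type*} [PseudoEMetricSpace X] [MeasurableSpace X]
    [OpensMeasurableSpace X] (μ : Measure X) (R : X → ℝ≥0∞) (y : X) :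
    ∫⁻ x, ballKernel μ R x y ∂μ ≤ 1 := by
  simp only [ballKernel]
  rw [lintegral_indicator isClosed_closedEBall.measurableSet, setLIntegral_const]
  exact ENNReal.inv_mul_le_one _

variable {E : Type*} [NormedAddCommGroup E] [MeasurableSpace E] [BorelSpace E]

theorem measurable_uncurry_ballKernel [SecondCountableTopology E] (μ : Measure E)
    [μ.IsAddLeftInvariant] {R : E → ℝ≥0∞} (hR : Measurable R) :
    Measurable (Function.uncurry (ballKernel μ R)) := by
  have translate (y : E) (ρ : ℝ≥0∞) : μ (closedEBall y ρ) = μ (closedEBall 0 ρ) := by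
    rw [← measure_preimage_add μ y (closedEBall y ρ)]
    congr 1
    ext x
    simp [edist_eq_enorm_sub]
  have volume_mono : Monotone fun ρ : ℝ≥0∞ => μ (closedEBall (0 : E) ρ) :=
    fun _ _ h => measure_mono (closedEBall_subset_closedEBall h)
  have hset : MeasurableSet {p : E × E | edist p.1 p.2 ≤ R p.2} :=
    measurableSet_le (by fun_prop) (by fun_prop)
  have hinv : Measurable fun p : E × E => (μ (closedEBall 0 (R p.2)))⁻¹ :=
    (volume_mono.measurable.comp (hR.comp measurable_snd)).inv
  have heq : Function.uncurry (ballKernel μ R) = {p : E × E | edist p.1 p.2 ≤ R p.2}.indicator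
      fun p => (μ (closedEBall 0 (R p.2)))⁻¹ := by
    ext p
    simp only [Function.uncurry, ballKernel, translate]
    rfl
  rw [heq]
  exact hinv.indicator hset

variable [NormedSpace ℝ E]

/-- The kernel `(x, y) ↦ |y| / (|x| + |y|) ^ (d + 1)` in dimension `d`, which is homogeneous of
degree `-d` and controls averages over balls centred at the origin. -/
def dilationKernel (x y : E) : ℝ≥0∞ :=
  ENNReal.ofReal (‖y‖ / (‖x‖ + ‖y‖) ^ (finrank ℝ E + 1))

theorem measurable_uncurry_dilationKernel [SecondCountableTopology E] :
    Measurable (Function.uncurry (dilationKernel (E := E))) := by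
  unfold dilationKernel Function.uncurry
  fun_prop

theorem lintegral_dilationKernel_le [FiniteDimensional ℝ E] (μ : Measure E) [μ.IsAddHaarMeasure]
    (y : E) :
    ∫⁻ x, dilationKernel x y ∂μ ≤
      ∫⁻ x : E, ENNReal.ofReal ((1 + ‖x‖) ^ (-((finrank ℝ E : ℝ) + 1))) ∂μ := by
  rcases eq_or_ne y 0 with rfl | hy
  · simp [dilationKernel]
  have hy0 : 0 < ‖y‖ := norm_pos_iff.mpr hy
  set c := ENNReal.ofReal (‖y‖ ^ finrank ℝ E)
  have hc : c ≠ 0 := (ENNReal.ofReal_pos.mpr (by positivity)).ne'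
  have homogeneous (x : E) : c * dilationKernel (‖y‖ • x) y =
      ENNReal.ofReal ((1 + ‖x‖) ^ (-((finrank ℝ E : ℝ) + 1))) := by
    rw [dilationKernel, ← ENNReal.ofReal_mul (by positivity), norm_smul, norm_norm,
      ← Nat.cast_add_one, Real.rpow_neg (by positivity), Real.rpow_natCast]
    congr 1
    field_simp
    rw [← pow_succ, ← mul_pow, add_comm]
  have hscale := lintegral_comp_smul_of_pos μ (dilationKernel · y) hy0
  refine le_of_eq ?_
  simp only [← homogeneous]
  rw [lintegral_const_mul' c _ ENNReal.ofReal_ne_top, hscale,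
    ENNReal.mul_inv_cancel_left hc ENNReal.ofReal_ne_top]

end Kernels

section BallAverage

variable {E : Type*} [NormedAddCommGroup E] [MeasurableSpace E]

/-- The average of `|f|` over the open ball `B(z, r)`. -/
def ballAverage (μ : Measure E) (f : E → ℝ) (z : E) (r : ℝ) : ℝ :=
  ⨍ y in ball z r, |f y| ∂μ

theorem ballAverage_nonneg (μ : Measure E) (f : E → ℝ) (z : E) (r : ℝ) :
    0 ≤ ballAverage μ f z r := by
  rw [ballAverage, setAverage_eq]
  exact smul_nonneg (by positivity) (integral_nonneg fun _ => abs_nonneg _)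

variable (μ : Measure E) {f : E → ℝ}

theorem ofReal_ballAverage (hf : Integrable f μ) (z : E) (r : ℝ) :
    ENNReal.ofReal (ballAverage μ f z r) = ⨍⁻ y in ball z r, ‖f y‖ₑ ∂μ := by
  rw [ballAverage, ofReal_setAverage hf.abs.integrableOn (ae_of_all _ fun _ => abs_nonneg _),
    setLAverage_eq]
  simp only [Real.enorm_eq_ofReal_abs]

section ProperSpace

variable [ProperSpace E] [μ.IsOpenPosMeasure] [IsFiniteMeasureOnCompacts μ]

theorem measureReal_ball_pos (z : E) {r : ℝ} (hr : 0 < r) : 0 < μ.real (ball z r) :=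
  ENNReal.toReal_pos (measure_ball_pos _ _ hr).ne' measure_ball_lt_top.ne

theorem exists_mem_ball_ballAverage_le (hf : Integrable f μ) (z : E) {r : ℝ} (hr : 0 < r) :
    ∃ y ∈ ball z r, ballAverage μ f z r ≤ |f y| :=
  exists_setAverage_le (measure_ball_pos _ _ hr).ne' measure_ball_lt_top.ne hf.abs.integrableOn

theorem exists_mem_ball_le_ballAverage (hf : Integrable f μ) (z : E) {r : ℝ} (hr : 0 < r) :
    ∃ y ∈ ball z r, |f y| ≤ ballAverage μ f z r :=
  exists_le_setAverage (measure_ball_pos _ _ hr).ne' measure_ball_lt_top.ne hf.abs.integrableOn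

theorem ballAverage_le_of_forall_abs_le (hf : Integrable f μ) {z : E} {r S : ℝ} (hr : 0 < r)
    (hS : ∀ y ∈ ball z r, |f y| ≤ S) : ballAverage μ f z r ≤ S :=
  let ⟨y, hy, hle⟩ := exists_mem_ball_ballAverage_le μ hf z hr
  hle.trans (hS y hy)

end ProperSpace

variable [NormedSpace ℝ E] [FiniteDimensional ℝ E] [BorelSpace E] [μ.IsAddHaarMeasure]

theorem ballAverage_eq_div (f : E → ℝ) (z : E) {r : ℝ} (hr : 0 < r) :
    ballAverage μ f z r =
      (∫ y in ball z r, |f y| ∂μ) / (r ^ finrank ℝ E * μ.real (ball 0 1)) := by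
  rw [ballAverage, setAverage_eq, smul_eq_mul, inv_mul_eq_div, measureReal_def,
    Measure.addHaar_ball_of_pos μ z hr, ENNReal.toReal_mul,
    ENNReal.toReal_ofReal (by positivity), measureReal_def]

theorem div_pow_mul_ballAverage_le (hf : Integrable f μ) {z z' : E} {r r' : ℝ} (hr : 0 < r)
    (h : dist z z' + r ≤ r') :
    (r / r') ^ finrank ℝ E * ballAverage μ f z r ≤ ballAverage μ f z' r' := by
  have hr' : 0 < r' := by linarith [dist_nonneg (x := z) (y := z')]
  have hint : ∫ y in ball z r, |f y| ∂μ ≤ ∫ y in ball z' r', |f y| ∂μ :=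
    setIntegral_mono_set hf.abs.integrableOn (ae_of_all _ fun _ => abs_nonneg _)
      (ball_subset_ball' (by linarith)).eventuallyLE
  rw [ballAverage_eq_div μ f z hr, ballAverage_eq_div μ f z' hr']
  calc _ = (∫ y in ball z r, |f y| ∂μ) / (r' ^ finrank ℝ E * μ.real (ball 0 1)) := by
        rw [div_pow]; field_simp
    _ ≤ _ := by gcongr

theorem pow_mul_ballAverage_le (hf : Integrable f μ) (z : E) {r : ℝ} (hr : 0 < r) :
    r ^ finrank ℝ E * ballAverage μ f z r ≤ (∫ y, |f y| ∂μ) / μ.real (ball 0 1) := by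
  have hint : ∫ y in ball z r, |f y| ∂μ ≤ ∫ y, |f y| ∂μ :=
    setIntegral_le_integral hf.abs (ae_of_all _ fun _ => abs_nonneg _)
  rw [ballAverage_eq_div μ f z hr, mul_div_assoc', mul_div_mul_left _ _ (by positivity)]
  gcongr

end BallAverage

section ComparableRadius

variable {E : Type*} [NormedAddCommGroup E] [MeasurableSpace E]

/-- The supremum of the radii of the balls containing `y` on which `|f|` has average larger than
`c * |f y|`. -/
def comparableRadius (μ : Measure E) (c : ℝ) (f : E → ℝ) (y : E) : ℝ≥0∞ :=
  ⨆ p : E × ℝ, ⨆ _ : y ∈ ball p.1 p.2 ∧ c * |f y| < ballAverage μ f p.1 p.2, ENNReal.ofReal p.2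

variable {μ : Measure E} {c : ℝ} {f : E → ℝ}

theorem ofReal_le_comparableRadius {y z : E} {r : ℝ} (hy : y ∈ ball z r)
    (hc : c * |f y| < ballAverage μ f z r) : ENNReal.ofReal r ≤ comparableRadius μ c f y :=
  le_iSup₂_of_le (z, r) ⟨hy, hc⟩ le_rfl

theorem measurable_comparableRadius [BorelSpace E] (hf : Continuous f) :
    Measurable (comparableRadius μ c f) := by
  refine measurable_of_Ioi fun a => IsOpen.measurableSet ?_
  have hset : comparableRadius μ c f ⁻¹' Set.Ioi a = ⋃ (p : E × ℝ) (_ : a < ENNReal.ofReal p.2),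
      {y | y ∈ ball p.1 p.2 ∧ c * |f y| < ballAverage μ f p.1 p.2} := by
    ext y
    simp only [comparableRadius, Set.mem_preimage, Set.mem_Ioi, lt_iSup_iff, Set.mem_iUnion,
      Set.mem_ofPred_eq, exists_prop, and_comm]
  rw [hset]
  exact isOpen_biUnion fun p _ =>
    isOpen_ball.inter (isOpen_lt (continuous_const.mul hf.abs) continuous_const)

end ComparableRadius

section Differentiability

variable {E : Type*} [NormedAddCommGroup E] [NormedSpace ℝ E]

theorem norm_fderiv_le_of_forall_sub_le {F : E → ℝ} {x : E} {K : ℝ} (hK : 0 ≤ K)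
    (h : ∀ v, F x - K * ‖v‖ ≤ F (x + v)) : ‖fderiv ℝ F x‖ ≤ K := by
  by_cases hF : DifferentiableAt ℝ F x
  swap
  · rwa [fderiv_zero_of_not_differentiableAt hF, norm_zero]
  have lower (v : E) : -(K * ‖v‖) ≤ fderiv ℝ F x v := by
    refine ge_of_tendsto (hF.hasFDerivAt.lim_real v) ?_
    filter_upwards [eventually_gt_atTop 0] with t ht
    have hv := h (t⁻¹ • v)
    rw [norm_smul, Real.norm_of_nonneg (by positivity)] at hv
    calc -(K * ‖v‖) = t * -(K * (t⁻¹ * ‖v‖)) := by field_simp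
      _ ≤ t * (F (x + t⁻¹ • v) - F x) := by gcongr; linarith
  refine ContinuousLinearMap.opNorm_le_bound _ hK fun v => ?_
  have hneg := lower (-v)
  rw [norm_neg, map_neg] at hneg
  exact abs_le.mpr ⟨lower v, by linarith⟩

variable [FiniteDimensional ℝ E] [MeasurableSpace E] [BorelSpace E]

theorem ae_differentiableAt_of_locallyLipschitz (μ : Measure E) [μ.IsAddHaarMeasure] {F : E → ℝ}
    (hF : LocallyLipschitz F) : ∀ᵐ x ∂μ, DifferentiableAt ℝ F x := by
  refine measure_null_of_locally_null _ fun x _ => ?_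
  obtain ⟨K, s, hs, hlip⟩ := hF x
  refine ⟨_, inter_mem_nhdsWithin _ (interior_mem_nhds.mpr hs), ?_⟩
  refine measure_mono_null (fun y ⟨hy, hys⟩ => ?_) hlip.ae_differentiableWithinAt_of_mem
  simp only [Set.mem_compl_iff, Set.mem_ofPred_eq, Classical.not_imp]
  refine ⟨interior_subset hys, fun hdiff => hy ?_⟩
  exact hdiff.differentiableAt (mem_interior_iff_mem_nhds.mp hys)

end Differentiability

section Gradient

variable {F : Type*} [NormedAddCommGroup F] [InnerProductSpace ℝ F] [CompleteSpace F]

theorem norm_gradient (u : F → ℝ) (x : F) : ‖gradient u x‖ = ‖fderiv ℝ u x‖ :=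
  (InnerProductSpace.toDual ℝ F).symm.norm_map _

theorem stronglyMeasurable_gradient [SecondCountableTopology F] [MeasurableSpace F] [BorelSpace F]
    (u : F → ℝ) : StronglyMeasurable (gradient u) :=
  ((InnerProductSpace.toDual ℝ F).symm.continuous.measurable.comp
    (measurable_fderiv ℝ u)).stronglyMeasurable

theorem eLpNorm_gradient [MeasurableSpace F] (u : F → ℝ) (p : ℝ≥0∞) (μ : Measure F) :
    eLpNorm (gradient u) p μ = eLpNorm (fderiv ℝ u) p μ :=
  eLpNorm_congr_norm_ae (ae_of_all _ (norm_gradient u))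

end Gradient

section FractionalMaximalFunction

variable {n : ℕ} {β : ℝ} {f : EuclideanSpace ℝ (Fin n) → ℝ} {x z : EuclideanSpace ℝ (Fin n)} {r : ℝ}

theorem fracMax_nonneg (β : ℝ) (f : EuclideanSpace ℝ (Fin n) → ℝ) (x : EuclideanSpace ℝ (Fin n)) :
    0 ≤ fracMax β f x := by
  refine Real.sSup_nonneg ?_
  rintro _ ⟨z, r, hr, -, rfl⟩
  exact mul_nonneg (by positivity) (ballAverage_nonneg volume f z r)

theorem exists_forall_ballAverage_le_of_radius_le_one (hf : Continuous f) (hfi : Integrable f)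
    (x₀ : EuclideanSpace ℝ (Fin n)) :
    ∃ S, 0 < S ∧ ∀ x ∈ closedBall x₀ 1, ∀ z r, 0 < r → r ≤ 1 → x ∈ closedBall z r →
      ballAverage volume f z r ≤ S := by
  obtain ⟨S, hS⟩ := (isCompact_closedBall x₀ 3).exists_bound_of_continuousOn hf.continuousOn
  refine ⟨max S 1, by positivity, fun x hx z r hr hr1 hxz => ?_⟩
  refine ballAverage_le_of_forall_abs_le volume hfi hr fun y hy => ?_
  refine (hS y ?_).trans (le_max_left _ _)
  rw [mem_closedBall] at *
  rw [mem_ball] at hy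
  linarith [dist_triangle y z x₀, dist_triangle_left z x₀ x]

theorem exists_forall_mem_maxSet_le (hβ₀ : 0 < β) (hβn : β < n) (hf : Continuous f)
    (hfi : Integrable f) (x₀ : EuclideanSpace ℝ (Fin n)) :
    ∃ B, ∀ x ∈ closedBall x₀ 1, ∀ t ∈ maxSet β f x, t ≤ B := by
  obtain ⟨S, -, hS⟩ := exists_forall_ballAverage_le_of_radius_le_one hf hfi x₀
  refine ⟨max S ((∫ y, |f y|) / volume.real (ball (0 : EuclideanSpace ℝ (Fin n)) 1)), ?_⟩
  rintro x hx _ ⟨z, r, hr, hxz, rfl⟩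
  change r ^ β * ballAverage volume f z r ≤ _
  have hA := ballAverage_nonneg volume f z r
  rcases le_total r 1 with hr1 | hr1
  · refine le_max_of_le_left ?_
    grw [Real.rpow_le_one hr.le hr1 hβ₀.le, one_mul, hS x hx z r hr hr1 hxz]
  · refine le_max_of_le_right ?_
    grw [Real.rpow_le_rpow_of_exponent_le hr1 hβn.le, Real.rpow_natCast]
    simpa only [finrank_euclideanSpace_fin] using pow_mul_ballAverage_le volume hfi z hr

theorem bddAbove_maxSet (hβ₀ : 0 < β) (hβn : β < n) (hf : Continuous f) (hfi : Integrable f)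
    (x : EuclideanSpace ℝ (Fin n)) : BddAbove (maxSet β f x) :=
  let ⟨B, hB⟩ := exists_forall_mem_maxSet_le hβ₀ hβn hf hfi x
  ⟨B, hB x (mem_closedBall_self zero_le_one)⟩

theorem rpow_mul_ballAverage_le_fracMax (hβ₀ : 0 < β) (hβn : β < n) (hf : Continuous f)
    (hfi : Integrable f) (hr : 0 < r) (hx : x ∈ closedBall z r) :
    r ^ β * ballAverage volume f z r ≤ fracMax β f x :=
  le_csSup (bddAbove_maxSet hβ₀ hβn hf hfi x) ⟨z, r, hr, hx, rfl⟩

/-- `B(z, r)` is an admissible ball in the definition of `M_β f(x)` whose competitor value exceeds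
half of the supremum. -/
structure IsNearOptimalBall (β : ℝ) (f : EuclideanSpace ℝ (Fin n) → ℝ)
    (x z : EuclideanSpace ℝ (Fin n)) (r : ℝ) : Prop where
  radius_pos : 0 < r
  mem_closedBall : x ∈ closedBall z r
  half_lt : fracMax β f x / 2 < r ^ β * ballAverage volume f z r

theorem exists_isNearOptimalBall_lt {a : ℝ} (hM : 0 < fracMax β f x) (ha : a < fracMax β f x) :
    ∃ z r, IsNearOptimalBall β f x z r ∧ a < r ^ β * ballAverage volume f z r := by
  have hne : (maxSet β f x).Nonempty := ⟨_, x, 1, one_pos, mem_closedBall_self zero_le_one, rfl⟩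
  obtain ⟨_, ⟨z, r, hr, hx, rfl⟩, hlt⟩ :=
    exists_lt_of_lt_csSup hne (max_lt ha (half_lt_self hM))
  exact ⟨z, r, ⟨hr, hx, (le_max_right _ _).trans_lt hlt⟩, (le_max_left _ _).trans_lt hlt⟩

theorem IsNearOptimalBall.ballAverage_pos (h : IsNearOptimalBall β f x z r) :
    0 < ballAverage volume f z r := by
  have hprod : 0 < r ^ β * ballAverage volume f z r :=
    (div_nonneg (fracMax_nonneg β f x) zero_le_two).trans_lt h.half_lt
  exact pos_of_mul_pos_right hprod (Real.rpow_nonneg h.radius_pos.le β)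

theorem IsNearOptimalBall.ballAverage_lt_mul (hβ₀ : 0 < β) (hβn : β < n) (hf : Continuous f)
    (hfi : Integrable f) (h : IsNearOptimalBall β f x z r) {z' : EuclideanSpace ℝ (Fin n)}
    {κ ρ : ℝ} (hκ : 0 < κ) (hρ : (2 / κ) ^ β⁻¹ * r ≤ ρ) (hx : x ∈ closedBall z' ρ) :
    ballAverage volume f z' ρ < κ * ballAverage volume f z r := by
  have hr := h.radius_pos
  have hρ₀ : 0 < ρ := lt_of_lt_of_le (by positivity) hρ
  have hA' := ballAverage_nonneg volume f z' ρ
  have hpow : 2 / κ * r ^ β ≤ ρ ^ β := by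
    calc 2 / κ * r ^ β = ((2 / κ) ^ β⁻¹ * r) ^ β := by
          rw [Real.mul_rpow (by positivity) hr.le, Real.rpow_inv_rpow (by positivity) hβ₀.ne']
      _ ≤ ρ ^ β := by gcongr
  have hchain : 2 / κ * r ^ β * ballAverage volume f z' ρ <
      2 * (r ^ β * ballAverage volume f z r) := by
    grw [hpow, rpow_mul_ballAverage_le_fracMax hβ₀ hβn hf hfi hρ₀ hx]
    linarith [h.half_lt]
  have hrβ : 0 < 2 / κ * r ^ β := by positivity
  refine lt_of_mul_lt_mul_left (hchain.trans_eq ?_) hrβ.le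
  field_simp

theorem exists_pos_forall_le_fracMax (hβ₀ : 0 < β) (hβn : β < n) (hf : Continuous f)
    (hfi : Integrable f) (hM : 0 < fracMax β f x) {R : ℝ} (hR : 0 ≤ R) :
    ∃ m, 0 < m ∧ ∀ y ∈ closedBall x R, m ≤ fracMax β f y := by
  obtain ⟨z, r, h, -⟩ := exists_isNearOptimalBall_lt hM hM
  have hr := h.radius_pos
  have henlarged : 0 < ballAverage volume f z (r + R) := by
    refine lt_of_lt_of_le ?_ (div_pow_mul_ballAverage_le volume hfi hr (z := z)
      (by rw [dist_self]; linarith))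
    have := h.ballAverage_pos
    positivity
  refine ⟨(r + R) ^ β * ballAverage volume f z (r + R), by positivity, fun y hy => ?_⟩
  refine rpow_mul_ballAverage_le_fracMax hβ₀ hβn hf hfi (by positivity) ?_
  have hxz := h.mem_closedBall
  rw [Metric.mem_closedBall] at *
  linarith [dist_triangle y x z]

theorem exists_pos_forall_le_radius (hβ₀ : 0 < β) (hβn : β < n) (hf : Continuous f)
    (hfi : Integrable f) {x₀ : EuclideanSpace ℝ (Fin n)} (hM : 0 < fracMax β f x₀) :
    ∃ ρ, 0 < ρ ∧ ∀ x ∈ closedBall x₀ 1, ∀ z r, IsNearOptimalBall β f x z r → ρ ≤ r := by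
  obtain ⟨S, hS₀, hS⟩ := exists_forall_ballAverage_le_of_radius_le_one hf hfi x₀
  obtain ⟨m, hm₀, hm⟩ := exists_pos_forall_le_fracMax hβ₀ hβn hf hfi hM zero_le_one
  refine ⟨min 1 ((m / 2 / S) ^ β⁻¹), by positivity, fun x hx z r h => ?_⟩
  by_contra! hlt
  obtain ⟨hr1, hrm⟩ := lt_min_iff.mp hlt
  have hr := h.radius_pos
  have hrβ : r ^ β < m / 2 / S := by
    rwa [← Real.rpow_lt_rpow_iff hr.le (by positivity) hβ₀,
      Real.rpow_inv_rpow (by positivity) hβ₀.ne'] at hrm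
  rw [lt_div_iff₀ hS₀] at hrβ
  have hAS := hS x hx z r hr hr1.le h.mem_closedBall
  have hrβS : r ^ β * ballAverage volume f z r ≤ r ^ β * S := by gcongr
  linarith [hm x hx, h.half_lt]

theorem IsNearOptimalBall.mul_div_pow_le_fracMax_add (hβ₀ : 0 < β) (hβn : β < n)
    (hf : Continuous f) (hfi : Integrable f) (h : IsNearOptimalBall β f x z r) {ρ : ℝ} (hρ : 0 < ρ)
    (hρr : ρ ≤ r) (v : EuclideanSpace ℝ (Fin n)) :
    r ^ β * ballAverage volume f z r * (ρ / (ρ + ‖v‖)) ^ n ≤ fracMax β f (x + v) := by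
  have hr := h.radius_pos
  have hA := ballAverage_nonneg volume f z r
  have hmem : x + v ∈ closedBall z (r + ‖v‖) := by
    have hxz := h.mem_closedBall
    rw [Metric.mem_closedBall] at *
    linarith [dist_triangle (x + v) x z, dist_self_add_left v x]
  have hratio : ρ / (ρ + ‖v‖) ≤ r / (r + ‖v‖) := by
    rw [div_le_div_iff₀ (by positivity) (by positivity)]
    nlinarith [norm_nonneg v]
  have hgrow := div_pow_mul_ballAverage_le volume hfi hr (z := z) (z' := z) (r' := r + ‖v‖)
    (by simp)
  rw [finrank_euclideanSpace_fin] at hgrow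
  calc r ^ β * ballAverage volume f z r * (ρ / (ρ + ‖v‖)) ^ n
      ≤ (r + ‖v‖) ^ β * ballAverage volume f z r * (r / (r + ‖v‖)) ^ n := by
        gcongr
        exact le_add_of_nonneg_right (norm_nonneg v)
    _ = (r + ‖v‖) ^ β * ((r / (r + ‖v‖)) ^ n * ballAverage volume f z r) := by ring
    _ ≤ (r + ‖v‖) ^ β * ballAverage volume f z (r + ‖v‖) := by gcongr
    _ ≤ fracMax β f (x + v) :=
        rpow_mul_ballAverage_le_fracMax hβ₀ hβn hf hfi (by positivity) hmem

theorem one_sub_mul_div_le_div_add_pow (n : ℕ) {ρ t : ℝ} (hρ : 0 < ρ) (ht : 0 ≤ t) :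
    1 - n * (t / ρ) ≤ (ρ / (ρ + t)) ^ n := by
  have hle : t / (ρ + t) ≤ t / ρ := by gcongr; linarith
  have hle_one : t / (ρ + t) ≤ 1 := by rw [div_le_one (by positivity)]; linarith
  have heq : ρ / (ρ + t) = 1 + -(t / (ρ + t)) := by field_simp; ring
  rw [heq]
  calc 1 - n * (t / ρ) ≤ 1 + n * -(t / (ρ + t)) := by
        rw [mul_neg, ← sub_eq_add_neg]
        gcongr
    _ ≤ _ := one_add_mul_le_pow (by linarith) n

theorem fracMax_sub_le_fracMax_add (hβ₀ : 0 < β) (hβn : β < n) (hf : Continuous f)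
    (hfi : Integrable f) (hM : 0 < fracMax β f x) {ρ : ℝ} (hρ : 0 < ρ)
    (hradius : ∀ z r, IsNearOptimalBall β f x z r → ρ ≤ r) (v : EuclideanSpace ℝ (Fin n)) :
    fracMax β f x - n * fracMax β f x / ρ * ‖v‖ ≤ fracMax β f (x + v) := by
  have hp : 0 < (ρ / (ρ + ‖v‖)) ^ n := by positivity
  have hscaled : fracMax β f x * (ρ / (ρ + ‖v‖)) ^ n ≤ fracMax β f (x + v) := by
    by_contra! hlt
    rw [← div_lt_iff₀ hp] at hlt
    obtain ⟨z, r, h, hval⟩ := exists_isNearOptimalBall_lt hM hlt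
    rw [div_lt_iff₀ hp] at hval
    exact hval.not_ge (h.mul_div_pow_le_fracMax_add hβ₀ hβn hf hfi hρ (hradius z r h) v)
  calc _ = fracMax β f x * (1 - n * (‖v‖ / ρ)) := by ring
    _ ≤ fracMax β f x * (ρ / (ρ + ‖v‖)) ^ n := by
        gcongr
        exact one_sub_mul_div_le_div_add_pow n hρ (norm_nonneg v)
    _ ≤ _ := hscaled

theorem exists_isNearOptimalBall_norm_fderiv_le (hβ₀ : 0 < β) (hβn : β < n) (hf : Continuous f)
    (hfi : Integrable f) (hM : 0 < fracMax β f x) :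
    ∃ z r, IsNearOptimalBall β f x z r ∧
      ‖fderiv ℝ (fracMax β f) x‖ ≤ 2 * n * fracMax β f x / r := by
  set radii : Set ℝ := {r | ∃ z, IsNearOptimalBall β f x z r}
  obtain ⟨ρ, hρ, hmin⟩ := exists_pos_forall_le_radius hβ₀ hβn hf hfi hM
  have hlower : ∀ r ∈ radii, ρ ≤ r := fun r ⟨z, h⟩ =>
    hmin x (mem_closedBall_self zero_le_one) z r h
  have hne : radii.Nonempty :=
    let ⟨z, r, h, _⟩ := exists_isNearOptimalBall_lt hM hM
    ⟨r, z, h⟩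
  have hpos : 0 < sInf radii := hρ.trans_le (le_csInf hne hlower)
  obtain ⟨r, ⟨z, h⟩, hr⟩ := exists_lt_of_csInf_lt hne (lt_two_mul_self hpos)
  have hr₀ := h.radius_pos
  refine ⟨z, r, h, norm_fderiv_le_of_forall_sub_le (by positivity) fun v => ?_⟩
  refine le_trans (le_of_eq ?_) (fracMax_sub_le_fracMax_add hβ₀ hβn hf hfi hM (half_pos hr₀)
    (fun z' r' h' => ?_) v)
  · field_simp
  · linarith [csInf_le ⟨ρ, hlower⟩ (show r' ∈ radii from ⟨z', h'⟩)]

theorem locallyLipschitz_fracMax (hβ₀ : 0 < β) (hβn : β < n) (hf : Continuous f)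
    (hfi : Integrable f) : LocallyLipschitz (fracMax β f) := by
  intro x₀
  rcases (fracMax_nonneg β f x₀).eq_or_lt with hzero | hM
  · have hvanish (x : EuclideanSpace ℝ (Fin n)) : fracMax β f x = 0 := by
      refine ((fracMax_nonneg β f x).eq_or_lt.resolve_right fun hpos => ?_).symm
      obtain ⟨m, hm, hle⟩ := exists_pos_forall_le_fracMax hβ₀ hβn hf hfi hpos
        (dist_nonneg (x := x₀) (y := x))
      linarith [hle x₀ (mem_closedBall.mpr le_rfl)]
    exact ⟨0, Set.univ, univ_mem, by simp [LipschitzOnWith, hvanish]⟩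
  obtain ⟨ρ, hρ, hradius⟩ := exists_pos_forall_le_radius hβ₀ hβn hf hfi hM
  obtain ⟨m, hm, hle⟩ := exists_pos_forall_le_fracMax hβ₀ hβn hf hfi hM zero_le_one
  obtain ⟨B, hB⟩ := exists_forall_mem_maxSet_le hβ₀ hβn hf hfi x₀
  refine ⟨(n * B / ρ).toNNReal, closedBall x₀ 1, closedBall_mem_nhds x₀ one_pos,
    LipschitzOnWith.of_le_add_mul' _ fun x hx y _ => ?_⟩
  have hMx := hm.trans_le (hle x hx)
  have hMB : fracMax β f x ≤ B :=
    csSup_le ⟨_, x, 1, one_pos, mem_closedBall_self zero_le_one, rfl⟩ (hB x hx)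
  have hgrowth := fracMax_sub_le_fracMax_add hβ₀ hβn hf hfi hMx hρ (hradius x hx) (y - x)
  rw [add_sub_cancel, ← dist_eq_norm, dist_comm] at hgrowth
  have hslope : n * fracMax β f x / ρ * dist x y ≤ n * B / ρ * dist x y := by gcongr
  linarith

end FractionalMaximalFunction

section OscillationBound

variable {n : ℕ} {β : ℝ} {f : EuclideanSpace ℝ (Fin n) → ℝ} {x z : EuclideanSpace ℝ (Fin n)} {r : ℝ}

theorem IsNearOptimalBall.le_comparableRadius (hfi : Integrable f)
    (h : IsNearOptimalBall β f x z r) {k : ℝ} (hk : 0 ≤ k) {y : EuclideanSpace ℝ (Fin n)}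
    (hyx : dist y x < k * r) (hy : |f y| ≤ ballAverage volume f z r) :
    ENNReal.ofReal ((k + 1) * r) ≤ comparableRadius volume (((k + 1) ^ n)⁻¹ / 2) f y := by
  have hr := h.radius_pos
  have hA := h.ballAverage_pos
  have hxz := h.mem_closedBall
  rw [Metric.mem_closedBall] at hxz
  have hlarge := div_pow_mul_ballAverage_le volume hfi hr (z := z) (z' := z)
    (r' := (k + 1) * r) (by rw [dist_self]; nlinarith)
  rw [finrank_euclideanSpace_fin, div_mul_cancel_right₀ hr.ne', inv_pow] at hlarge
  refine ofReal_le_comparableRadius (z := z) ?_ ?_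
  · rw [mem_ball]
    linarith [dist_triangle y x z]
  · calc ((k + 1) ^ n)⁻¹ / 2 * |f y|
        ≤ ((k + 1) ^ n)⁻¹ / 2 * ballAverage volume f z r := by gcongr
      _ < ((k + 1) ^ n)⁻¹ * ballAverage volume f z r := by
          gcongr
          exact half_lt_self (by positivity)
      _ ≤ _ := hlarge

theorem IsNearOptimalBall.comparableRadius_le (hβ₀ : 0 < β) (hβn : β < n) (hf : Continuous f)
    (hfi : Integrable f) (h : IsNearOptimalBall β f x z r) {k c C : ℝ} (hk : 0 ≤ k) (hc : 0 < c)
    (hC : 1 ≤ C) (hCβ : (2 / (((k + 1) ^ n)⁻¹ * (c / 2))) ^ β⁻¹ ≤ C)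
    {y : EuclideanSpace ℝ (Fin n)} (hyx : dist y x < k * r)
    (hy : ballAverage volume f z r / 2 ≤ |f y|) :
    comparableRadius volume c f y ≤ ENNReal.ofReal (C * r) := by
  have hr := h.radius_pos
  refine iSup₂_le fun ⟨z', ρ⟩ ⟨hyz', hlt⟩ => ENNReal.ofReal_le_ofReal ?_
  simp only at hyz' hlt ⊢
  by_contra! hρ
  have hrρ : r ≤ ρ := by nlinarith
  have hρ₀ : 0 < ρ := hr.trans_le hrρ
  have hmem : x ∈ closedBall z' ((k + 1) * ρ) := by
    rw [mem_ball] at hyz'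
    rw [Metric.mem_closedBall]
    nlinarith [dist_triangle_left x z' y]
  have hradius : (2 / (((k + 1) ^ n)⁻¹ * (c / 2))) ^ β⁻¹ * r ≤ (k + 1) * ρ := by
    grw [hCβ, hρ]
    nlinarith
  have hsmall := h.ballAverage_lt_mul hβ₀ hβn hf hfi (by positivity) hradius hmem
  have hlarge := div_pow_mul_ballAverage_le volume hfi hρ₀ (z := z') (z' := z')
    (r' := (k + 1) * ρ) (by rw [dist_self]; nlinarith)
  rw [finrank_euclideanSpace_fin, div_mul_cancel_right₀ hρ₀.ne', inv_pow] at hlarge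
  refine hsmall.not_ge (le_trans ?_ hlarge)
  rw [mul_assoc]
  gcongr
  nlinarith

theorem exists_one_le_mul_ballKernel (hβ₀ : 0 < β) (hβn : β < n) {k : ℝ} (hk : 0 ≤ k) :
    ∃ C c : ℝ, 0 < C ∧ ∀ (f : EuclideanSpace ℝ (Fin n) → ℝ) (x z : EuclideanSpace ℝ (Fin n))
      (r : ℝ), Continuous f → Integrable f → IsNearOptimalBall β f x z r → ∀ y,
      dist y x < k * r → |f y| ∈ Set.Icc (ballAverage volume f z r / 2) (ballAverage volume f z r) →
      1 ≤ ENNReal.ofReal (C * r ^ n) * ballKernel volume (comparableRadius volume c f) x y := by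
  set c := ((k + 1) ^ n)⁻¹ / 2
  set C₁ := max 1 ((2 / (((k + 1) ^ n)⁻¹ * (c / 2))) ^ β⁻¹)
  have hV : 0 < volume.real (ball (0 : EuclideanSpace ℝ (Fin n)) 1) :=
    measureReal_ball_pos volume 0 one_pos
  refine ⟨C₁ ^ n * volume.real (ball (0 : EuclideanSpace ℝ (Fin n)) 1), c, by positivity,
    fun f x z r hf hfi h y hyx hy => ?_⟩
  have hr := h.radius_pos
  have hlower := h.le_comparableRadius hfi hk hyx hy.2
  have hupper := h.comparableRadius_le (c := c) (C := C₁) hβ₀ hβn hf hfi hk (by positivity)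
    (le_max_left _ _) (le_max_right _ _) hyx hy.1
  have hmem : x ∈ closedEBall y (comparableRadius volume c f y) := by
    refine le_trans ?_ hlower
    rw [edist_dist, dist_comm]
    gcongr
    linarith
  have hvol : volume (closedEBall y (comparableRadius volume c f y)) ≤
      ENNReal.ofReal (C₁ ^ n * volume.real (ball (0 : EuclideanSpace ℝ (Fin n)) 1) * r ^ n) := by
    grw [hupper, closedEBall_ofReal (by positivity),
      Measure.addHaar_closedBall volume y (by positivity), finrank_euclideanSpace_fin]
    rw [← ofReal_measureReal, ← ENNReal.ofReal_mul (by positivity), mul_pow, mul_right_comm]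
  have hvol₀ : volume (closedEBall y (comparableRadius volume c f y)) ≠ 0 := by
    refine ((measure_ball_pos volume y (by positivity : 0 < (k + 1) * r)).trans_le ?_).ne'
    rw [← eball_ofReal]
    exact measure_mono ((eball_subset_eball hlower).trans eball_subset_closedEBall)
  rw [ballKernel, Set.indicator_of_mem hmem]
  grw [← hvol]
  exact (ENNReal.mul_inv_cancel hvol₀ (ne_top_of_le_ne_top ENNReal.ofReal_ne_top hvol)).ge

theorem IsNearOptimalBall.ofReal_half_mul_volume_le (hβ₀ : 0 < β) (hβn : β < n)
    (hf : ContDiff ℝ 1 f) (hrad : ∀ x y, ‖x‖ = ‖y‖ → f x = f y) (hfi : Integrable f)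
    (h : IsNearOptimalBall β f x z r) {l : ℝ} (hl : 2 ≤ l) (hlβ : 4 ^ β⁻¹ ≤ l)
    (hx : (l + 1) * r ≤ ‖x‖) :
    ENNReal.ofReal (ballAverage volume f z r / 2) * volume (ball x r) ≤
      ENNReal.ofReal (2 * ((l + 1) * r)) * ∫⁻ y in ball x ((l + 2) * r),
        {y | |f y| ∈ Set.Icc (ballAverage volume f z r / 2) (ballAverage volume f z r)}.indicator
          (fun y => ‖fderiv ℝ f y‖ₑ) y := by
  have hr := h.radius_pos
  obtain ⟨y₁, hy₁, hlarge⟩ := exists_mem_ball_ballAverage_le volume hfi z hr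
  obtain ⟨y₂, hy₂, hsmall⟩ := exists_mem_ball_le_ballAverage volume hfi x
    (by positivity : 0 < l * r)
  have hdrop := h.ballAverage_lt_mul (κ := 1 / 2) (ρ := l * r) (z' := x) hβ₀ hβn hf.continuous hfi
    (by norm_num) (by norm_num1; gcongr) (mem_closedBall_self (by positivity))
  have hy₁x : dist y₁ x ≤ l * r := by
    have hxz := h.mem_closedBall
    rw [Metric.mem_closedBall] at hxz
    rw [mem_ball] at hy₁
    nlinarith [dist_triangle_right y₁ x z]
  have hosc := ofReal_sub_mul_measure_ball_le_of_radial (μ := volume) hf hrad hr (s := l * r)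
    (lo := ballAverage volume f z r / 2) (by linarith) hy₁x (mem_ball.mp hy₂).le hlarge
    (by linarith)
  rwa [sub_half, show r + l * r = (l + 1) * r by ring, show 2 * r + l * r = (l + 2) * r by ring]
    at hosc

theorem IsNearOptimalBall.ofReal_ballAverage_le_of_far (hβ₀ : 0 < β) (hβn : β < n)
    (hf : ContDiff ℝ 1 f) (hrad : ∀ x y, ‖x‖ = ‖y‖ → f x = f y) (hfi : Integrable f)
    (h : IsNearOptimalBall β f x z r) {l : ℝ} (hl : 2 ≤ l) (hlβ : 4 ^ β⁻¹ ≤ l)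
    (hx : (l + 1) * r ≤ ‖x‖) :
    ENNReal.ofReal (ballAverage volume f z r) ≤
      ENNReal.ofReal (4 * (l + 1) / volume.real (ball (0 : EuclideanSpace ℝ (Fin n)) 1) * r / r ^ n)
        * ∫⁻ y in ball x ((l + 2) * r),
          {y | |f y| ∈ Set.Icc (ballAverage volume f z r / 2) (ballAverage volume f z r)}.indicator
            (fun y => ‖fderiv ℝ f y‖ₑ) y := by
  have hr := h.radius_pos
  set A := ballAverage volume f z r
  have hA : 0 < A := h.ballAverage_pos
  set V := volume.real (ball (0 : EuclideanSpace ℝ (Fin n)) 1)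
  have hV : 0 < V := measureReal_ball_pos volume 0 one_pos
  have hvol : ENNReal.ofReal (2 / (r ^ n * V)) * (ENNReal.ofReal (A / 2) * volume (ball x r)) =
      ENNReal.ofReal A := by
    rw [Measure.addHaar_ball_of_pos volume x hr, finrank_euclideanSpace_fin, ← ofReal_measureReal,
      ← ENNReal.ofReal_mul (by positivity), ← ENNReal.ofReal_mul (by positivity),
      ← ENNReal.ofReal_mul (by positivity)]
    congr 1
    change 2 / (r ^ n * V) * (A / 2 * (r ^ n * V)) = A
    field_simp
  rw [← hvol]
  grw [h.ofReal_half_mul_volume_le hβ₀ hβn hf hrad hfi hl hlβ hx]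
  rw [← mul_assoc, ← ENNReal.ofReal_mul (by positivity)]
  gcongr
  apply le_of_eq
  field_simp
  ring

theorem exists_ofReal_ballAverage_le_of_far (hβ₀ : 0 < β) (hβn : β < n) :
    ∃ k C c : ℝ, 0 ≤ k ∧ 0 < C ∧ ∀ (f : EuclideanSpace ℝ (Fin n) → ℝ)
      (x z : EuclideanSpace ℝ (Fin n)) (r : ℝ), ContDiff ℝ 1 f →
      (∀ x y, ‖x‖ = ‖y‖ → f x = f y) → Integrable f → IsNearOptimalBall β f x z r → k * r ≤ ‖x‖ →
      ENNReal.ofReal (ballAverage volume f z r) ≤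
        ENNReal.ofReal (C * r / r ^ n) * ∫⁻ y, ‖fderiv ℝ f y‖ₑ * min 1
          (ENNReal.ofReal (C * r ^ n) * ballKernel volume (comparableRadius volume c f) x y) := by
  set l : ℝ := max 2 (4 ^ β⁻¹)
  have hl : 2 ≤ l := le_max_left _ _
  obtain ⟨C, c, hC, hkernel⟩ := exists_one_le_mul_ballKernel hβ₀ hβn (by positivity : 0 ≤ l + 2)
  set C' := max (4 * (l + 1) / volume.real (ball (0 : EuclideanSpace ℝ (Fin n)) 1)) C
  refine ⟨l + 1, C', c, by positivity, by positivity, fun f x z r hf hrad hfi h hx => ?_⟩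
  have hr := h.radius_pos
  grw [h.ofReal_ballAverage_le_of_far hβ₀ hβn hf hrad hfi hl (le_max_right _ _) hx,
    ← lintegral_indicator measurableSet_ball, Set.indicator_indicator]
  refine mul_le_mul' (by gcongr; exact le_max_left _ _)
    (lintegral_mono (Set.indicator_le fun y ⟨hyx, hy⟩ => ?_))
  rw [min_eq_left, mul_one]
  grw [hkernel f x z r hf.continuous hfi h y hyx hy]
  gcongr
  exact le_max_right _ _

theorem enorm_le_mul_min_dilationKernel {x y : EuclideanSpace ℝ (Fin n)} {m r : ℝ} (hr : 0 < r)
    (hm : 0 < m) (hx : ‖x‖ ≤ m * r) (hy : ‖y‖ ≤ m * r) :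
    ‖y‖ₑ ≤ ENNReal.ofReal (m * r) *
      min 1 (ENNReal.ofReal (2 ^ (n + 1) * m ^ n * r ^ n) * dilationKernel x y) := by
  rcases eq_or_ne y 0 with rfl | hy₀
  · simp
  have : 0 < ‖y‖ := norm_pos_iff.mpr hy₀
  have hscale : (‖x‖ + ‖y‖) ^ (n + 1) ≤ 2 ^ (n + 1) * m ^ n * r ^ n * (m * r) := by
    calc (‖x‖ + ‖y‖) ^ (n + 1) ≤ (2 * (m * r)) ^ (n + 1) := by gcongr; linarith
      _ = _ := by ring
  rw [dilationKernel, finrank_euclideanSpace_fin, ← ENNReal.ofReal_mul (by positivity),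
    ← ENNReal.ofReal_one, ← ENNReal.ofReal_min, ← ENNReal.ofReal_mul (by positivity), ← ofReal_norm]
  refine ENNReal.ofReal_le_ofReal ?_
  rw [← div_le_iff₀' (by positivity)]
  refine le_min (div_le_one_of_le₀ hy (by positivity)) ?_
  rw [mul_div_assoc', div_le_div_iff₀ (by positivity) (by positivity), mul_comm _ ‖y‖, mul_assoc]
  gcongr

theorem IsNearOptimalBall.ofReal_mul_ballAverage_le_of_near (hβ₀ : 0 < β) (hβn : β < n)
    (hf : ContDiff ℝ 1 f) (hfi : Integrable f) (h : IsNearOptimalBall β f x z r) {k m : ℝ}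
    (hk : 0 ≤ k) (hkm : k + 2 ≤ m) (hmβ : (2 / (((k + 2) ^ n)⁻¹ / 2)) ^ β⁻¹ ≤ m)
    (hx : ‖x‖ ≤ k * r) :
    ENNReal.ofReal (((k + 2) ^ n)⁻¹ / 2 * ballAverage volume f z r) ≤
      ENNReal.ofReal ((m * r - (k + 2) * r) / ((k + 2) * r)) *
        ((∫⁻ y in ball 0 (m * r), ‖fderiv ℝ f y‖ₑ * ‖y‖ₑ) /
          volume (ball (0 : EuclideanSpace ℝ (Fin n)) ((k + 2) * r))) := by
  have hr := h.radius_pos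
  have hxz := h.mem_closedBall
  rw [Metric.mem_closedBall] at hxz
  have hlarge := div_pow_mul_ballAverage_le volume hfi hr (z := z) (z' := 0) (r' := (k + 2) * r)
    (by linarith [dist_triangle_left z 0 x, dist_zero_right x])
  rw [finrank_euclideanSpace_fin, div_mul_cancel_right₀ hr.ne', inv_pow] at hlarge
  have hsmall := h.ballAverage_lt_mul (κ := ((k + 2) ^ n)⁻¹ / 2) (z' := 0) (ρ := m * r) hβ₀ hβn
    hf.continuous hfi (by positivity) (by gcongr) (by rw [mem_closedBall_zero_iff]; nlinarith)
  have hdil := setLAverage_ball_le_add_of_le volume hf (by positivity : 0 < (k + 2) * r)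
    (by gcongr : (k + 2) * r ≤ m * r)
  rw [← ofReal_ballAverage volume hfi, ← ofReal_ballAverage volume hfi,
    ← tsub_le_iff_left, ← ENNReal.ofReal_sub _ (ballAverage_nonneg _ _ _ _)] at hdil
  refine le_trans (ENNReal.ofReal_le_ofReal ?_) hdil
  linarith

theorem IsNearOptimalBall.ofReal_ballAverage_le_of_near (hβ₀ : 0 < β) (hβn : β < n)
    (hf : ContDiff ℝ 1 f) (hfi : Integrable f) (h : IsNearOptimalBall β f x z r) {k m : ℝ}
    (hk : 0 ≤ k) (hkm : k + 2 ≤ m) (hmβ : (2 / (((k + 2) ^ n)⁻¹ / 2)) ^ β⁻¹ ≤ m)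
    (hx : ‖x‖ ≤ k * r) :
    ENNReal.ofReal (ballAverage volume f z r) ≤
      ENNReal.ofReal (2 * (k + 2) ^ n * m /
          volume.real (ball (0 : EuclideanSpace ℝ (Fin n)) 1) / r ^ n)
        * ∫⁻ y in ball 0 (m * r), ‖fderiv ℝ f y‖ₑ * ‖y‖ₑ := by
  have hr := h.radius_pos
  have hm : 0 < m := by linarith
  set V := volume.real (ball (0 : EuclideanSpace ℝ (Fin n)) 1)
  have hV : 0 < V := measureReal_ball_pos volume 0 one_pos
  have hratio : (m * r - (k + 2) * r) / ((k + 2) * r) ≤ m := by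
    rw [div_le_iff₀ (by positivity)]
    nlinarith [mul_nonneg hk hr.le, mul_pos hm hr]
  have hvol : ENNReal.ofReal (r ^ n * V) ≤
      volume (ball (0 : EuclideanSpace ℝ (Fin n)) ((k + 2) * r)) := by
    grw [← ball_subset_ball (by nlinarith : r ≤ (k + 2) * r)]
    rw [Measure.addHaar_ball_of_pos volume 0 hr, finrank_euclideanSpace_fin,
      ENNReal.ofReal_mul (by positivity), ofReal_measureReal]
  calc ENNReal.ofReal (ballAverage volume f z r)
      = ENNReal.ofReal (2 * (k + 2) ^ n) *
          ENNReal.ofReal (((k + 2) ^ n)⁻¹ / 2 * ballAverage volume f z r) := by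
        rw [← ENNReal.ofReal_mul (by positivity)]
        congr 1
        field_simp
    _ ≤ ENNReal.ofReal (2 * (k + 2) ^ n) * (ENNReal.ofReal m *
          ((∫⁻ y in ball 0 (m * r), ‖fderiv ℝ f y‖ₑ * ‖y‖ₑ) / ENNReal.ofReal (r ^ n * V))) := by
        grw [h.ofReal_mul_ballAverage_le_of_near hβ₀ hβn hf hfi hk hkm hmβ hx, hratio, hvol]
    _ = _ := by
        rw [div_eq_mul_inv, ← ENNReal.ofReal_inv_of_pos (by positivity),
          mul_comm (∫⁻ _ in _, _), ← mul_assoc, ← mul_assoc, ← ENNReal.ofReal_mul (by positivity),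
          ← ENNReal.ofReal_mul (by positivity)]
        congr 2
        field_simp

theorem exists_ofReal_ballAverage_le_of_near (hβ₀ : 0 < β) (hβn : β < n) {k : ℝ} (hk : 0 ≤ k) :
    ∃ C : ℝ, 0 < C ∧ ∀ (f : EuclideanSpace ℝ (Fin n) → ℝ) (x z : EuclideanSpace ℝ (Fin n))
      (r : ℝ), ContDiff ℝ 1 f → Integrable f → IsNearOptimalBall β f x z r → ‖x‖ ≤ k * r →
      ENNReal.ofReal (ballAverage volume f z r) ≤ ENNReal.ofReal (C * r / r ^ n) *
        ∫⁻ y, ‖fderiv ℝ f y‖ₑ * min 1 (ENNReal.ofReal (C * r ^ n) * dilationKernel x y) := by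
  set m := max (k + 2) ((2 / (((k + 2) ^ n)⁻¹ / 2)) ^ β⁻¹)
  have hkm : k + 2 ≤ m := le_max_left _ _
  set V := volume.real (ball (0 : EuclideanSpace ℝ (Fin n)) 1)
  have hV : 0 < V := measureReal_ball_pos volume 0 one_pos
  set C := max (2 * (k + 2) ^ n * m / V * m) (2 ^ (n + 1) * m ^ n)
  refine ⟨C, by positivity, fun f x z r hf hfi h hx => ?_⟩
  have hr := h.radius_pos
  have hball : ∫⁻ y in ball 0 (m * r), ‖fderiv ℝ f y‖ₑ * ‖y‖ₑ ≤ ENNReal.ofReal (m * r) *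
      ∫⁻ y, ‖fderiv ℝ f y‖ₑ * min 1 (ENNReal.ofReal (C * r ^ n) * dilationKernel x y) := by
    rw [← lintegral_const_mul' _ _ ENNReal.ofReal_ne_top, ← lintegral_indicator measurableSet_ball]
    refine lintegral_mono (Set.indicator_le fun y hy => ?_)
    rw [mem_ball_zero_iff] at hy
    grw [enorm_le_mul_min_dilationKernel hr (by positivity) (by nlinarith : ‖x‖ ≤ m * r) hy.le,
      mul_left_comm]
    gcongr
    exact le_max_right _ _
  grw [h.ofReal_ballAverage_le_of_near hβ₀ hβn hf hfi hk hkm (le_max_right _ _) hx, hball]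
  rw [← mul_assoc, ← ENNReal.ofReal_mul (by positivity)]
  gcongr
  calc 2 * (k + 2) ^ n * m / V / r ^ n * (m * r)
      = 2 * (k + 2) ^ n * m / V * m * r / r ^ n := by ring
    _ ≤ C * r / r ^ n := by
        gcongr
        exact le_max_left _ _

theorem exists_ofReal_ballAverage_le (hβ₀ : 0 < β) (hβn : β < n) :
    ∃ C c : ℝ, 0 < C ∧ ∀ (f : EuclideanSpace ℝ (Fin n) → ℝ) (x z : EuclideanSpace ℝ (Fin n))
      (r : ℝ), ContDiff ℝ 1 f → (∀ x y, ‖x‖ = ‖y‖ → f x = f y) → Integrable f →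
      IsNearOptimalBall β f x z r →
      ENNReal.ofReal (ballAverage volume f z r) ≤
        ENNReal.ofReal (C * r / r ^ n) * ∫⁻ y, ‖fderiv ℝ f y‖ₑ * min 1 (ENNReal.ofReal (C * r ^ n) *
          (ballKernel volume (comparableRadius volume c f) x y + dilationKernel x y)) := by
  obtain ⟨k, C₁, c, hk, hC₁, hfar⟩ := exists_ofReal_ballAverage_le_of_far hβ₀ hβn
  obtain ⟨C₂, -, hnear⟩ := exists_ofReal_ballAverage_le_of_near hβ₀ hβn hk
  refine ⟨max C₁ C₂, c, by positivity, fun f x z r hf hrad hfi h => ?_⟩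
  have hr := h.radius_pos
  rcases le_total (k * r) ‖x‖ with hx | hx
  · grw [hfar f x z r hf hrad hfi h hx]
    gcongr
    exacts [le_max_left _ _, le_max_left _ _, le_self_add]
  · grw [hnear f x z r hf hfi h hx]
    gcongr
    exacts [le_max_right _ _, le_max_right _ _, le_add_self]

end OscillationBound

section GradientBound

theorem rpow_div_pow_rpow_mul_pow {n : ℕ} {β r : ℝ} (hβn : β < n) (hr : 0 < r) :
    (r ^ β / r ^ n) ^ ((n : ℝ) / (n - β)) * r ^ n = 1 := by
  have hexp : (β - n) * (n / (n - β)) = -(n : ℝ) := by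
    have : (n : ℝ) - β ≠ 0 := (sub_pos.mpr hβn).ne'
    field_simp
    ring
  rw [← Real.rpow_natCast r n, ← Real.rpow_sub hr, ← Real.rpow_mul hr.le, hexp, ← Real.rpow_add hr,
    neg_add_cancel, Real.rpow_zero]

variable {n : ℕ} {β : ℝ}

theorem exists_isNearOptimalBall_enorm_fderiv_le (hβ₀ : 0 < β) (hβn : β < n)
    {f : EuclideanSpace ℝ (Fin n) → ℝ} {x : EuclideanSpace ℝ (Fin n)} (hf : Continuous f)
    (hfi : Integrable f) (hM : 0 < fracMax β f x) :
    ∃ z r, IsNearOptimalBall β f x z r ∧ ‖fderiv ℝ (fracMax β f) x‖ₑ ≤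
      ENNReal.ofReal (4 * n * r ^ β / r) * ENNReal.ofReal (ballAverage volume f z r) := by
  obtain ⟨z, r, h, hle⟩ := exists_isNearOptimalBall_norm_fderiv_le hβ₀ hβn hf hfi hM
  have hr := h.radius_pos
  refine ⟨z, r, h, ?_⟩
  rw [← ENNReal.ofReal_mul (by positivity), ← ofReal_norm]
  refine ENNReal.ofReal_le_ofReal (hle.trans ?_)
  calc 2 * n * fracMax β f x / r
      ≤ 2 * n * (2 * (r ^ β * ballAverage volume f z r)) / r := by
        gcongr
        linarith [h.half_lt]
    _ = _ := by ring

theorem exists_enorm_fderiv_fracMax_rpow_le (hβ₀ : 0 < β) (hβn : β < n) :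
    ∃ C c : ℝ, ∀ (f : EuclideanSpace ℝ (Fin n) → ℝ) (x : EuclideanSpace ℝ (Fin n)),
      ContDiff ℝ 1 f → (∀ x y, ‖x‖ = ‖y‖ → f x = f y) → Integrable f →
      ‖fderiv ℝ (fracMax β f) x‖ₑ ^ ((n : ℝ) / (n - β)) ≤
        ENNReal.ofReal C * ((∫⁻ y, ‖fderiv ℝ f y‖ₑ) ^ ((n : ℝ) / (n - β) - 1) *
          ∫⁻ y, ‖fderiv ℝ f y‖ₑ *
            (ballKernel volume (comparableRadius volume c f) x y + dilationKernel x y)) := by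
  obtain ⟨C, c, hC, havg⟩ := exists_ofReal_ballAverage_le hβ₀ hβn
  set q : ℝ := n / (n - β)
  have hq : 1 ≤ q := by rw [one_le_div (by linarith)]; linarith
  refine ⟨(4 * n * C) ^ q * C, c, fun f x hf hrad hfi => ?_⟩
  rcases (fracMax_nonneg β f x).eq_or_lt with hzero | hM
  · have hfderiv : ‖fderiv ℝ (fracMax β f) x‖ ≤ 0 :=
      norm_fderiv_le_of_forall_sub_le le_rfl fun v => by simp [← hzero, fracMax_nonneg]
    rw [← ofReal_norm, ENNReal.ofReal_of_nonpos hfderiv, ENNReal.zero_rpow_of_pos (by linarith)]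
    exact zero_le
  obtain ⟨z, r, h, hfderiv⟩ :=
    exists_isNearOptimalBall_enorm_fderiv_le hβ₀ hβn hf.continuous hfi hM
  have hr := h.radius_pos
  grw [hfderiv, havg f x z r hf hrad hfi h]
  rw [← mul_assoc, ← ENNReal.ofReal_mul (by positivity),
    ENNReal.mul_rpow_of_nonneg _ _ (by positivity)]
  grw [rpow_lintegral_mul_min_one_le volume _ _ ENNReal.ofReal_ne_top hq]
  rw [mul_left_comm (_ ^ (q - 1)), ← mul_assoc,
    ENNReal.ofReal_rpow_of_nonneg (by positivity) (by positivity),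
    ← ENNReal.ofReal_mul (by positivity)]
  refine mul_le_mul' (ENNReal.ofReal_le_ofReal (le_of_eq ?_)) le_rfl
  calc (4 * n * r ^ β / r * (C * r / r ^ n)) ^ q * (C * r ^ n)
      = (4 * n * C * (r ^ β / r ^ n)) ^ q * (C * r ^ n) := by
        congr 2
        field_simp
    _ = (4 * n * C) ^ q * C * ((r ^ β / r ^ n) ^ q * r ^ n) := by
        rw [Real.mul_rpow (by positivity) (by positivity)]
        ring
    _ = (4 * n * C) ^ q * C := by rw [rpow_div_pow_rpow_mul_pow hβn hr, mul_one]

theorem exists_lintegral_enorm_fderiv_fracMax_rpow_le (hβ₀ : 0 < β) (hβn : β < n) :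
    ∃ C : ℝ≥0∞, C ≠ ∞ ∧ ∀ f : EuclideanSpace ℝ (Fin n) → ℝ,
      ContDiff ℝ 1 f → (∀ x y, ‖x‖ = ‖y‖ → f x = f y) → Integrable f →
      ∫⁻ x, ‖fderiv ℝ (fracMax β f) x‖ₑ ^ ((n : ℝ) / (n - β)) ≤
        C * (∫⁻ y, ‖fderiv ℝ f y‖ₑ) ^ ((n : ℝ) / (n - β)) := by
  obtain ⟨C, c, hpointwise⟩ := exists_enorm_fderiv_fracMax_rpow_le hβ₀ hβn
  set q : ℝ := n / (n - β)
  have hq : 1 ≤ q := by rw [one_le_div (by linarith)]; linarith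
  set W : ℝ≥0∞ := 1 + ∫⁻ x : EuclideanSpace ℝ (Fin n),
    ENNReal.ofReal ((1 + ‖x‖) ^ (-((finrank ℝ (EuclideanSpace ℝ (Fin n)) : ℝ) + 1)))
  have hW : W ≠ ∞ := ENNReal.add_ne_top.mpr
    ⟨ENNReal.one_ne_top, (finite_integral_one_add_norm (lt_add_one _)).ne⟩
  refine ⟨ENNReal.ofReal C * W, by finiteness, fun f hf hrad hfi => ?_⟩
  set g := fun y => ‖fderiv ℝ f y‖ₑ
  have hg : Measurable g := (hf.continuous_fderiv one_ne_zero).enorm.measurable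
  set K := fun x y => ballKernel volume (comparableRadius volume c f) x y + dilationKernel x y
  have hball := measurable_uncurry_ballKernel (volume : Measure (EuclideanSpace ℝ (Fin n)))
    (measurable_comparableRadius (μ := volume) (c := c) hf.continuous)
  have hK : Measurable (Function.uncurry K) := hball.add measurable_uncurry_dilationKernel
  have hmass (y : EuclideanSpace ℝ (Fin n)) : ∫⁻ x, K x y ≤ W := by
    rw [lintegral_add_left hball.of_uncurry_right]
    exact add_le_add (lintegral_ballKernel_le_one _ _ y) (lintegral_dilationKernel_le volume y)
  calc ∫⁻ x, ‖fderiv ℝ (fracMax β f) x‖ₑ ^ q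
      ≤ ∫⁻ x, ENNReal.ofReal C * ((∫⁻ y, g y) ^ (q - 1) * ∫⁻ y, g y * K x y) :=
        lintegral_mono fun x => hpointwise f x hf hrad hfi
    _ = ENNReal.ofReal C * ((∫⁻ y, g y) ^ (q - 1) * ∫⁻ x, ∫⁻ y, g y * K x y) := by
        have hinner : Measurable fun x => ∫⁻ y, g y * K x y :=
          ((hg.comp measurable_snd).mul hK).lintegral_prod_right'
        rw [lintegral_const_mul' _ _ ENNReal.ofReal_ne_top, lintegral_const_mul _ hinner]
    _ ≤ ENNReal.ofReal C * ((∫⁻ y, g y) ^ (q - 1) * ((∫⁻ y, g y) * W)) := by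
        grw [lintegral_lintegral_mul_le_of_forall_lintegral_le hK hg hmass]
    _ = ENNReal.ofReal C * W * (∫⁻ y, g y) ^ (q - 1 + 1) := by
        rw [ENNReal.rpow_add_of_nonneg _ _ (sub_nonneg.mpr hq) zero_le_one, ENNReal.rpow_one]
        ring
    _ = _ := by rw [sub_add_cancel]

theorem exists_eLpNorm_fderiv_fracMax_le (hβ₀ : 0 < β) (hβn : β < n) :
    ∃ C : ℝ, 0 < C ∧ ∀ f : EuclideanSpace ℝ (Fin n) → ℝ,
      ContDiff ℝ 1 f → (∀ x y, ‖x‖ = ‖y‖ → f x = f y) → Integrable f →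
      eLpNorm (fderiv ℝ (fracMax β f)) (ENNReal.ofReal (n / (n - β))) volume ≤
        ENNReal.ofReal C * eLpNorm (fderiv ℝ f) 1 volume := by
  obtain ⟨C, hC, hlintegral⟩ := exists_lintegral_enorm_fderiv_fracMax_rpow_le hβ₀ hβn
  set q : ℝ := n / (n - β)
  have hq : 0 < q := div_pos (hβ₀.trans hβn) (sub_pos.mpr hβn)
  refine ⟨max 1 (C ^ (1 / q)).toReal, by positivity, fun f hf hrad hfi => ?_⟩
  rw [eLpNorm_eq_lintegral_rpow_enorm_toReal (ENNReal.ofReal_pos.mpr hq).ne' ENNReal.ofReal_ne_top,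
    ENNReal.toReal_ofReal hq.le, eLpNorm_one_eq_lintegral_enorm]
  grw [hlintegral f hf hrad hfi, ← le_max_right]
  rw [ENNReal.ofReal_toReal (by finiteness), ENNReal.mul_rpow_of_nonneg _ _ (by positivity),
    one_div, ENNReal.rpow_rpow_inv hq.ne']

end GradientBound

theorem stmt0_general (n : ℕ) (β q : ℝ) (hβ0 : 0 < β) (hβn : β < n) (hq : q = n / (n - β)) :
    ∃ C : ℝ, 0 < C ∧ ∀ f : EuclideanSpace ℝ (Fin n) → ℝ,
      ContDiff ℝ 1 f →
      (∀ x y : EuclideanSpace ℝ (Fin n), ‖x‖ = ‖y‖ → f x = f y) →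
      Integrable f →
      Integrable (fun x => gradient f x) →
      (∀ᵐ x, DifferentiableAt ℝ (fracMax β f) x) ∧
      MemLp (gradient (fracMax β f)) (ENNReal.ofReal q) ∧
      (∫ x, ‖gradient (fracMax β f) x‖ ^ q) ^ (1 / q) ≤ C * ∫ x, ‖gradient f x‖ := by
  obtain ⟨C, hC, hbound⟩ := exists_eLpNorm_fderiv_fracMax_le hβ0 hβn
  simp only [← hq, ← eLpNorm_gradient] at hbound
  have hq₀ : 0 < q := hq ▸ div_pos (hβ0.trans hβn) (sub_pos.mpr hβn)
  refine ⟨C, hC, fun f hf hrad hfi hgrad => ?_⟩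
  have hnorm := hbound f hf hrad hfi
  have hmem : MemLp (gradient (fracMax β f)) (ENNReal.ofReal q) :=
    ⟨(stronglyMeasurable_gradient _).aestronglyMeasurable,
      hnorm.trans_lt (ENNReal.mul_lt_top ENNReal.ofReal_lt_top
        (memLp_one_iff_integrable.mpr hgrad).eLpNorm_lt_top)⟩
  refine ⟨ae_differentiableAt_of_locallyLipschitz volume
    (locallyLipschitz_fracMax hβ0 hβn hf.continuous hfi), hmem, ?_⟩
  rwa [hmem.eLpNorm_eq_integral_rpow_norm (ENNReal.ofReal_pos.mpr hq₀).ne' ENNReal.ofReal_ne_top,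
    ENNReal.toReal_ofReal hq₀.le, eLpNorm_one_eq_lintegral_enorm,
    ← ofReal_integral_norm_eq_lintegral_enorm hgrad, ← ENNReal.ofReal_mul hC.le,
    ENNReal.ofReal_le_ofReal_iff (by positivity), ← one_div] at hnorm

theorem stmt0 (n : ℕ) (hn : 1 ≤ n) (β q : ℝ) (hβ0 : 0 < β) (hβn : β < n)
    (hq : q = n / (n - β)) :
    ∃ C : ℝ, 0 < C ∧ ∀ f : EuclideanSpace ℝ (Fin n) → ℝ,
      ContDiff ℝ 1 f →
      (∀ x y : EuclideanSpace ℝ (Fin n), ‖x‖ = ‖y‖ → f x = f y) →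
      Integrable f →
      Integrable (fun x => gradient f x) →
      (∀ᵐ x : EuclideanSpace ℝ (Fin n), DifferentiableAt ℝ (fracMax β f) x) →
      (∫ x : EuclideanSpace ℝ (Fin n), ‖gradient (fracMax β f) x‖ ^ q) ^ (1 / q) ≤
        C * ∫ x : EuclideanSpace ℝ (Fin n), ‖gradient f x‖ :=
  let ⟨C, hC, hbound⟩ := stmt0_general n β q hβ0 hβn hq
  ⟨C, hC, fun f hf hrad hfi hgrad _ => (hbound f hf hrad hfi hgrad).2.2⟩
end
end

section
/- Let n ≥ 1, 0 ≤ β < n, let f : ℝⁿ → ℝ be locally integrable, let x ∈ ℝⁿ, and suppose M_β f is real-valued in a neighborhood of x and differentiable at x. If there exists a best ball B ∈ ℬ_x such that x lies in the open ball B itself, then ∇M_β f(x) = 0. -/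
open MeasureTheory Metric Filter
open scoped Topology

noncomputable section

/-- `B(z,r)` is a best ball at `x` for `M_β f`, i.e. `B(z,r) ∈ ℬ_x`. -/
def IsBestBall {n : ℕ} (β : ℝ) (f : EuclideanSpace ℝ (Fin n) → ℝ)
    (x z : EuclideanSpace ℝ (Fin n)) (r : ℝ) : Prop :=
  0 < r ∧ x ∈ closedBall z r ∧ fracMax β f x = r ^ β * ⨍ y in ball z r, |f y|

section LocalExtr

variable {F : Type*} [NormedAddCommGroup F] [InnerProductSpace ℝ F] [CompleteSpace F]

theorem hasGradientAt_zero_of_isLocalExtr {g : F → ℝ} {a : F} (hext : IsLocalExtr g a)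
    (hg : DifferentiableAt ℝ g a) : HasGradientAt g 0 a := by
  rw [hasGradientAt_iff_hasFDerivAt, map_zero, ← hext.fderiv_eq_zero]
  exact hg.hasFDerivAt

end LocalExtr

section FractionalMaximal

variable {n : ℕ} {β : ℝ} {f : EuclideanSpace ℝ (Fin n) → ℝ}
  {x y z : EuclideanSpace ℝ (Fin n)} {r : ℝ}

theorem rpow_mul_average_ball_le_fracMax (hx : BddAbove (maxSet β f x)) (hr : 0 < r)
    (hxz : x ∈ closedBall z r) : r ^ β * ⨍ y in ball z r, |f y| ≤ fracMax β f x :=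
  le_csSup hx ⟨z, r, hr, hxz, rfl⟩

namespace IsBestBall

theorem fracMax_le_fracMax (hB : IsBestBall β f x z r) (hy : BddAbove (maxSet β f y))
    (hyz : y ∈ closedBall z r) : fracMax β f x ≤ fracMax β f y := by
  obtain ⟨hr, -, hx⟩ := hB
  exact hx.trans_le (rpow_mul_average_ball_le_fracMax hy hr hyz)

theorem isLocalMin_fracMax (hB : IsBestBall β f x z r) (hx : x ∈ ball z r)
    (hfin : ∀ᶠ y in 𝓝 x, BddAbove (maxSet β f y)) : IsLocalMin (fracMax β f) x := by
  filter_upwards [hfin, isOpen_ball.mem_nhds hx] with y hy hyz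
  exact hB.fracMax_le_fracMax hy (ball_subset_closedBall hyz)

end IsBestBall

theorem stmt5_general (_hf : LocallyIntegrable f)
    (hfin : ∀ᶠ y in 𝓝 x, BddAbove (maxSet β f y))
    (hdiff : DifferentiableAt ℝ (fracMax β f) x)
    (hB : IsBestBall β f x z r) (hx : x ∈ ball z r) :
    HasGradientAt (fracMax β f) 0 x :=
  hasGradientAt_zero_of_isLocalExtr (hB.isLocalMin_fracMax hx hfin).isExtr hdiff

end FractionalMaximal

theorem stmt5 (n : ℕ) (hn : 1 ≤ n) (β : ℝ) (hβ0 : 0 ≤ β) (hβn : β < n)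
    (f : EuclideanSpace ℝ (Fin n) → ℝ) (hf : LocallyIntegrable f)
    (x : EuclideanSpace ℝ (Fin n))
    (hfin : ∀ᶠ y in 𝓝 x, BddAbove (maxSet β f y))
    (hdiff : DifferentiableAt ℝ (fracMax β f) x)
    (z : EuclideanSpace ℝ (Fin n)) (r : ℝ) (hB : IsBestBall β f x z r)
    (hmem : x ∈ ball z r) :
    gradient (fracMax β f) x = 0 := by
  exact (stmt5_general hf hfin hdiff hB hmem).gradient
end
end

section
/- Let n ≥ 1, 0 ≤ β < n, let f : ℝⁿ → ℝ be locally integrable, let x ∈ ℝⁿ, and suppose M_β f is real-valued in a neighborhood of x and differentiable at x with ∇M_β f(x) ≠ 0. If B = B(z,r) ∈ ℬ_x is a best ball at x with x on the boundary sphere ∂B(z,r) (i.e. |x − z| = r), then ∇M_β f(x)/|∇M_β f(x)| = (z − x)/|z − x|. -/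
open MeasureTheory Metric Filter
open scoped Topology

noncomputable section

/-!
The best ball `B(z,r)` at `x` competes at every point of its closure, so on that closed ball `M_β f`
is bounded below by its value at `x`. Hence the gradient `g` at `x` satisfies `0 ≤ ⟪g, y - x⟫` for
every `y` in the ball; at the point of the ball farthest in the direction `-g` this reads
`r * ‖g‖ ≤ ⟪g, z - x⟫`. If `‖x - z‖ = r`, this is the equality case of Cauchy–Schwarz, so `g` points
from `x` to `z`.
-/

section BoundaryMinimum

open scoped RealInnerProductSpace

variable {E : Type*} [NormedAddCommGroup E] [InnerProductSpace ℝ E] {g x z : E}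

theorem mul_norm_le_inner_of_forall_mem_closedBall {r : ℝ} (hr : 0 ≤ r)
    (h : ∀ y ∈ closedBall z r, 0 ≤ ⟪g, y - x⟫) : r * ‖g‖ ≤ ⟪g, z - x⟫ := by
  rcases eq_or_ne g 0 with rfl | hg
  · simp
  have hg' : ‖g‖ ≠ 0 := norm_ne_zero_iff.mpr hg
  have hfar : z - (r / ‖g‖) • g ∈ closedBall z r := by
    rw [mem_closedBall_iff_norm, sub_sub_cancel_left, norm_neg, norm_smul, norm_div, norm_norm,
      Real.norm_of_nonneg hr, div_mul_cancel₀ _ hg']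
  have hinner : ⟪g, z - (r / ‖g‖) • g - x⟫ = ⟪g, z - x⟫ - r * ‖g‖ := by
    rw [sub_right_comm, inner_sub_right, real_inner_smul_right, real_inner_self_eq_norm_mul_norm]
    field_simp
  exact sub_nonneg.mp (hinner ▸ h _ hfar)

theorem sameRay_of_norm_mul_norm_le_inner {v w : E} (h : ‖v‖ * ‖w‖ ≤ ⟪v, w⟫) : SameRay ℝ v w :=
  sameRay_iff_norm_smul_eq.mpr
    (inner_eq_norm_mul_iff_real.mp (le_antisymm (real_inner_le_norm v w) h)).symm

variable [CompleteSpace E] {φ : E → ℝ}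

theorem inner_gradient_sub_nonneg_of_isLocalMinOn {s : Set E} {y : E}
    (hs : StarConvex ℝ x s) (hmin : IsLocalMinOn φ s x) (hφ : HasGradientWithinAt φ g s x)
    (hy : y ∈ s) : 0 ≤ ⟪g, y - x⟫ := by
  simpa only [InnerProductSpace.toDual_apply_apply] using
    hmin.hasFDerivWithinAt_nonneg hφ.hasFDerivWithinAt
      (sub_mem_posTangentConeAt_of_segment_subset (hs.segment_subset hy))

theorem sameRay_gradient_center_sub_of_isLocalMinOn_closedBall {r : ℝ} (hx : x ∈ sphere z r)
    (hmin : IsLocalMinOn φ (closedBall z r) x)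
    (hφ : HasGradientWithinAt φ g (closedBall z r) x) : SameRay ℝ g (z - x) := by
  have hr : ‖z - x‖ = r := by rw [norm_sub_rev, mem_sphere_iff_norm.mp hx]
  have hstar : StarConvex ℝ x (closedBall z r) :=
    convex_closedBall z r (sphere_subset_closedBall hx)
  apply sameRay_of_norm_mul_norm_le_inner
  rw [hr, mul_comm]
  exact mul_norm_le_inner_of_forall_mem_closedBall (hr ▸ norm_nonneg _) fun _ hy =>
    inner_gradient_sub_nonneg_of_isLocalMinOn hstar hmin hφ hy

end BoundaryMinimum

section BestBall

variable {n : ℕ} {β : ℝ} {f : EuclideanSpace ℝ (Fin n) → ℝ} {x z : EuclideanSpace ℝ (Fin n)} {r : ℝ}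

theorem IsBestBall.fracMax_le {y : EuclideanSpace ℝ (Fin n)} (hB : IsBestBall β f x z r)
    (hy : y ∈ closedBall z r) (hbdd : BddAbove (maxSet β f y)) :
    fracMax β f x ≤ fracMax β f y := by
  obtain ⟨hr, -, hmax⟩ := hB
  exact hmax ▸ le_csSup hbdd ⟨z, r, hr, hy, rfl⟩

theorem IsBestBall.isLocalMinOn_fracMax (hB : IsBestBall β f x z r)
    (hbdd : ∀ᶠ y in 𝓝[closedBall z r] x, BddAbove (maxSet β f y)) :
    IsLocalMinOn (fracMax β f) (closedBall z r) x := by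
  filter_upwards [hbdd, self_mem_nhdsWithin] with y hy hyB
  exact hB.fracMax_le hyB hy

end BestBall

theorem stmt6_general {n : ℕ} {β : ℝ} {f : EuclideanSpace ℝ (Fin n) → ℝ}
    (_hf : LocallyIntegrable f) {x z : EuclideanSpace ℝ (Fin n)} {r : ℝ}
    (hfin : ∀ᶠ y in 𝓝 x, BddAbove (maxSet β f y))
    (hdiff : DifferentiableAt ℝ (fracMax β f) x) (hgrad : gradient (fracMax β f) x ≠ 0)
    (hB : IsBestBall β f x z r) (hbd : ‖x - z‖ = r) :
    ‖gradient (fracMax β f) x‖⁻¹ • gradient (fracMax β f) x = ‖z - x‖⁻¹ • (z - x) := by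
  have hmin := hB.isLocalMinOn_fracMax (hfin.filter_mono nhdsWithin_le_nhds)
  have hgradWithin : HasGradientWithinAt (fracMax β f) (gradient (fracMax β f) x)
      (closedBall z r) x := hdiff.hasGradientAt.hasFDerivAt.hasFDerivWithinAt
  have hray : SameRay ℝ (gradient (fracMax β f) x) (z - x) :=
    sameRay_gradient_center_sub_of_isLocalMinOn_closedBall (mem_sphere_iff_norm.mpr hbd) hmin
      hgradWithin
  have hzx : z - x ≠ 0 := norm_pos_iff.mp (by rw [norm_sub_rev, hbd]; exact hB.1)
  exact hray.inv_norm_smul_eq hgrad hzx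

theorem stmt6 (n : ℕ) (hn : 1 ≤ n) (β : ℝ) (hβ0 : 0 ≤ β) (hβn : β < n)
    (f : EuclideanSpace ℝ (Fin n) → ℝ) (hf : LocallyIntegrable f)
    (x : EuclideanSpace ℝ (Fin n))
    (hfin : ∀ᶠ y in 𝓝 x, BddAbove (maxSet β f y))
    (hdiff : DifferentiableAt ℝ (fracMax β f) x)
    (hgrad : gradient (fracMax β f) x ≠ 0)
    (z : EuclideanSpace ℝ (Fin n)) (r : ℝ) (hB : IsBestBall β f x z r)
    (hbd : ‖x - z‖ = r) :
    ‖gradient (fracMax β f) x‖⁻¹ • gradient (fracMax β f) x =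
      ‖z - x‖⁻¹ • (z - x) := by
  exact stmt6_general hf hfin hdiff hgrad hB hbd
end
end

section
/- Let n ≥ 1, 0 < β < n, let f : ℝⁿ → [0,∞) be nonnegative, continuously differentiable and integrable, let x ∈ ℝⁿ, suppose M_β f is real-valued in a neighborhood of x and differentiable at x, and let B = B(z,r) ∈ ℬ_x be a best ball at x. Then | ⨍_B ∇f(y) dy | = (n/r) [ (1 − β/n) ⨍_B f(y) dy − ⨍_{∂B(z,r)} f dH^{n−1} ], where the last average is taken with respect to the (n−1)-dimensional Hausdorff measure on the sphere ∂B(z,r). -/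
open MeasureTheory Metric Filter
open scoped Topology

noncomputable section

/-!
The balls whose closure contains `x` are parametrised by the convex cone
`{(w, ρ) | dist x w ≤ ρ}`, and a best ball `B(z, r)` maximises `ρ ^ β ⨍_{B(w, ρ)} f` over it. Let
`A = ⨍_B ∇f`. Up to the factor `r ^ β` the partial derivatives at `(z, r)` are `A` in the centre
and some number `K` in the radius, so `⟪A, w - z⟫ + (ρ - r) K ≤ 0` on the whole cone. Growing the
ball by `‖v‖` while translating it by `v` gives `‖A‖ ≤ -K`; shrinking it to the apex `(x, 0)` gives
`-K ≤ ‖A‖`.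

The derivative of `⨍_{B(z, ρ)} f` at `ρ = r` is `r⁻¹ ⨍_B ∇f(y) · (y - z) dy`, which the divergence
theorem, obtained here by integrating along rays in polar coordinates, expresses through the
average of `f` over the sphere for the cone measure. That average is the one for the Hausdorff
measure because both measures on the unit sphere are invariant under rotations, and by
Christensen's lemma a measure which gives balls of equal radius the same mass is unique up to
scaling.
-/

section Average

variable {X Y F : Type*} [MeasurableSpace X] [MeasurableSpace Y] [NormedAddCommGroup F]
  [NormedSpace ℝ F]

lemma average_smul_measure (μ : Measure X) (f : X → F) {c : ENNReal} (hc : c ≠ 0)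
    (hc' : c ≠ ⊤) : ⨍ x, f x ∂(c • μ) = ⨍ x, f x ∂μ := by
  simp only [average_eq', Measure.smul_apply, smul_eq_mul, smul_smul,
    ENNReal.mul_inv (.inl hc) (.inl hc'), mul_right_comm _ _ c, ENNReal.inv_mul_cancel hc hc',
    one_mul]

lemma average_map_of_measurableEmbedding {μ : Measure X} {g : X → Y} (hg : MeasurableEmbedding g)
    (f : Y → F) : ⨍ y, f y ∂(μ.map g) = ⨍ x, f (g x) ∂μ := by
  rw [average_eq, average_eq, hg.integral_map, measureReal_def, measureReal_def,
    hg.map_apply, Set.preimage_univ]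

lemma average_apply {G : Type*} [NormedAddCommGroup G] [NormedSpace ℝ G] [CompleteSpace F]
    {μ : Measure X} {L : X → G →L[ℝ] F} (hL : Integrable L μ) (v : G) :
    (⨍ x, L x ∂μ) v = ⨍ x, L x v ∂μ :=
  ContinuousLinearMap.integral_apply (Integrable.to_average (ε := G →L[ℝ] F) hL) v

end Average

section UniformlyDistributed

variable {X : Type*} [PseudoMetricSpace X] [MeasurableSpace X] {μ ν : Measure X}

/-- A measure is uniformly distributed if the measure of a ball depends only on its radius.
On the unit sphere both the cone measure and the Hausdorff measure have this property, which
determines them up to a constant factor. -/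
def IsUniformlyDistributed (μ : Measure X) : Prop :=
  ∀ (x y : X) (r : ℝ), μ (ball x r) = μ (ball y r)

lemma IsUniformlyDistributed.smul (hμ : IsUniformlyDistributed μ) (c : ENNReal) :
    IsUniformlyDistributed (c • μ) := fun x y r => by
  simp only [Measure.smul_apply, hμ x y r]

variable [SecondCountableTopology X]

lemma IsUniformlyDistributed.measure_ball_pos (hμ : IsUniformlyDistributed μ) (hμ0 : μ ≠ 0)
    (x : X) {r : ℝ} (hr : 0 < r) : 0 < μ (ball x r) := by
  obtain ⟨y, hy⟩ := Measure.nonempty_support hμ0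
  rw [hμ x y r]
  exact (Measure.mem_support_iff_forall y).1 hy _ (ball_mem_nhds y hr)

variable [BorelSpace X]

lemma lintegral_measure_ball_inter [SFinite μ] [SFinite ν] (U : Set X) (r : ℝ) :
    ∫⁻ x, ν (ball x r ∩ U) ∂μ = ∫⁻ y in U, μ (ball y r) ∂ν := by
  have hD : MeasurableSet {p : X × X | dist p.1 p.2 < r} :=
    (isOpen_lt continuous_dist continuous_const).measurableSet
  have left (x : X) : Prod.mk x ⁻¹' {p : X × X | dist p.1 p.2 < r} = ball x r := by
    ext y; simp [dist_comm]
  have right (y : X) : (fun x => (x, y)) ⁻¹' {p : X × X | dist p.1 p.2 < r} = ball y r := rfl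
  calc ∫⁻ x, ν (ball x r ∩ U) ∂μ
      = (μ.prod (ν.restrict U)) {p | dist p.1 p.2 < r} := by
        simp only [Measure.prod_apply hD, left, Measure.restrict_apply measurableSet_ball]
    _ = ∫⁻ y in U, μ (ball y r) ∂ν := by simp only [Measure.prod_apply_symm hD, right]

lemma measurable_measure_ball_inter [SFinite ν] {U : Set X} (hU : MeasurableSet U) (r : ℝ) :
    Measurable fun x => ν (ball x r ∩ U) := by
  have hD : MeasurableSet {p : X × X | dist p.1 p.2 < r ∧ p.2 ∈ U} :=
    (isOpen_lt continuous_dist continuous_const).measurableSet.inter (measurable_snd hU)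
  convert! measurable_measure_prodMk_left (ν := ν) hD using 3 with x
  ext y
  simp [dist_comm]

lemma IsUniformlyDistributed.measure_ball_eq [IsProbabilityMeasure μ] [IsProbabilityMeasure ν]
    (hμ : IsUniformlyDistributed μ) (hν : IsUniformlyDistributed ν) (x : X) (r : ℝ) :
    μ (ball x r) = ν (ball x r) := by
  have h := lintegral_measure_ball_inter (μ := μ) (ν := ν) Set.univ r
  simpa [hν _ x r, hμ _ x r] using h.symm

lemma IsUniformlyDistributed.measure_le_of_isOpen [IsProbabilityMeasure μ]
    [IsProbabilityMeasure ν] (hμ : IsUniformlyDistributed μ) (hν : IsUniformlyDistributed ν)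
    {U : Set X} (hU : IsOpen U) : μ U ≤ ν U := by
  have core_le {r : ℝ} (hr : 0 < r) : μ {x | ball x r ⊆ U} ≤ ν U := by
    obtain ⟨x₀⟩ := nonempty_of_isProbabilityMeasure μ
    have h₀ : ν (ball x₀ r) ≠ 0 := (hν.measure_ball_pos (NeZero.ne ν) x₀ hr).ne'
    rw [← ENNReal.mul_le_mul_iff_right h₀ (measure_ne_top ν _)]
    calc ν (ball x₀ r) * μ {x | ball x r ⊆ U}
        ≤ ν (ball x₀ r) * μ {x | ν (ball x₀ r) ≤ ν (ball x r ∩ U)} := by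
          gcongr with x
          exact fun hx => by rw [Set.inter_eq_left.2 hx, hν x x₀ r]
      _ ≤ ∫⁻ x, ν (ball x r ∩ U) ∂μ :=
          mul_meas_ge_le_lintegral (measurable_measure_ball_inter hU.measurableSet r) _
      _ = ν (ball x₀ r) * ν U := by
          simp [lintegral_measure_ball_inter, hμ _ x₀ r,
            hμ.measure_ball_eq hν]
  have exhaustion : U = ⋃ k : ℕ, {x | ball x (1 / ((k : ℝ) + 1)) ⊆ U} := by
    refine Set.Subset.antisymm (fun x hx => ?_)
      (Set.iUnion_subset fun k x hx => hx (mem_ball_self (by positivity)))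
    obtain ⟨ε, hε, hεU⟩ := Metric.isOpen_iff.1 hU x hx
    obtain ⟨k, hk⟩ := exists_nat_one_div_lt hε
    exact Set.mem_iUnion.2 ⟨k, (ball_subset_ball hk.le).trans hεU⟩
  have monotone_core : Monotone fun k : ℕ => {x | ball x (1 / ((k : ℝ) + 1)) ⊆ U} :=
    fun k l hkl x hx => (ball_subset_ball (one_div_le_one_div_of_le (by positivity)
      (by gcongr))).trans hx
  rw [exhaustion, monotone_core.measure_iUnion, ← exhaustion]
  exact iSup_le fun k => core_le (by positivity)

/-- Christensen's lemma for probability measures. -/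
theorem IsUniformlyDistributed.eq [IsProbabilityMeasure μ] [IsProbabilityMeasure ν]
    (hμ : IsUniformlyDistributed μ) (hν : IsUniformlyDistributed ν) : μ = ν :=
  ext_of_generate_finite {U | IsOpen U} BorelSpace.measurable_eq isPiSystem_isOpen
    (fun _ hU => (hμ.measure_le_of_isOpen hν hU).antisymm
      (hν.measure_le_of_isOpen hμ hU)) (by simp)

theorem IsUniformlyDistributed.average_eq {F : Type*} [NormedAddCommGroup F] [NormedSpace ℝ F]
    [IsFiniteMeasure μ] [NeZero μ] [IsFiniteMeasure ν] [NeZero ν]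
    (hμ : IsUniformlyDistributed μ) (hν : IsUniformlyDistributed ν) (f : X → F) :
    ⨍ x, f x ∂μ = ⨍ x, f x ∂ν := by
  rw [average_eq', average_eq', (hμ.smul (μ Set.univ)⁻¹).eq (hν.smul (ν Set.univ)⁻¹)]

end UniformlyDistributed

section SphereMeasure

open Module RealInnerProductSpace Pointwise

variable {E : Type*} [NormedAddCommGroup E] [InnerProductSpace ℝ E]

lemma exists_linearIsometryEquiv_apply_eq {x y : E} (h : ‖x‖ = ‖y‖) :
    ∃ T : E ≃ₗᵢ[ℝ] E, T x = y :=
  ⟨(ℝ ∙ (x - y))ᗮ.reflection, Submodule.reflection_sub h⟩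

lemma image_coe_ball_eq_of_apply_eq {T : E ≃ₗᵢ[ℝ] E} {x y : sphere (0 : E) 1} (hT : T x = y)
    (ρ : ℝ) : T '' ((↑) '' ball x ρ) = ((↑) '' ball y ρ : Set E) := by
  rw [Subtype.image_ball, Subtype.image_ball, Set.image_inter T.injective, T.image_ball, hT]
  simp only [Set.ofPred_mem_eq, T.image_sphere, map_zero]

lemma isUniformlyDistributed_hausdorffMeasure_unitSphere [MeasurableSpace E] [BorelSpace E]
    {d : ℝ} (hd : 0 ≤ d) :
    IsUniformlyDistributed (μH[d] : Measure (sphere (0 : E) 1)) := fun x y ρ => by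
  obtain ⟨T, hT⟩ := exists_linearIsometryEquiv_apply_eq (x := (x : E)) (y := y) (by simp)
  have coe_isometry : Isometry ((↑) : sphere (0 : E) 1 → E) := isometry_subtype_coe
  rw [← coe_isometry.hausdorffMeasure_image (.inl hd),
    ← coe_isometry.hausdorffMeasure_image (.inl hd), ← image_coe_ball_eq_of_apply_eq hT]
  exact (T.toIsometryEquiv.hausdorffMeasure_image d _).symm

lemma range_add_smul_unitSphere (z : E) {r : ℝ} (hr : 0 < r) :
    Set.range (fun w : sphere (0 : E) 1 => z + r • (w : E)) = sphere z r := by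
  have h : (fun w : sphere (0 : E) 1 => z + r • (w : E)) = (z +ᵥ ·) ∘ (r • ·) ∘ (↑) := rfl
  rw [h, Set.range_comp, Set.range_comp, Subtype.range_coe, Set.image_smul, smul_sphere' hr.ne',
    Set.image_vadd, vadd_sphere]
  simp [abs_of_pos hr]

lemma hausdorffMeasure_restrict_sphere [MeasurableSpace E] [BorelSpace E] {d : ℝ} (hd : 0 ≤ d)
    (z : E) {r : ℝ} (hr : 0 < r) :
    (μH[d] : Measure E).restrict (sphere z r) =
      ‖r‖₊ ^ d • (μH[d]).map fun w : sphere (0 : E) 1 => z + r • (w : E) := by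
  ext s hs
  have hg : Measurable fun w : sphere (0 : E) 1 => z + r • (w : E) := by fun_prop
  have image_preimage : s ∩ sphere z r =
      z +ᵥ r • ((↑) '' ((fun w : sphere (0 : E) 1 => z + r • (w : E)) ⁻¹' s) : Set E) := by
    rw [← range_add_smul_unitSphere z hr, ← Set.image_preimage_eq_inter_range, ← Set.image_vadd,
      ← Set.image_smul, Set.image_image, Set.image_image]
    rfl
  rw [Measure.restrict_apply hs, image_preimage, hausdorffMeasure_vadd z (.inl hd),
    Measure.hausdorffMeasure_smul₀ hd hr.ne', isometry_subtype_coe.hausdorffMeasure_image (.inl hd),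
    Measure.smul_apply, Measure.map_apply hg hs]

lemma measurableEmbedding_add_smul_unitSphere [MeasurableSpace E] [BorelSpace E] (z : E) {r : ℝ}
    (hr : r ≠ 0) : MeasurableEmbedding fun w : sphere (0 : E) 1 => z + r • (w : E) :=
  (measurableEmbedding_addLeft z).comp <| (measurableEmbedding_const_smul₀ hr).comp <|
    .subtype_coe isClosed_sphere.measurableSet

variable [FiniteDimensional ℝ E]

lemma finrank_orthogonal_span_singleton_eq_sub_one {v : E} (hv : v ≠ 0) :
    (finrank ℝ (ℝ ∙ v)ᗮ : ℝ) = finrank ℝ E - 1 := by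
  rw [← (ℝ ∙ v).finrank_add_finrank_orthogonal, finrank_span_singleton hv]
  push_cast
  ring

variable [MeasurableSpace E] [BorelSpace E]

variable (E) in
lemma isUniformlyDistributed_toSphere :
    IsUniformlyDistributed (volume : Measure E).toSphere := fun x y ρ => by
  obtain ⟨T, hT⟩ := exists_linearIsometryEquiv_apply_eq (x := (x : E)) (y := y) (by simp)
  have image_cone (s : Set E) : T '' (Set.Ioo (0 : ℝ) 1 • s) = Set.Ioo (0 : ℝ) 1 • (T '' s) := by
    simp only [← Set.image2_smul, Set.image_image2, Set.image2_image_right, map_smul]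
  rw [Measure.toSphere_apply' _ measurableSet_ball, Measure.toSphere_apply' _ measurableSet_ball,
    ← image_coe_ball_eq_of_apply_eq hT, ← image_cone, T.image_eq_preimage_symm,
    T.symm.measurePreserving.measure_preimage_emb T.symm.toHomeomorph.measurableEmbedding]

lemma hausdorffMeasure_hemisphere_lt_top {v : E} (hv : ‖v‖ = 1) :
    μH[(finrank ℝ E : ℝ) - 1] {x ∈ sphere (0 : E) 1 | ⟪v, x⟫ ≤ 0} < ⊤ := by
  let K := (ℝ ∙ v)ᗮ
  have subset_image : {x ∈ sphere (0 : E) 1 | ⟪v, x⟫ ≤ 0} ⊆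
      (fun w : K => stereoInvFunAux v w) '' closedBall 0 2 := by
    rintro x ⟨hx, hvx⟩
    have hne : x ≠ v := by
      rintro rfl
      norm_num [hv] at hvx
    refine ⟨stereoToFun v x, mem_closedBall_zero_iff.2 ?_,
      congrArg Subtype.val (stereo_left_inv hv (x := ⟨x, hx⟩) hne)⟩
    rw [stereoToFun_apply, norm_smul]
    calc ‖2 / (1 - ⟪v, x⟫)‖ * ‖K.orthogonalProjectionOnto x‖ ≤ 2 / 1 * ‖x‖ := by
          rw [Real.norm_of_nonneg (by bound)]
          gcongr
          · linarith
          · exact K.norm_orthogonalProjectionOnto_apply_le x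
      _ = 2 := by simp [mem_sphere_zero_iff_norm.1 hx]
  obtain ⟨L, hL⟩ : ∃ L, LipschitzOnWith L (fun w : K => stereoInvFunAux v w) (closedBall 0 2) :=
    (contDiff_stereoInvFunAux.comp K.subtypeL.contDiff).contDiffOn.exists_lipschitzOnWith
      one_ne_zero (convex_closedBall 0 2) (isCompact_closedBall 0 2)
  rw [← finrank_orthogonal_span_singleton_eq_sub_one (norm_ne_zero_iff.1 (hv ▸ one_ne_zero))]
  refine (measure_mono subset_image).trans_lt
    ((hL.hausdorffMeasure_image_le (Nat.cast_nonneg _)).trans_lt (ENNReal.mul_lt_top ?_ ?_))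
  · exact ENNReal.rpow_lt_top_of_nonneg (Nat.cast_nonneg _) ENNReal.coe_ne_top
  · exact (isCompact_closedBall 0 2).measure_lt_top

variable [Nontrivial E]

variable (E) in
lemma hausdorffMeasure_unitSphere_lt_top :
    μH[(finrank ℝ E : ℝ) - 1] (sphere (0 : E) 1) < ⊤ := by
  obtain ⟨v, hv⟩ := exists_norm_eq E zero_le_one
  have cover : sphere (0 : E) 1 ⊆
      {x ∈ sphere (0 : E) 1 | ⟪v, x⟫ ≤ 0} ∪ {x ∈ sphere (0 : E) 1 | ⟪-v, x⟫ ≤ 0} :=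
    fun x hx => (le_total ⟪v, x⟫ 0).imp (⟨hx, ·⟩) fun h => ⟨hx, by simpa using h⟩
  exact (measure_mono cover).trans_lt <| measure_union_lt_top
    (hausdorffMeasure_hemisphere_lt_top hv)
    (hausdorffMeasure_hemisphere_lt_top ((norm_neg v).trans hv))

variable (E) in
lemma hausdorffMeasure_unitSphere_pos : 0 < μH[(finrank ℝ E : ℝ) - 1] (sphere (0 : E) 1) := by
  obtain ⟨v, hv⟩ := exists_norm_eq E zero_le_one
  let K := (ℝ ∙ v)ᗮ
  have ball_subset_projection :
      ball (0 : K) 1 ⊆ K.orthogonalProjectionOnto '' sphere (0 : E) 1 := by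
    intro w hw
    have hvw : ⟪(w : E), v⟫ = 0 := Submodule.mem_orthogonal_singleton_iff_inner_left.1 w.2
    have hw1 : ‖(w : E)‖ ^ 2 ≤ 1 := pow_le_one₀ (norm_nonneg _) (mem_ball_zero_iff.1 hw).le
    refine ⟨w + √(1 - ‖(w : E)‖ ^ 2) • v, ?_, ?_⟩
    · rw [mem_sphere_zero_iff_norm, ← sq_eq_sq₀ (norm_nonneg _) zero_le_one,
        norm_add_sq_real, inner_smul_right, hvw, norm_smul, hv, Real.norm_of_nonneg (by positivity),
        mul_one, Real.sq_sqrt (by linarith)]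
      ring
    · rw [map_add, map_smul, Submodule.orthogonalProjectionOnto_mem_subspace_eq_self,
        Submodule.orthogonalProjectionOnto_orthogonal_apply_eq_zero
          (Submodule.mem_span_singleton_self v), smul_zero, add_zero]
  rw [← finrank_orthogonal_span_singleton_eq_sub_one (norm_ne_zero_iff.1 (hv ▸ one_ne_zero))]
  calc 0 < μH[(finrank ℝ K : ℝ)] (ball (0 : K) 1) := measure_ball_pos _ _ one_pos
    _ ≤ μH[(finrank ℝ K : ℝ)] (K.orthogonalProjectionOnto '' sphere (0 : E) 1) :=
      measure_mono ball_subset_projection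
    _ ≤ μH[(finrank ℝ K : ℝ)] (sphere (0 : E) 1) :=
      hausdorffMeasure_orthogonalProjectionOnto_le K _ _ (Nat.cast_nonneg _)

lemma average_sphere_hausdorffMeasure {F : Type*} [NormedAddCommGroup F] [NormedSpace ℝ F]
    (f : E → F) (z : E) {r : ℝ} (hr : 0 < r) :
    ⨍ y in sphere z r, f y ∂μH[(finrank ℝ E : ℝ) - 1] =
      ⨍ w, f (z + r • (w : E)) ∂(volume : Measure E).toSphere := by
  have hd : 0 ≤ (finrank ℝ E : ℝ) - 1 := sub_nonneg.2 (Nat.one_le_cast.2 finrank_pos)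
  have measure_univ_eq : μH[(finrank ℝ E : ℝ) - 1] (Set.univ : Set (sphere (0 : E) 1)) =
      μH[(finrank ℝ E : ℝ) - 1] (sphere (0 : E) 1) := by
    rw [← isometry_subtype_coe.hausdorffMeasure_image (.inl hd), Set.image_univ,
      Subtype.range_coe]
  have : IsFiniteMeasure (μH[(finrank ℝ E : ℝ) - 1] : Measure (sphere (0 : E) 1)) :=
    ⟨measure_univ_eq ▸ hausdorffMeasure_unitSphere_lt_top E⟩
  have : NeZero (μH[(finrank ℝ E : ℝ) - 1] : Measure (sphere (0 : E) 1)) :=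
    ⟨Measure.measure_univ_ne_zero.1
      (measure_univ_eq ▸ (hausdorffMeasure_unitSphere_pos E).ne')⟩
  have : NeZero (volume : Measure E).toSphere := ⟨Measure.toSphere_ne_zero _⟩
  rw [hausdorffMeasure_restrict_sphere hd z hr, ENNReal.smul_def, average_smul_measure _ _
      (ENNReal.coe_ne_zero.2 (NNReal.rpow_pos (nnnorm_pos.2 hr.ne')).ne') ENNReal.coe_ne_top,
    average_map_of_measurableEmbedding (measurableEmbedding_add_smul_unitSphere z hr.ne')]
  exact (isUniformlyDistributed_hausdorffMeasure_unitSphere hd).average_eq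
    (isUniformlyDistributed_toSphere E) _

end SphereMeasure

section AverageOnBall

variable {X F : Type*} [MetricSpace X] [ProperSpace X] [MeasurableSpace X]
  [OpensMeasurableSpace X] [NormedAddCommGroup F] {μ : Measure X} [IsFiniteMeasureOnCompacts μ]

lemma integrableOn_ball_of_continuous {f : X → F} (hf : Continuous f) (z : X) (r : ℝ) :
    IntegrableOn f (ball z r) μ :=
  (hf.continuousOn.integrableOn_compact (isCompact_closedBall z r)).mono_set ball_subset_closedBall

theorem hasFDerivAt_average_ball_param {H : Type*} [NormedAddCommGroup H] [NormedSpace ℝ H]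
    [NormedSpace ℝ F] [ProperSpace H] {G : H → X → F} {G' : H → X → H →L[ℝ] F}
    (hG : ∀ p, Continuous (G p)) (hG' : Continuous fun q : H × X => G' q.1 q.2)
    (hderiv : ∀ p y, HasFDerivAt (fun p => G p y) (G' p y) p) (z : X) (r : ℝ) (p : H) :
    HasFDerivAt (fun p => ⨍ y in ball z r, G p y ∂μ) (⨍ y in ball z r, G' p y ∂μ) p := by
  obtain ⟨C, hC⟩ := ((isCompact_closedBall p 1).prod
    (isCompact_closedBall z r)).exists_bound_of_continuousOn hG'.continuousOn
  have hint : HasFDerivAt (fun p => ∫ y in ball z r, G p y ∂μ) (∫ y in ball z r, G' p y ∂μ) p := by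
    refine hasFDerivAt_integral_of_dominated_of_fderiv_le (bound := fun _ => C)
      (closedBall_mem_nhds p one_pos) (.of_forall fun q => (hG q).aestronglyMeasurable)
      (integrableOn_ball_of_continuous (hG p) z r)
      (Continuous.aestronglyMeasurable (by fun_prop)) ?_
      (integrableOn_ball_of_continuous continuous_const z r)
      (.of_forall fun y q _ => hderiv q y)
    filter_upwards [ae_restrict_mem measurableSet_ball] with y hy q hq
    exact hC (q, y) ⟨hq, ball_subset_closedBall hy⟩
  simpa only [setAverage_eq] using! hint.const_smul (μ.real (ball z r))⁻¹

end AverageOnBall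

section PolarCoordinates

open Module

lemma integral_pow_smul_fderiv_add_smul_ray {E F : Type*} [NormedAddCommGroup E]
    [NormedSpace ℝ E] [NormedAddCommGroup F] [NormedSpace ℝ F] [CompleteSpace F] {n : ℕ}
    (hn : n ≠ 0) {g : E → F} (hg : ContDiff ℝ 1 g) (w : E) :
    ∫ s in (0 : ℝ)..1, s ^ (n - 1) • (fderiv ℝ g (s • w) (s • w) + (n : ℝ) • g (s • w)) = g w := by
  have : Continuous (fderiv ℝ g) := hg.continuous_fderiv one_ne_zero
  have deriv_ray (s : ℝ) : HasDerivAt (fun s : ℝ => s ^ n • g (s • w))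
      (s ^ (n - 1) • (fderiv ℝ g (s • w) (s • w) + (n : ℝ) • g (s • w))) s := by
    have hline : HasDerivAt (fun s : ℝ => s • w) w s := by
      simpa using (hasDerivAt_id s).smul_const w
    convert! (hasDerivAt_pow n s).smul
      ((hg.differentiable one_ne_zero (s • w)).hasFDerivAt.comp_hasDerivAt s hline) using 1
    rw [map_smul, smul_add, smul_smul, smul_smul, pow_sub_one_mul hn, mul_comm (n : ℝ)]
    rfl
  rw [intervalIntegral.integral_eq_sub_of_hasDerivAt (fun s _ => deriv_ray s)
    (Continuous.intervalIntegrable (by fun_prop) 0 1), one_smul, one_pow, one_smul,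
    zero_pow hn, zero_smul, sub_zero]

lemma integral_volumeIoiPow {F : Type*} [NormedAddCommGroup F] [NormedSpace ℝ F] (n : ℕ)
    (f : ℝ → F) :
    ∫ s, f s ∂Measure.volumeIoiPow n = ∫ s in Set.Ioi (0 : ℝ), s ^ n • f s := by
  rw [Measure.volumeIoiPow, integral_withDensity_eq_integral_toReal_smul (by fun_prop) (by simp),
    ← integral_subtype_comap measurableSet_Ioi fun s : ℝ => s ^ n • f s]
  congr with s
  rw [ENNReal.toReal_ofReal (pow_nonneg (le_of_lt s.2) n)]

variable {E F : Type*} [NormedAddCommGroup E] [NormedSpace ℝ E] [FiniteDimensional ℝ E]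
  [MeasurableSpace E] [BorelSpace E] [Nontrivial E] [NormedAddCommGroup F] [NormedSpace ℝ F]
  (μ : Measure E) [μ.IsAddHaarMeasure]

lemma integral_eq_integral_toSphere_integral_Ioi {f : E → F} (hf : Integrable f μ) :
    ∫ x, f x ∂μ =
      ∫ w, (∫ s in Set.Ioi (0 : ℝ), s ^ (finrank ℝ E - 1) • f (s • (w : E))) ∂μ.toSphere := by
  let g : sphere (0 : E) 1 × Set.Ioi (0 : ℝ) → F := fun p => f ((p.2 : ℝ) • (p.1 : E))
  have polar := μ.measurePreserving_homeomorphUnitSphereProd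
  have polar_emb := (homeomorphUnitSphereProd E).measurableEmbedding
  have coe_emb : MeasurableEmbedding ((↑) : ({0}ᶜ : Set E) → E) :=
    .subtype_coe (measurableSet_singleton 0).compl
  have g_polar (x : ({0}ᶜ : Set E)) : g (homeomorphUnitSphereProd E x) = f x := by
    simp [g, smul_smul, norm_ne_zero_iff.2 x.2]
  have hg : Integrable g (μ.toSphere.prod (.volumeIoiPow (finrank ℝ E - 1))) := by
    rw [← polar.integrable_comp_emb polar_emb, show g ∘ homeomorphUnitSphereProd E = f ∘ (↑) from
      funext g_polar, ← coe_emb.integrable_map_iff, coe_emb.map_comap]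
    exact hf.restrict
  calc ∫ x, f x ∂μ = ∫ x : ({0}ᶜ : Set E), g (homeomorphUnitSphereProd E x) ∂μ.comap (↑) := by
        simp only [g_polar]
        rw [integral_subtype_comap (measurableSet_singleton 0).compl f, restrict_compl_singleton]
    _ = ∫ p, g p ∂μ.toSphere.prod (.volumeIoiPow (finrank ℝ E - 1)) :=
        polar.integral_comp polar_emb g
    _ = ∫ w, (∫ s, g (w, s) ∂.volumeIoiPow (finrank ℝ E - 1)) ∂μ.toSphere := integral_prod g hg
    _ = _ := by
        congr with w
        exact integral_volumeIoiPow _ fun s => f (s • (w : E))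

lemma setIntegral_unitBall_eq_integral_toSphere {f : E → F} (hf : IntegrableOn f (ball 0 1) μ) :
    ∫ x in ball 0 1, f x ∂μ =
      ∫ w, (∫ s in (0 : ℝ)..1, s ^ (finrank ℝ E - 1) • f (s • (w : E))) ∂μ.toSphere := by
  rw [← integral_indicator measurableSet_ball, integral_eq_integral_toSphere_integral_Ioi μ
    ((integrable_indicator_iff measurableSet_ball).2 hf)]
  congr with w
  have indicator_ray (s : ℝ) (hs : s ∈ Set.Ioi (0 : ℝ)) :
      s ^ (finrank ℝ E - 1) • (ball 0 1).indicator f (s • (w : E)) =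
        (Set.Iio 1).indicator (fun s => s ^ (finrank ℝ E - 1) • f (s • (w : E))) s := by
    have mem_ball_iff : s • (w : E) ∈ ball (0 : E) 1 ↔ s ∈ Set.Iio (1 : ℝ) := by
      simp [norm_smul, abs_of_pos (Set.mem_Ioi.1 hs)]
    by_cases hs1 : s ∈ Set.Iio (1 : ℝ)
    · rw [Set.indicator_of_mem (mem_ball_iff.2 hs1), Set.indicator_of_mem hs1]
    · rw [Set.indicator_of_notMem (mt mem_ball_iff.1 hs1), Set.indicator_of_notMem hs1, smul_zero]
  rw [setIntegral_congr_fun measurableSet_Ioi indicator_ray,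
    setIntegral_indicator measurableSet_Iio, Set.Ioi_inter_Iio,
    ← integral_Ioc_eq_integral_Ioo, intervalIntegral.integral_of_le zero_le_one]

/-- The divergence theorem on the unit ball for the radial field `y ↦ g y • y`. -/
theorem setIntegral_unitBall_fderiv_add_smul [CompleteSpace F] {g : E → F} (hg : ContDiff ℝ 1 g) :
    ∫ y in ball 0 1, (fderiv ℝ g y y + (finrank ℝ E : ℝ) • g y) ∂μ =
      ∫ w, g w ∂μ.toSphere := by
  have : Continuous (fderiv ℝ g) := hg.continuous_fderiv one_ne_zero
  have hcont : Continuous fun y => fderiv ℝ g y y + (finrank ℝ E : ℝ) • g y := by fun_prop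
  rw [setIntegral_unitBall_eq_integral_toSphere μ (integrableOn_ball_of_continuous hcont 0 1)]
  simp only [integral_pow_smul_fderiv_add_smul_ray finrank_pos.ne' hg]

theorem average_unitBall_fderiv_apply_self [CompleteSpace F] {g : E → F} (hg : ContDiff ℝ 1 g) :
    ⨍ y in ball 0 1, fderiv ℝ g y y ∂μ =
      (finrank ℝ E : ℝ) • (⨍ w, g w ∂μ.toSphere - ⨍ y in ball 0 1, g y ∂μ) := by
  have : Continuous (fderiv ℝ g) := hg.continuous_fderiv one_ne_zero
  have hn : (finrank ℝ E : ℝ) ≠ 0 := Nat.cast_ne_zero.2 finrank_pos.ne'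
  have divergence := setIntegral_unitBall_fderiv_add_smul μ hg
  have : Continuous g := hg.continuous
  rw [integral_add (integrableOn_ball_of_continuous (by fun_prop) 0 1)
    (integrableOn_ball_of_continuous (by fun_prop) 0 1), integral_smul,
    ← eq_sub_iff_add_eq] at divergence
  rw [setAverage_eq, setAverage_eq, average_eq, divergence, μ.toSphere_real_apply_univ, mul_inv,
    smul_sub, smul_sub, mul_smul, smul_inv_smul₀ hn, smul_comm (finrank ℝ E : ℝ)]

end PolarCoordinates

section BallAverage

open Module

variable {E F : Type*} [NormedAddCommGroup E] [NormedSpace ℝ E] [FiniteDimensional ℝ E]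
  [MeasurableSpace E] [BorelSpace E] [NormedAddCommGroup F] [NormedSpace ℝ F]
  (μ : Measure E) [μ.IsAddHaarMeasure]

lemma average_ball_eq_average_unitBall (f : E → F) (z : E) {r : ℝ} (hr : 0 < r) :
    ⨍ y in ball z r, f y ∂μ = ⨍ y in ball 0 1, f (z + r • y) ∂μ := by
  have translate : ∫ y in ball 0 r, f (z + y) ∂μ = ∫ y in ball z r, f y ∂μ := by
    rw [← (measurePreserving_add_left μ z).setIntegral_preimage_emb (measurableEmbedding_addLeft z)
      f, preimage_add_ball, sub_self]
  rw [setAverage_eq, setAverage_eq, μ.setIntegral_comp_smul_of_pos (fun y => f (z + y)) _ hr,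
    smul_unitBall_of_pos hr, translate, smul_smul, Measure.real, μ.addHaar_ball_of_pos z hr,
    ENNReal.toReal_mul, ENNReal.toReal_ofReal (by positivity), mul_inv, mul_comm, Measure.real]

lemma hasFDerivAt_average_unitBall_comp_add_smul {f : E → F} (hf : ContDiff ℝ 1 f) (z : E)
    (r : ℝ) :
    HasFDerivAt (fun p : E × ℝ => ⨍ y in ball 0 1, f (p.1 + p.2 • y) ∂μ)
      (⨍ y in ball 0 1, fderiv ℝ f (z + r • y) ∘L
        (.fst ℝ E ℝ + (ContinuousLinearMap.snd ℝ E ℝ).smulRight y) ∂μ) (z, r) := by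
  have : Continuous (fderiv ℝ f) := hf.continuous_fderiv one_ne_zero
  have : Continuous f := hf.continuous
  refine hasFDerivAt_average_ball_param (μ := μ) (G := fun (p : E × ℝ) y => f (p.1 + p.2 • y))
    (G' := fun p y => fderiv ℝ f (p.1 + p.2 • y) ∘L
      (.fst ℝ E ℝ + (ContinuousLinearMap.snd ℝ E ℝ).smulRight y))
    (fun p => by fun_prop) (by fun_prop) (fun p y => ?_) 0 1 (z, r)
  exact (hf.differentiable one_ne_zero _).hasFDerivAt.comp p
    (hasFDerivAt_fst.add (hasFDerivAt_snd.smul_const y))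

lemma average_unitBall_fderiv_add_smul_apply_self [Nontrivial E] [CompleteSpace F] {f : E → F}
    (hf : ContDiff ℝ 1 f) (z : E) {r : ℝ} (hr : 0 < r) :
    ⨍ y in ball 0 1, fderiv ℝ f (z + r • y) y ∂μ = (finrank ℝ E / r) •
      (⨍ w, f (z + r • (w : E)) ∂μ.toSphere - ⨍ y in ball z r, f y ∂μ) := by
  have fderiv_rescale (y : E) : fderiv ℝ (fun y => f (z + r • y)) y y =
      r • fderiv ℝ f (z + r • y) y := by
    have := (hf.differentiable one_ne_zero (z + r • y)).hasFDerivAt.comp y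
      (((hasFDerivAt_id y).const_smul r).const_add z)
    simpa using! DFunLike.congr_fun this.fderiv y
  have divergence := average_unitBall_fderiv_apply_self μ (g := fun y => f (z + r • y))
    (by fun_prop)
  simp only [fderiv_rescale] at divergence
  rw [average_ball_eq_average_unitBall μ f z hr, div_eq_inv_mul, mul_smul, ← divergence,
    average, average, integral_smul, inv_smul_smul₀ hr.ne']

theorem hasFDerivAt_average_ball [Nontrivial E] [CompleteSpace F] {f : E → F}
    (hf : ContDiff ℝ 1 f) (z : E) {r : ℝ} (hr : 0 < r) :
    HasFDerivAt (fun p : E × ℝ => ⨍ y in ball p.1 p.2, f y ∂μ)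
      ((⨍ y in ball z r, fderiv ℝ f y ∂μ).coprod (.toSpanSingleton ℝ ((finrank ℝ E / r) •
        (⨍ w, f (z + r • (w : E)) ∂μ.toSphere - ⨍ y in ball z r, f y ∂μ)))) (z, r) := by
  have : Continuous (fderiv ℝ f) := hf.continuous_fderiv one_ne_zero
  have to_unitBall : (fun p : E × ℝ => ⨍ y in ball p.1 p.2, f y ∂μ) =ᶠ[𝓝 (z, r)]
      fun p => ⨍ y in ball 0 1, f (p.1 + p.2 • y) ∂μ := by
    filter_upwards [continuous_snd.continuousAt.eventually (lt_mem_nhds hr)] with p hp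
    exact average_ball_eq_average_unitBall μ f p.1 hp
  refine ((hasFDerivAt_average_unitBall_comp_add_smul μ hf z r).congr_of_eventuallyEq
    to_unitBall).congr_fderiv ?_
  rw [← average_unitBall_fderiv_add_smul_apply_self μ hf z hr,
    average_ball_eq_average_unitBall μ _ z hr]
  have fderiv_apply (v : E) := average_apply (integrableOn_ball_of_continuous (μ := μ)
    (f := fun y => fderiv ℝ f (z + r • y)) (by fun_prop) 0 1) v
  have param_apply (p : E × ℝ) := average_apply (integrableOn_ball_of_continuous (μ := μ)
    (f := fun y => fderiv ℝ f (z + r • y) ∘L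
      (.fst ℝ E ℝ + (ContinuousLinearMap.snd ℝ E ℝ).smulRight y)) (by fun_prop) 0 1) p
  ext v
  · simp [param_apply, fderiv_apply, -ContinuousLinearMap.comp_add]
  · simp [param_apply, -ContinuousLinearMap.comp_add]

theorem hasFDerivAt_rpow_mul_average_ball [Nontrivial E] {f : E → ℝ} (hf : ContDiff ℝ 1 f) (β : ℝ)
    (z : E) {r : ℝ} (hr : 0 < r) :
    HasFDerivAt (fun p : E × ℝ => p.2 ^ β * ⨍ y in ball p.1 p.2, f y ∂μ)
      (r ^ β • (⨍ y in ball z r, fderiv ℝ f y ∂μ).coprod (.toSpanSingleton ℝ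
        (finrank ℝ E / r * (⨍ w, f (z + r • (w : E)) ∂μ.toSphere -
          (1 - β / finrank ℝ E) * ⨍ y in ball z r, f y ∂μ)))) (z, r) := by
  have hn : (finrank ℝ E : ℝ) ≠ 0 := Nat.cast_ne_zero.2 finrank_pos.ne'
  refine ((hasFDerivAt_snd (p := (z, r)).rpow_const (.inl hr.ne')).mul
    (hasFDerivAt_average_ball μ hf z hr)).congr_fderiv ?_
  ext
  · simp
  · simp [Real.rpow_sub_one hr.ne']
    field_simp
    ring

end BallAverage

section BestBall

lemma convex_setOf_dist_le {E : Type*} [NormedAddCommGroup E] [NormedSpace ℝ E] (x : E) :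
    Convex ℝ {p : E × ℝ | dist x p.1 ≤ p.2} := by
  simpa [dist_comm] using (convexOn_univ_dist x).convex_epigraph

lemma norm_eq_neg_of_forall_dist_le {E : Type*} [NormedAddCommGroup E] [NormedSpace ℝ E]
    {A : E →L[ℝ] ℝ} {K r : ℝ} {x z : E} (hr : 0 < r) (hx : dist x z ≤ r)
    (h : ∀ w ρ, dist x w ≤ ρ → A (w - z) + (ρ - r) * K ≤ 0) : ‖A‖ = -K := by
  have translate_grow (v : E) : A v ≤ -K * ‖v‖ := by
    have := h (z + v) (r + ‖v‖) ((dist_triangle x z _).trans (by simpa using hx))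
    simp only [add_sub_cancel_left] at this
    linarith
  have K_nonpos : K ≤ 0 := by simpa using h z (r + 1) (by linarith)
  refine le_antisymm (A.opNorm_le_bound (neg_nonneg.2 K_nonpos) fun v => ?_) ?_
  · rw [Real.norm_eq_abs, abs_le']
    exact ⟨translate_grow v, by simpa using translate_grow (-v)⟩
  · have apex : A (x - z) - r * K ≤ 0 := by simpa [sub_eq_add_neg] using h x 0 (dist_self x).le
    have : -A (x - z) ≤ ‖A‖ * r := calc
      -A (x - z) ≤ ‖A (x - z)‖ := neg_le_abs _
      _ ≤ ‖A‖ * r := A.le_opNorm_of_le (dist_eq_norm x z ▸ hx)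
    nlinarith

lemma norm_average_gradient {E : Type*} [NormedAddCommGroup E] [InnerProductSpace ℝ E]
    [CompleteSpace E] [MeasurableSpace E] (μ : Measure E) (f : E → ℝ) :
    ‖⨍ y, gradient f y ∂μ‖ = ‖⨍ y, fderiv ℝ f y ∂μ‖ := by
  rw [← (InnerProductSpace.toDual ℝ E).symm.norm_map, average, average]
  exact congrArg norm
    ((InnerProductSpace.toDual ℝ E).symm.toContinuousLinearEquiv.integral_comp_comm (fderiv ℝ f))

variable {n : ℕ} {β : ℝ} {f : EuclideanSpace ℝ (Fin n) → ℝ} {x z : EuclideanSpace ℝ (Fin n)}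
  {r : ℝ}

lemma IsBestBall.isMaxOn (hB : IsBestBall β f x z r) (hf0 : ∀ y, 0 ≤ f y)
    (hbdd : BddAbove (maxSet β f x)) :
    IsMaxOn (fun p : EuclideanSpace ℝ (Fin n) × ℝ => p.2 ^ β * ⨍ y in ball p.1 p.2, f y)
      {p | dist x p.1 ≤ p.2} (z, r) := by
  obtain ⟨hr, -, hmax⟩ := hB
  simp only [fracMax, abs_of_nonneg (hf0 _)] at hmax
  rintro ⟨w, ρ⟩ (hw : dist x w ≤ ρ)
  obtain rfl | hρ := (dist_nonneg.trans hw).eq_or_lt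
  · -- At the apex `(x, 0)` of the cone the ball is empty, and its average is the junk value `0`.
    have : 0 ≤ ⨍ y in ball z r, f y := integral_nonneg hf0
    simpa using mul_nonneg (Real.rpow_nonneg hr.le β) this
  · change ρ ^ β * ⨍ y in ball w ρ, f y ≤ r ^ β * ⨍ y in ball z r, f y
    rw [← hmax]
    exact le_csSup hbdd ⟨w, ρ, hρ, hw, by simp only [abs_of_nonneg (hf0 _)]⟩

lemma IsBestBall.average_fderiv_apply_sub_add_nonpos [NeZero n] (hB : IsBestBall β f x z r)
    (hf0 : ∀ y, 0 ≤ f y) (hf : ContDiff ℝ 1 f) (hbdd : BddAbove (maxSet β f x))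
    (w : EuclideanSpace ℝ (Fin n)) (ρ : ℝ) (hw : dist x w ≤ ρ) :
    (⨍ y in ball z r, fderiv ℝ f y) (w - z) + (ρ - r) * (n / r *
      (⨍ y in sphere z r, f y ∂μH[(n : ℝ) - 1] - (1 - β / n) * ⨍ y in ball z r, f y)) ≤ 0 := by
  obtain ⟨hr, hxz, -⟩ := id hB
  have hcone : (w, ρ) - (z, r) ∈ posTangentConeAt {p : EuclideanSpace ℝ (Fin n) × ℝ |
      dist x p.1 ≤ p.2} (z, r) :=
    sub_mem_posTangentConeAt_of_segment_subset ((convex_setOf_dist_le x).segment_subset hxz hw)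
  have hderiv := (hB.isMaxOn hf0 hbdd).localize.hasFDerivWithinAt_nonpos
    (hasFDerivAt_rpow_mul_average_ball volume hf β z hr).hasFDerivWithinAt hcone
  rw [← average_sphere_hausdorffMeasure f z hr, finrank_euclideanSpace_fin] at hderiv
  exact nonpos_of_mul_nonpos_right hderiv (Real.rpow_pos_of_pos hr β)

end BestBall

theorem stmt8_general (n : ℕ) (hn : 1 ≤ n) (β : ℝ)
    (f : EuclideanSpace ℝ (Fin n) → ℝ) (hf0 : ∀ x, 0 ≤ f x) (hf : ContDiff ℝ 1 f)
    (x : EuclideanSpace ℝ (Fin n)) (hbdd : BddAbove (maxSet β f x))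
    (z : EuclideanSpace ℝ (Fin n)) (r : ℝ) (hB : IsBestBall β f x z r) :
    ‖⨍ y in ball z r, gradient f y‖ =
      ((n : ℝ) / r) * ((1 - β / n) * (⨍ y in ball z r, f y) -
        ⨍ y in sphere z r, f y ∂(μH[(n : ℝ) - 1])) := by
  have : NeZero n := ⟨Nat.one_le_iff_ne_zero.1 hn⟩
  rw [norm_average_gradient, norm_eq_neg_of_forall_dist_le hB.1 hB.2.1
    (hB.average_fderiv_apply_sub_add_nonpos hf0 hf hbdd), ← mul_neg, neg_sub]

theorem stmt8 (n : ℕ) (hn : 1 ≤ n) (β : ℝ) (hβ0 : 0 < β) (hβn : β < n)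
    (f : EuclideanSpace ℝ (Fin n) → ℝ) (hf0 : ∀ x, 0 ≤ f x) (hf : ContDiff ℝ 1 f)
    (hfi : Integrable f)
    (x : EuclideanSpace ℝ (Fin n))
    (hfin : ∀ᶠ y in 𝓝 x, BddAbove (maxSet β f y))
    (hdiff : DifferentiableAt ℝ (fracMax β f) x)
    (z : EuclideanSpace ℝ (Fin n)) (r : ℝ) (hB : IsBestBall β f x z r) :
    ‖⨍ y in ball z r, gradient f y‖ =
      ((n : ℝ) / r) * ((1 - β / n) * (⨍ y in ball z r, f y) -
        ⨍ y in sphere z r, f y ∂(μH[(n : ℝ) - 1])) :=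
  stmt8_general n hn β f hf0 hf x hfin.self_of_nhds z r hB
end
end

section
/- There exists a constant C = C(n) > 0 such that the following holds. Let f : ℝⁿ → [0,∞) be a nonnegative, locally integrable radial function with f(x) = F(|x|) for a function F : (0,∞) → [0,∞), let z ∈ ℝⁿ \ {0} and r > 0 be such that the ball B(z,r) is contained in B(0,2|z|) \ B(0,|z|/2), and set a := |z| − r and b := |z| + r. Then (1/(b − a)) ∫_a^b F(t) dt ≤ C(n) ⨍_{B(z,2r)} f(y) dy. -/
open MeasureTheory Metric Filter
open scoped Topology

noncomputable section

/-!
Let `K` be the cone of points whose radial projection to the sphere of radius `‖z‖` lies in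
`B(z, r)`, and let `σ(K)` be the surface measure of its trace on the unit sphere. In polar
coordinates the integral over `K` of any radial function is `σ(K)` times a one-dimensional integral
with weight `t ^ (n - 1)`, and that weight is comparable to `‖z‖ ^ (n - 1)` when
`|t - ‖z‖| ≤ r ≤ ‖z‖ / 2`. This is used twice. Since `B(z, r / 2)` lies in the part of `K` with
`|‖x‖ - ‖z‖| ≤ r / 2`, one gets `|B(z, r / 2)| ≲ σ(K) r ‖z‖ ^ (n - 1)`. Since the part of `K` with
`|‖x‖ - ‖z‖| ≤ r` lies in `B(z, 2r)`, one gets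
`σ(K) ‖z‖ ^ (n - 1) ∫ₐᵇ F ≲ ∫_{B(z, 2r)} f`. Multiplying the two eliminates `σ(K)`.
-/

open Module Set
open scoped ENNReal

section ProjCone

variable {E : Type*} [NormedAddCommGroup E] [NormedSpace ℝ E] {x z : E} {r s : ℝ}

/-- The cone of points whose radial projection to the sphere of radius `‖z‖` about the origin lies
in `ball z r`; it compares balls around `z` with spherical sectors. As `‖z‖ / 0 = 0`, the
origin projects to itself, so that it belongs to the cone exactly when `‖z‖ < r`. -/
def projCone (z : E) (r : ℝ) : Set E := {x | (‖z‖ / ‖x‖) • x ∈ ball z r}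

theorem smul_mem_projCone_iff {t : ℝ} (ht : 0 < t) : t • x ∈ projCone z r ↔ x ∈ projCone z r := by
  have hproj : (‖z‖ / ‖t • x‖) • t • x = (‖z‖ / ‖x‖) • x := by
    rw [norm_smul, Real.norm_of_nonneg ht.le, smul_smul]
    congr 1
    field_simp
  simp only [projCone, mem_ofPred_eq, hproj]

theorem dist_div_norm_smul_self_le (c : ℝ) (x : E) : dist ((c / ‖x‖) • x) x ≤ |c - ‖x‖| := by
  rcases eq_or_ne x 0 with rfl | hx
  · simp
  · have hx' : ‖x‖ ≠ 0 := norm_ne_zero_iff.2 hx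
    refine le_of_eq ?_
    calc dist ((c / ‖x‖) • x) x
        = ‖(c / ‖x‖ - 1) • x‖ := by rw [dist_eq_norm, sub_smul, one_smul]
      _ = |(c / ‖x‖ - 1) * ‖x‖| := by rw [norm_smul, Real.norm_eq_abs, abs_mul, abs_norm]
      _ = |c - ‖x‖| := by rw [sub_mul, one_mul, div_mul_cancel₀ _ hx']

theorem ball_half_subset_projCone (z : E) (r : ℝ) : ball z (r / 2) ⊆ projCone z r := by
  intro x hx
  rw [mem_ball] at hx
  have hproj : dist ((‖z‖ / ‖x‖) • x) x ≤ dist x z := by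
    refine (dist_div_norm_smul_self_le ‖z‖ x).trans ?_
    rw [dist_comm, dist_eq_norm]
    exact abs_norm_sub_norm_le z x
  change dist ((‖z‖ / ‖x‖) • x) z < r
  linarith [dist_triangle ((‖z‖ / ‖x‖) • x) x z]

theorem mem_ball_of_mem_projCone (hx : x ∈ projCone z r) (hxs : |‖z‖ - ‖x‖| ≤ s) :
    x ∈ ball z (r + s) := by
  have hxr : dist ((‖z‖ / ‖x‖) • x) z < r := hx
  have hproj := dist_div_norm_smul_self_le ‖z‖ x
  rw [mem_ball]
  linarith [dist_triangle_left x z ((‖z‖ / ‖x‖) • x)]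

theorem measurableSet_projCone [MeasurableSpace E] [BorelSpace E] [SecondCountableTopology E]
    (z : E) (r : ℝ) : MeasurableSet (projCone z r) :=
  measurableSet_ball.preimage (by fun_prop)

theorem le_half_norm_of_ball_subset (hz : z ≠ 0) (h : ball z r ⊆ (ball 0 (‖z‖ / 2))ᶜ) :
    r ≤ ‖z‖ / 2 := by
  have hz' : 0 < ‖z‖ := norm_pos_iff.2 hz
  by_contra! hr
  obtain ⟨s, hs, hs'⟩ := exists_between (lt_min hr (half_lt_self hz'))
  obtain ⟨hsr, hsz⟩ := lt_min_iff.1 hs'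
  have hdist : dist ((1 - s / ‖z‖) • z) z = s := by
    rw [dist_comm, dist_eq_norm, sub_smul, one_smul, sub_sub_cancel, norm_smul,
      Real.norm_of_nonneg (div_pos (by linarith) hz').le, div_mul_cancel₀ _ hz'.ne']
  have hnorm : ‖(1 - s / ‖z‖) • z‖ = ‖z‖ - s := by
    rw [norm_smul, Real.norm_of_nonneg (sub_nonneg.2 ((div_lt_one hz').2 hsz).le), sub_mul,
      one_mul, div_mul_cancel₀ _ hz'.ne']
  refine h (mem_ball.2 (hdist.trans_lt hsr)) ?_
  rw [mem_ball_zero_iff, hnorm]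
  linarith

end ProjCone

section Polar

theorem setLIntegral_Ioi_pow_mul_indicator_Ioo_le (n : ℕ) {a b : ℝ} (hab : a ≤ b) :
    ∫⁻ t in Ioi (0 : ℝ), ENNReal.ofReal (t ^ n) * (Ioo a b).indicator 1 t ≤
      ENNReal.ofReal ((b - a) * b ^ n) := by
  calc ∫⁻ t in Ioi (0 : ℝ), ENNReal.ofReal (t ^ n) * (Ioo a b).indicator 1 t
      ≤ ∫⁻ t in Ioi (0 : ℝ), (Ioo a b).indicator (fun _ ↦ ENNReal.ofReal (b ^ n)) t := by
        refine setLIntegral_mono' measurableSet_Ioi fun t (ht₀ : 0 < t) ↦ ?_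
        by_cases ht : t ∈ Ioo a b
        · simp only [indicator_of_mem ht, Pi.one_apply, mul_one]
          gcongr
          exact ht.2.le
        · simp [ht]
    _ ≤ ∫⁻ t, (Ioo a b).indicator (fun _ ↦ ENNReal.ofReal (b ^ n)) t :=
        setLIntegral_le_lintegral _ _
    _ = ENNReal.ofReal ((b - a) * b ^ n) := by
        rw [lintegral_indicator_const measurableSet_Ioo, Real.volume_Ioo, mul_comm,
          ← ENNReal.ofReal_mul (sub_nonneg.2 hab)]

theorem lintegral_volumeIoiPow (n : ℕ) {G : ℝ → ℝ≥0∞} (hG : Measurable G) :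
    ∫⁻ t : Ioi (0 : ℝ), G t ∂(Measure.volumeIoiPow n) =
      ∫⁻ t in Ioi (0 : ℝ), ENNReal.ofReal (t ^ n) * G t := by
  rw [Measure.volumeIoiPow, lintegral_withDensity_eq_lintegral_mul _ (by fun_prop) (by fun_prop)]
  exact lintegral_subtype_comap measurableSet_Ioi fun t ↦ ENNReal.ofReal (t ^ n) * G t

variable {E : Type*} [NormedAddCommGroup E] [NormedSpace ℝ E] [FiniteDimensional ℝ E]
  [Nontrivial E] [MeasurableSpace E] [BorelSpace E] (μ : Measure E) [μ.IsAddHaarMeasure]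

theorem setLIntegral_comp_norm_of_smul_mem_iff {K : Set E} (hK : MeasurableSet K)
    (hcone : ∀ (t : ℝ) (x : E), 0 < t → (t • x ∈ K ↔ x ∈ K)) {G : ℝ → ℝ≥0∞} (hG : Measurable G) :
    ∫⁻ x in K, G ‖x‖ ∂μ =
      μ.toSphere ((↑) ⁻¹' K) *
        ∫⁻ t in Ioi (0 : ℝ), ENNReal.ofReal (t ^ (finrank ℝ E - 1)) * G t := by
  set S : Set (sphere (0 : E) 1) := (↑) ⁻¹' K
  have hS : MeasurableSet S := measurable_subtype_coe hK
  have hmem (x : ({0}ᶜ : Set E)) : (homeomorphUnitSphereProd E x).1 ∈ S ↔ (x : E) ∈ K := by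
    simpa [S] using hcone ‖(x : E)‖⁻¹ x (inv_pos.2 (norm_pos_iff.2 x.2))
  calc ∫⁻ x in K, G ‖x‖ ∂μ
      = ∫⁻ x in ({0}ᶜ : Set E), K.indicator (fun x ↦ G ‖x‖) x ∂μ := by
        rw [restrict_compl_singleton, lintegral_indicator hK]
    _ = ∫⁻ x : ({0}ᶜ : Set E), K.indicator (fun x ↦ G ‖x‖) x ∂(μ.comap (↑)) :=
        (lintegral_subtype_comap (measurableSet_singleton _).compl _).symm
    _ = ∫⁻ x : ({0}ᶜ : Set E), S.indicator 1 (homeomorphUnitSphereProd E x).1 *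
          G (homeomorphUnitSphereProd E x).2 ∂(μ.comap (↑)) := by
        refine lintegral_congr fun x ↦ ?_
        by_cases hx : (x : E) ∈ K <;> simp [hmem, hx]
    _ = ∫⁻ p, S.indicator 1 p.1 * G p.2
          ∂(μ.toSphere.prod (Measure.volumeIoiPow (finrank ℝ E - 1))) :=
        μ.measurePreserving_homeomorphUnitSphereProd.lintegral_comp_emb
          (Homeomorph.measurableEmbedding _) fun p ↦ S.indicator 1 p.1 * G p.2
    _ = μ.toSphere S * ∫⁻ t : Ioi (0 : ℝ), G t ∂(Measure.volumeIoiPow (finrank ℝ E - 1)) := by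
        rw [lintegral_prod_mul (f := S.indicator 1) (g := fun t : Ioi (0 : ℝ) ↦ G t)
          (measurable_one.indicator hS).aemeasurable (by fun_prop), lintegral_indicator_one hS]
    _ = _ := by rw [lintegral_volumeIoiPow _ hG]

variable {z : E} {r : ℝ}

theorem measure_ball_half_le_toSphere_projCone (hr : 0 < r) (z : E) :
    μ (ball z (r / 2)) ≤ μ.toSphere ((↑) ⁻¹' projCone z r) *
      ENNReal.ofReal (r * (‖z‖ + r / 2) ^ (finrank ℝ E - 1)) := by
  set m := finrank ℝ E - 1
  set T : Set ℝ := Ioo (‖z‖ - r / 2) (‖z‖ + r / 2)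
  have hT : MeasurableSet T := measurableSet_Ioo
  have hball : ball z (r / 2) ⊆ (‖·‖) ⁻¹' T ∩ projCone z r := fun x hx ↦ by
    have hxz := (abs_norm_sub_norm_le x z).trans_lt (mem_ball_iff_norm.1 hx)
    obtain ⟨hlower, hupper⟩ := abs_lt.1 hxz
    exact ⟨⟨by linarith, by linarith⟩, ball_half_subset_projCone z r hx⟩
  have hradial : ∫⁻ t in Ioi (0 : ℝ), ENNReal.ofReal (t ^ m) * T.indicator 1 t ≤
      ENNReal.ofReal (r * (‖z‖ + r / 2) ^ m) := by
    have hwidth : (‖z‖ + r / 2) - (‖z‖ - r / 2) = r := by ring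
    have hle := setLIntegral_Ioi_pow_mul_indicator_Ioo_le m
      (show ‖z‖ - r / 2 ≤ ‖z‖ + r / 2 by linarith)
    rwa [hwidth] at hle
  calc μ (ball z (r / 2))
      ≤ μ ((‖·‖) ⁻¹' T ∩ projCone z r) := measure_mono hball
    _ = ∫⁻ x in projCone z r, T.indicator 1 ‖x‖ ∂μ := by
        rw [← Measure.restrict_apply (measurable_norm hT),
          ← lintegral_indicator_one (measurable_norm hT)]
        rfl
    _ = μ.toSphere ((↑) ⁻¹' projCone z r) *
          ∫⁻ t in Ioi (0 : ℝ), ENNReal.ofReal (t ^ m) * T.indicator 1 t :=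
        setLIntegral_comp_norm_of_smul_mem_iff μ (measurableSet_projCone z r)
          (fun _ _ ↦ smul_mem_projCone_iff) (measurable_one.indicator hT)
    _ ≤ _ := by gcongr

theorem toSphere_projCone_mul_setLIntegral_le (hrz : r ≤ ‖z‖) (F : ℝ → ℝ≥0∞) :
    μ.toSphere ((↑) ⁻¹' projCone z r) * (ENNReal.ofReal ((‖z‖ - r) ^ (finrank ℝ E - 1)) *
      ∫⁻ t in Ioc (‖z‖ - r) (‖z‖ + r), F t) ≤ ∫⁻ x in ball z (2 * r), F ‖x‖ ∂μ := by
  set m := finrank ℝ E - 1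
  set T : Set ℝ := Ioc (‖z‖ - r) (‖z‖ + r)
  have hT : MeasurableSet T := measurableSet_Ioc
  have hT₀ : T ⊆ Ioi 0 := fun t ht ↦ (sub_nonneg.2 hrz).trans_lt ht.1
  -- `F` need not be measurable, so polar coordinates are applied to a measurable minorant.
  obtain ⟨G, hG, hGF, hGint⟩ := exists_measurable_le_lintegral_eq (μ := volume.restrict T) F
  calc μ.toSphere ((↑) ⁻¹' projCone z r) *
        (ENNReal.ofReal ((‖z‖ - r) ^ m) * ∫⁻ t in T, F t)
      = μ.toSphere ((↑) ⁻¹' projCone z r) *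
          ∫⁻ t in T, ENNReal.ofReal ((‖z‖ - r) ^ m) * G t := by
        rw [hGint, lintegral_const_mul _ hG]
    _ ≤ μ.toSphere ((↑) ⁻¹' projCone z r) * ∫⁻ t in T, ENNReal.ofReal (t ^ m) * G t := by
        gcongr _ * ?_
        refine setLIntegral_mono' hT fun t ht ↦ ?_
        have := sub_nonneg.2 hrz
        gcongr
        exact ht.1.le
    _ = μ.toSphere ((↑) ⁻¹' projCone z r) *
          ∫⁻ t in Ioi (0 : ℝ), ENNReal.ofReal (t ^ m) * T.indicator G t := by
        simp_rw [← indicator_mul_right T fun t ↦ ENNReal.ofReal (t ^ m)]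
        rw [setLIntegral_indicator hT, inter_eq_left.2 hT₀]
    _ = ∫⁻ x in projCone z r, T.indicator G ‖x‖ ∂μ :=
        (setLIntegral_comp_norm_of_smul_mem_iff μ (measurableSet_projCone z r)
          (fun _ _ ↦ smul_mem_projCone_iff) (hG.indicator hT)).symm
    _ ≤ ∫⁻ x in projCone z r, (ball z (2 * r)).indicator (fun x ↦ F ‖x‖) x ∂μ := by
        refine setLIntegral_mono' (measurableSet_projCone z r) fun x hx ↦ ?_
        by_cases hxT : ‖x‖ ∈ T
        · have hxz : |‖z‖ - ‖x‖| ≤ r := abs_le.2 ⟨by linarith [hxT.2], by linarith [hxT.1]⟩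
          have hxball : x ∈ ball z (2 * r) := two_mul r ▸ mem_ball_of_mem_projCone hx hxz
          simpa only [indicator_of_mem hxT, indicator_of_mem hxball] using hGF ‖x‖
        · simp [hxT]
    _ ≤ ∫⁻ x in ball z (2 * r), F ‖x‖ ∂μ := by
        rw [← lintegral_indicator measurableSet_ball]
        exact setLIntegral_le_lintegral _ _

theorem measure_ball_half_mul_setLIntegral_le (hr : 0 < r) (hrz : r ≤ ‖z‖ / 2) (F : ℝ → ℝ≥0∞) :
    μ (ball z (r / 2)) * ∫⁻ t in Ioc (‖z‖ - r) (‖z‖ + r), F t ≤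
      ENNReal.ofReal (r * (5 / 2) ^ (finrank ℝ E - 1)) * ∫⁻ x in ball z (2 * r), F ‖x‖ ∂μ := by
  set m := finrank ℝ E - 1
  set σ := μ.toSphere ((↑) ⁻¹' projCone z r)
  set I := ∫⁻ t in Ioc (‖z‖ - r) (‖z‖ + r), F t
  have hweight : r * (‖z‖ + r / 2) ^ m ≤ r * (5 / 2) ^ m * (‖z‖ - r) ^ m := by
    rw [mul_assoc, ← mul_pow]
    gcongr
    linarith only [hr, hrz]
  calc μ (ball z (r / 2)) * I
      ≤ σ * ENNReal.ofReal (r * (5 / 2) ^ m * (‖z‖ - r) ^ m) * I := by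
        grw [measure_ball_half_le_toSphere_projCone μ hr z, hweight]
    _ = ENNReal.ofReal (r * (5 / 2) ^ m) * (σ * (ENNReal.ofReal ((‖z‖ - r) ^ m) * I)) := by
        rw [ENNReal.ofReal_mul (by positivity)]
        ring
    _ ≤ _ := by grw [toSphere_projCone_mul_setLIntegral_le μ (by linarith) F]

theorem setLAverage_Ioc_le_setLAverage_ball (hr : 0 < r) (hrz : r ≤ ‖z‖ / 2) (F : ℝ → ℝ≥0∞) :
    ⨍⁻ t in Ioc (‖z‖ - r) (‖z‖ + r), F t ∂volume ≤
      ENNReal.ofReal (2 * 10 ^ (finrank ℝ E - 1)) * ⨍⁻ x in ball z (2 * r), F ‖x‖ ∂μ := by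
  set m := finrank ℝ E - 1
  set V := μ (ball z (r / 2))
  set I := ∫⁻ t in Ioc (‖z‖ - r) (‖z‖ + r), F t
  set J := ∫⁻ x in ball z (2 * r), F ‖x‖ ∂μ
  have hV₀ : V ≠ 0 := (measure_ball_pos μ z (half_pos hr)).ne'
  have hV : V ≠ ∞ := measure_ball_lt_top.ne
  have hr₂ : ENNReal.ofReal (2 * r) ≠ 0 := by positivity
  have h₄ : ENNReal.ofReal (4 ^ (m + 1)) ≠ 0 := by positivity
  have hlength : volume (Ioc (‖z‖ - r) (‖z‖ + r)) = ENNReal.ofReal (2 * r) := by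
    rw [Real.volume_Ioc]
    ring_nf
  have hscale : μ (ball z (2 * r)) = ENNReal.ofReal (4 ^ (m + 1)) * V := by
    rw [show 2 * r = 4 * (r / 2) by ring, Measure.addHaar_ball_mul_of_pos μ z (by norm_num),
      Nat.sub_add_cancel finrank_pos, ← Measure.addHaar_ball_center μ z]
  have hconst : r * (5 / 2) ^ m / (2 * r) = 2 * 10 ^ m / 4 ^ (m + 1) := by
    rw [show (10 : ℝ) = 5 / 2 * 4 by norm_num, mul_pow, pow_succ]
    field_simp
    norm_num
  calc ⨍⁻ t in Ioc (‖z‖ - r) (‖z‖ + r), F t ∂volume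
      = V * I / (V * ENNReal.ofReal (2 * r)) := by
        rw [setLAverage_eq, hlength, ENNReal.mul_div_mul_left _ _ hV₀ hV]
    _ ≤ ENNReal.ofReal (r * (5 / 2) ^ m) * J / (V * ENNReal.ofReal (2 * r)) := by
        grw [measure_ball_half_mul_setLIntegral_le μ hr hrz F]
    _ = ENNReal.ofReal (r * (5 / 2) ^ m / (2 * r)) * (J / V) := by
        rw [ENNReal.ofReal_div_of_pos (by positivity), mul_comm V,
          ENNReal.mul_div_mul_comm (.inl hr₂) (.inl ENNReal.ofReal_ne_top)]
    _ = ENNReal.ofReal (2 * 10 ^ m) * (J / (ENNReal.ofReal (4 ^ (m + 1)) * V)) := by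
        rw [hconst, ENNReal.ofReal_div_of_pos (by positivity),
          ← ENNReal.mul_div_mul_comm (.inl h₄) (.inl ENNReal.ofReal_ne_top), mul_div_assoc]
    _ = _ := by rw [setLAverage_eq, hscale]

end Polar

theorem ofReal_setAverage_le_setLAverage {α : Type*} {_ : MeasurableSpace α} {μ : Measure α}
    {s : Set α} (hs : MeasurableSet s) {f : α → ℝ} (hf : ∀ x ∈ s, 0 ≤ f x) :
    ENNReal.ofReal (⨍ x in s, f x ∂μ) ≤ ⨍⁻ x in s, ENNReal.ofReal (f x) ∂μ := by
  calc ENNReal.ofReal (⨍ x in s, f x ∂μ)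
      ≤ ‖⨍ x in s, f x ∂μ‖ₑ := Real.ofReal_le_enorm _
    _ ≤ ⨍⁻ x in s, ‖f x‖ₑ ∂μ := enorm_integral_le_lintegral_enorm f
    _ = ⨍⁻ x in s, ENNReal.ofReal (f x) ∂μ :=
        setLAverage_congr_fun hs fun x hx ↦ Real.enorm_of_nonneg (hf x hx)

theorem stmt9_general {E : Type*} [NormedAddCommGroup E] [NormedSpace ℝ E]
    [FiniteDimensional ℝ E] [MeasurableSpace E] [BorelSpace E] (μ : Measure E) [μ.IsAddHaarMeasure]
    {f : E → ℝ} {F : ℝ → ℝ} {z : E} {r : ℝ} (hf : IntegrableOn f (ball z (2 * r)) μ)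
    (hF : ∀ t, 0 < t → 0 ≤ F t) (hfF : ∀ x, x ≠ 0 → f x = F ‖x‖) (hr : 0 < r)
    (hrz : r ≤ ‖z‖ / 2) :
    (1 / ((‖z‖ + r) - (‖z‖ - r))) * ∫ t in (‖z‖ - r)..(‖z‖ + r), F t ≤
      2 * 10 ^ (finrank ℝ E - 1) * ⨍ y in ball z (2 * r), f y ∂μ := by
  have : Nontrivial E := ⟨z, 0, norm_pos_iff.1 (by linarith)⟩
  have hball {x : E} (hx : x ∈ ball z (2 * r)) : x ≠ 0 := by
    rintro rfl
    rw [mem_ball, dist_zero_left] at hx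
    linarith
  have hf₀ {x : E} (hx : x ∈ ball z (2 * r)) : 0 ≤ f x :=
    hfF x (hball hx) ▸ hF _ (norm_pos_iff.2 (hball hx))
  have hIoc : ∀ t ∈ Ioc (‖z‖ - r) (‖z‖ + r), 0 ≤ F t := fun t ht ↦ hF t (by linarith [ht.1])
  have hLHS : (1 / ((‖z‖ + r) - (‖z‖ - r))) * ∫ t in (‖z‖ - r)..(‖z‖ + r), F t =
      ⨍ t in Ioc (‖z‖ - r) (‖z‖ + r), F t := by
    rw [one_div, ← smul_eq_mul, ← interval_average_eq, uIoc_of_le (by linarith)]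
  have havg : 0 ≤ ⨍ y in ball z (2 * r), f y ∂μ := by
    rw [setAverage_eq]
    exact smul_nonneg (by positivity) (setIntegral_nonneg measurableSet_ball fun x hx ↦ hf₀ hx)
  rw [hLHS, ← ENNReal.ofReal_le_ofReal_iff (by positivity)]
  calc ENNReal.ofReal (⨍ t in Ioc (‖z‖ - r) (‖z‖ + r), F t)
      ≤ ⨍⁻ t in Ioc (‖z‖ - r) (‖z‖ + r), ENNReal.ofReal (F t) ∂volume :=
        ofReal_setAverage_le_setLAverage measurableSet_Ioc hIoc
    _ ≤ ENNReal.ofReal (2 * 10 ^ (finrank ℝ E - 1)) *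
          ⨍⁻ y in ball z (2 * r), ENNReal.ofReal (F ‖y‖) ∂μ :=
        setLAverage_Ioc_le_setLAverage_ball μ hr hrz fun t ↦ ENNReal.ofReal (F t)
    _ = ENNReal.ofReal (2 * 10 ^ (finrank ℝ E - 1)) *
          ⨍⁻ y in ball z (2 * r), ENNReal.ofReal (f y) ∂μ := by
        rw [setLAverage_congr_fun measurableSet_ball fun y hy ↦
          congrArg ENNReal.ofReal (hfF y (hball hy)).symm]
    _ = ENNReal.ofReal (2 * 10 ^ (finrank ℝ E - 1) * ⨍ y in ball z (2 * r), f y ∂μ) := by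
        rw [setLAverage_eq, ← ofReal_setAverage hf
          (ae_restrict_of_forall_mem measurableSet_ball fun x hx ↦ hf₀ hx),
          ← ENNReal.ofReal_mul (by positivity)]

theorem stmt9 (n : ℕ) (hn : 1 ≤ n) :
    ∃ C : ℝ, 0 < C ∧
      ∀ (f : EuclideanSpace ℝ (Fin n) → ℝ) (F : ℝ → ℝ)
        (z : EuclideanSpace ℝ (Fin n)) (r : ℝ),
        LocallyIntegrable f →
        (∀ x, 0 ≤ f x) →
        (∀ t, 0 < t → 0 ≤ F t) →
        (∀ x : EuclideanSpace ℝ (Fin n), x ≠ 0 → f x = F ‖x‖) →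
        z ≠ 0 → 0 < r →
        ball z r ⊆ ball 0 (2 * ‖z‖) \ ball 0 (‖z‖ / 2) →
        (1 / ((‖z‖ + r) - (‖z‖ - r))) * ∫ t in (‖z‖ - r)..(‖z‖ + r), F t ≤
          C * ⨍ y in ball z (2 * r), f y := by
  exact ⟨_, by positivity, fun f F z r hf _ hF hfF hz hr hball ↦ stmt9_general volume
    ((hf.integrableOn_isCompact (isCompact_closedBall z _)).mono_set ball_subset_closedBall)
    hF hfF hr (le_half_norm_of_ball_subset hz fun x hx ↦ (hball hx).2)⟩
end
end

section
/- Let n ≥ 1, 0 < β < n, let f : ℝⁿ → [0,∞) be a nonnegative, continuously differentiable, integrable radial function, let x ∈ ℝⁿ \ {0}, suppose M_β f is real-valued in a neighborhood of x and differentiable at x, and let B ∈ ℬ_x be a best ball at x with B ⊂ B(0,|x|). Then | ⨍_B ∇f(y) dy | ≤ ⨍_B |∇f(y)| (|y|/|x|) dy. -/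
/-!
Moving a best ball `B = B(z, r)` at `x` along with the point gives values `r ^ β ⨍_B f` that touch
`M_β f` from below, so both have the same derivative. Translations give
`D(M_β f)(x) = r ^ β ⨍_B Df`, and dilations about the origin give
`D(M_β f)(x) x = r ^ β (β ⨍_B f + ⨍_B Df(y) y dy)`.

Since `B` competes at each of its points, `M_β f` is minimal on the closure of `B` at `x`, where `B`
is internally tangent to `B(0, |x|)`. Hence `D(M_β f)(x) x = -|x| |D(M_β f)(x)|`, and combining the
identities, `|x| |⨍_B ∇f| = -β ⨍_B f - ⨍_B ∇f(y) · y dy ≤ ⨍_B |∇f(y)| |y| dy`.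
-/

open MeasureTheory Metric Filter
open scoped Topology

noncomputable section

section Average

open scoped Pointwise

lemma setAverage_preimage_of_measurePreserving {X Y F : Type*} [MeasurableSpace X]
    [MeasurableSpace Y] [NormedAddCommGroup F] [NormedSpace ℝ F] {μ : Measure X} {ν : Measure Y}
    {g : X → Y} (hg : MeasurePreserving g μ ν) (hge : MeasurableEmbedding g) (f : Y → F)
    (s : Set Y) :
    ⨍ x in g ⁻¹' s, f (g x) ∂μ = ⨍ y in s, f y ∂ν := by
  rw [setAverage_eq, setAverage_eq, hg.setIntegral_preimage_emb hge, measureReal_def,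
    measureReal_def, hg.measure_preimage_emb hge]

lemma setAverage_ball_comp_add_right {E F : Type*} [SeminormedAddCommGroup E] [MeasurableSpace E]
    [BorelSpace E] [NormedAddCommGroup F] [NormedSpace ℝ F] (μ : Measure E)
    [μ.IsAddRightInvariant] (f : E → F) (z c : E) (r : ℝ) :
    ⨍ y in ball z r, f (y + c) ∂μ = ⨍ y in ball (z + c) r, f y ∂μ := by
  simpa using setAverage_preimage_of_measurePreserving (measurePreserving_add_right μ c)
    (measurableEmbedding_addRight c) f (ball (z + c) r)

lemma setAverage_continuousLinearMap_apply {X E F : Type*} [MeasurableSpace X]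
    [NormedAddCommGroup E] [NormedSpace ℝ E] [NormedAddCommGroup F] [NormedSpace ℝ F]
    {μ : Measure X} {φ : X → E →L[ℝ] F} {s : Set X} (hφ : IntegrableOn φ s μ) (h : E) :
    (⨍ y in s, φ y ∂μ) h = ⨍ y in s, φ y h ∂μ := by
  rw [setAverage_eq, setAverage_eq, smul_apply, ContinuousLinearMap.integral_apply hφ]

lemma integrableOn_of_continuous_of_isBounded {X F : Type*} [PseudoMetricSpace X] [ProperSpace X]
    [MeasurableSpace X] [OpensMeasurableSpace X] [NormedAddCommGroup F] {μ : Measure X}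
    [IsFiniteMeasureOnCompacts μ] {f : X → F} (hf : Continuous f) {s : Set X}
    (hs : Bornology.IsBounded s) : IntegrableOn f s μ :=
  (hf.continuousOn.integrableOn_compact' hs.isCompact_closure
    isClosed_closure.measurableSet).mono_set subset_closure

variable {E F : Type*} [NormedAddCommGroup E] [NormedSpace ℝ E] [MeasurableSpace E]
  [NormedAddCommGroup F] [NormedSpace ℝ F]

lemma setAverage_comp_smul [BorelSpace E] [FiniteDimensional ℝ E] (μ : Measure E)
    [μ.IsAddHaarMeasure] (f : E → F) (s : Set E) {t : ℝ} (ht : t ≠ 0) :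
    ⨍ y in s, f (t • y) ∂μ = ⨍ y in t • s, f y ∂μ := by
  have hvol : μ.real (t • s) = |t ^ Module.finrank ℝ E| * μ.real s := by
    simp [measureReal_def, Measure.addHaar_smul]
  rw [setAverage_eq, setAverage_eq, Measure.setIntegral_comp_smul μ f s ht, hvol, smul_smul,
    abs_inv, mul_inv_rev]

lemma setAverage_ball_comp_smul [BorelSpace E] [FiniteDimensional ℝ E] (μ : Measure E)
    [μ.IsAddHaarMeasure] (f : E → F) (z : E) (r : ℝ) {t : ℝ} (ht : t ≠ 0) :
    ⨍ y in ball z r, f (t • y) ∂μ = ⨍ y in ball (t • z) (‖t‖ * r), f y ∂μ := by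
  rw [setAverage_comp_smul μ f _ ht, _root_.smul_ball ht]

lemma hasDerivAt_setIntegral_comp_add_smul [OpensMeasurableSpace E] [ProperSpace E]
    {μ : Measure E} [IsFiniteMeasureOnCompacts μ] {f : E → F} (hf : ContDiff ℝ 1 f) {w : E → E}
    (hw : Continuous w) {s : Set E} (hs : MeasurableSet s) (hsb : Bornology.IsBounded s) :
    HasDerivAt (fun t : ℝ => ∫ y in s, f (y + t • w y) ∂μ)
      (∫ y in s, fderiv ℝ f y (w y) ∂μ) 0 := by
  have hfc : Continuous f := hf.continuous
  have : Continuous (fderiv ℝ f) := hf.continuous_fderiv one_ne_zero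
  have hF' : Continuous fun p : ℝ × E => fderiv ℝ f (p.2 + p.1 • w p.2) (w p.2) := by fun_prop
  obtain ⟨C, hC⟩ := ((isCompact_Icc (a := (-1 : ℝ)) (b := 1)).prod
    hsb.isCompact_closure).exists_bound_of_continuousOn hF'.continuousOn
  have hderiv (y : E) (t : ℝ) :
      HasDerivAt (fun t : ℝ => f (y + t • w y)) (fderiv ℝ f (y + t • w y) (w y)) t := by
    have hline : HasDerivAt (fun t : ℝ => y + t • w y) (w y) t := by
      simpa using ((hasDerivAt_id t).smul_const (w y)).const_add y
    exact (hf.differentiable one_ne_zero _).hasFDerivAt.comp_hasDerivAt t hline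
  have key := hasDerivAt_integral_of_dominated_loc_of_deriv_le (μ := μ.restrict s)
    (F := fun (t : ℝ) y => f (y + t • w y)) (F' := fun (t : ℝ) y => fderiv ℝ f (y + t • w y) (w y))
    (bound := fun _ => C) (Icc_mem_nhds (neg_one_lt_zero (R := ℝ)) one_pos)
    (Eventually.of_forall fun t => Continuous.aestronglyMeasurable (by fun_prop))
    (integrableOn_of_continuous_of_isBounded (by fun_prop) hsb)
    (Continuous.aestronglyMeasurable (by fun_prop))
    ((ae_restrict_mem hs).mono fun y hy t ht => hC (t, y) ⟨ht, subset_closure hy⟩)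
    (integrableOn_of_continuous_of_isBounded continuous_const hsb)
    (Eventually.of_forall fun y t _ => hderiv y t)
  simpa using key.2

lemma hasDerivAt_setAverage_comp_add_smul [OpensMeasurableSpace E] [ProperSpace E]
    {μ : Measure E} [IsFiniteMeasureOnCompacts μ] {f : E → F} (hf : ContDiff ℝ 1 f) {w : E → E}
    (hw : Continuous w) {s : Set E} (hs : MeasurableSet s) (hsb : Bornology.IsBounded s) :
    HasDerivAt (fun t : ℝ => ⨍ y in s, f (y + t • w y) ∂μ)
      (⨍ y in s, fderiv ℝ f y (w y) ∂μ) 0 := by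
  simp only [setAverage_eq]
  exact (hasDerivAt_setIntegral_comp_add_smul hf hw hs hsb).const_smul _

end Average

section Gradient

variable {E : Type*} [NormedAddCommGroup E] [InnerProductSpace ℝ E]

lemma norm_gradient_eq_norm_fderiv [CompleteSpace E] (f : E → ℝ) (y : E) :
    ‖gradient f y‖ = ‖fderiv ℝ f y‖ :=
  LinearIsometryEquiv.norm_map _ _

variable [MeasurableSpace E] [OpensMeasurableSpace E] [ProperSpace E] {μ : Measure E}
  [IsFiniteMeasureOnCompacts μ] {f : E → ℝ} {s : Set E}

lemma norm_setAverage_gradient (hf : ContDiff ℝ 1 f) (hs : Bornology.IsBounded s) :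
    ‖⨍ y in s, gradient f y ∂μ‖ = ‖⨍ y in s, fderiv ℝ f y ∂μ‖ := by
  have hfderiv : IntegrableOn (fderiv ℝ f) s μ :=
    integrableOn_of_continuous_of_isBounded (hf.continuous_fderiv one_ne_zero) hs
  have hdual : ⨍ y in s, gradient f y ∂μ =
      (InnerProductSpace.toDual ℝ E).symm (⨍ y in s, fderiv ℝ f y ∂μ) :=
    ContinuousLinearMap.integral_comp_commSL (by simp)
      (InnerProductSpace.toDual ℝ E).symm.toContinuousLinearEquiv.toContinuousLinearMap
      hfderiv.integrable.to_average
  rw [hdual, LinearIsometryEquiv.norm_map]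

lemma neg_setAverage_fderiv_apply_self_le (hf : ContDiff ℝ 1 f) (hs : Bornology.IsBounded s) :
    -⨍ y in s, fderiv ℝ f y y ∂μ ≤ ⨍ y in s, ‖gradient f y‖ * ‖y‖ ∂μ := by
  have : Continuous (fderiv ℝ f) := hf.continuous_fderiv one_ne_zero
  have hleft : IntegrableOn (fun y => -fderiv ℝ f y y) s μ :=
    integrableOn_of_continuous_of_isBounded (by fun_prop) hs
  have hright : IntegrableOn (fun y => ‖fderiv ℝ f y‖ * ‖y‖) s μ :=
    integrableOn_of_continuous_of_isBounded (by fun_prop) hs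
  simp only [norm_gradient_eq_norm_fderiv]
  rw [← average_neg]
  exact integral_mono hleft.integrable.to_average hright.integrable.to_average fun y =>
    (neg_le_abs _).trans ((fderiv ℝ f y).le_opNorm y)

end Gradient

section NormedSpace

variable {E : Type*} [NormedAddCommGroup E] [NormedSpace ℝ E]

lemma norm_add_le_of_ball_subset_ball_zero [Nontrivial E] {z : E} {r R : ℝ} (hr : 0 < r)
    (hsub : ball z r ⊆ ball 0 R) : ‖z‖ + r ≤ R := by
  obtain ⟨u, hur, hu⟩ : ∃ u : E, ‖u‖ = r ∧ ‖z + u‖ = ‖z‖ + ‖u‖ := by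
    rcases eq_or_ne z 0 with rfl | hz
    · obtain ⟨u, hu⟩ := exists_norm_eq E hr.le
      exact ⟨u, hu, by simp⟩
    · refine ⟨(r / ‖z‖) • z, ?_, (SameRay.sameRay_nonneg_smul_right z (by positivity)).norm_add⟩
      rw [norm_smul, norm_div, norm_norm, Real.norm_of_nonneg hr.le,
        div_mul_cancel₀ _ (norm_ne_zero_iff.2 hz)]
  have hmem : z + u ∈ closure (ball z r) := by
    simp [closure_ball z hr.ne', hur]
  have hle : z + u ∈ closedBall 0 R := closure_ball_subset_closedBall (closure_mono hsub hmem)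
  rwa [mem_closedBall_zero_iff, hu, hur] at hle

lemma norm_smul_sub_eq_smul_of_ball_subset [StrictConvexSpace ℝ E] {x z : E} {r : ℝ} (hr : 0 < r)
    (hxz : x ∈ closedBall z r) (hsub : ball z r ⊆ ball 0 ‖x‖) : ‖x‖ • (x - z) = r • x := by
  have hx : 0 < ‖x‖ := pos_of_mem_ball (hsub (mem_ball_self hr))
  have : Nontrivial E := nontrivial_of_ne x 0 (norm_pos_iff.1 hx)
  have hle : ‖z‖ + r ≤ ‖x‖ := norm_add_le_of_ball_subset_ball_zero hr hsub
  have hdist : ‖x - z‖ ≤ r := mem_closedBall_iff_norm.1 hxz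
  have htri : ‖x‖ ≤ ‖x - z‖ + ‖z‖ := norm_le_norm_sub_add x z
  have hray : SameRay ℝ (x - z) z := by
    rw [sameRay_iff_norm_add, sub_add_cancel]
    linarith
  have hxray : SameRay ℝ (x - z) x := by
    simpa using (SameRay.refl (x - z)).add_right hray
  rw [← hxray.norm_smul_eq, show ‖x - z‖ = r by linarith]

lemma add_mul_opNorm_le_of_forall_mem_closedBall {L : E →L[ℝ] ℝ} {z : E} {r c : ℝ} (hr : 0 < r)
    (hL : ∀ y ∈ closedBall z r, c ≤ L y) : c + r * ‖L‖ ≤ L z := by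
  have hbound (u : E) (hu : ‖u‖ = 1) : r * L u ≤ L z - c := by
    have := hL (z - r • u) (by simp [norm_smul, hu, abs_of_pos hr])
    rw [map_sub, map_smul, smul_eq_mul] at this
    linarith
  have hnorm : ‖L‖ ≤ (L z - c) / r := by
    refine ContinuousLinearMap.opNorm_le_of_unit_norm
      (div_nonneg (sub_nonneg.2 (hL z (mem_closedBall_self hr.le))) hr.le) fun u hu => ?_
    have hneg := hbound (-u) (by rwa [norm_neg])
    rw [map_neg] at hneg
    rw [Real.norm_eq_abs, abs_le', le_div_iff₀' hr, le_div_iff₀' hr]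
    exact ⟨hbound u hu, hneg⟩
  rw [le_div_iff₀' hr] at hnorm
  linarith

end NormedSpace

lemma hasDerivAt_eq_of_eventuallyLE {f g : ℝ → ℝ} {f' g' a : ℝ} (hf : HasDerivAt f f' a)
    (hg : HasDerivAt g g' a) (hle : f ≤ᶠ[𝓝 a] g) (heq : f a = g a) : f' = g' := by
  have hmin : IsLocalMin (g - f) a := by
    filter_upwards [hle] with t ht
    simpa [heq] using ht
  exact (sub_eq_zero.1 (hmin.hasDerivAt_eq_zero (hg.sub hf))).symm

section FracMax

variable {n : ℕ} {β : ℝ} {f : EuclideanSpace ℝ (Fin n) → ℝ} {x z : EuclideanSpace ℝ (Fin n)}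
  {r : ℝ}

lemma le_fracMax (hbdd : BddAbove (maxSet β f x)) (hr : 0 < r) (hx : x ∈ closedBall z r) :
    r ^ β * ⨍ y in ball z r, |f y| ≤ fracMax β f x :=
  le_csSup hbdd ⟨z, r, hr, hx, rfl⟩

namespace IsBestBall

lemma fderiv_fracMax_sub_nonneg (hB : IsBestBall β f x z r)
    (hfin : ∀ᶠ y in 𝓝 x, BddAbove (maxSet β f y)) (hdiff : DifferentiableAt ℝ (fracMax β f) x)
    {y : EuclideanSpace ℝ (Fin n)} (hy : y ∈ closedBall z r) :
    0 ≤ fderiv ℝ (fracMax β f) x (y - x) := by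
  obtain ⟨hr, hxz, hM⟩ := hB
  have hmin : IsLocalMinOn (fracMax β f) (closedBall z r) x := by
    filter_upwards [mem_nhdsWithin_of_mem_nhds hfin, self_mem_nhdsWithin] with u hu huB
    exact hM.trans_le (le_fracMax hu hr huB)
  exact hmin.hasFDerivWithinAt_nonneg hdiff.hasFDerivAt.hasFDerivWithinAt
    (sub_mem_posTangentConeAt_of_segment_subset ((convex_closedBall z r).segment_subset hxz hy))

lemma norm_fderiv_fracMax_mul_norm_le (hB : IsBestBall β f x z r)
    (hfin : ∀ᶠ y in 𝓝 x, BddAbove (maxSet β f y)) (hdiff : DifferentiableAt ℝ (fracMax β f) x)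
    (hsub : ball z r ⊆ ball 0 ‖x‖) :
    ‖fderiv ℝ (fracMax β f) x‖ * ‖x‖ ≤ -fderiv ℝ (fracMax β f) x x := by
  set L := fderiv ℝ (fracMax β f) x
  have hL : L x + r * ‖L‖ ≤ L z :=
    add_mul_opNorm_le_of_forall_mem_closedBall hB.1 fun y hy => by
      simpa using hB.fderiv_fracMax_sub_nonneg hfin hdiff hy
  have htangent : ‖x‖ * (L x - L z) = r * L x := by
    simpa using congrArg L (norm_smul_sub_eq_smul_of_ball_subset hB.1 hB.2.1 hsub)
  have hscaled : r * (‖L‖ * ‖x‖) ≤ r * -L x := by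
    linarith [mul_le_mul_of_nonneg_left hL (norm_nonneg x)]
  exact le_of_mul_le_mul_left hscaled hB.1

lemma fderiv_fracMax_apply_eq_of_hasDerivAt (hB : IsBestBall β f x z r)
    (hfin : ∀ᶠ y in 𝓝 x, BddAbove (maxSet β f y)) (hdiff : DifferentiableAt ℝ (fracMax β f) x)
    {h : EuclideanSpace ℝ (Fin n)} {c : ℝ → EuclideanSpace ℝ (Fin n)} {ρ : ℝ → ℝ} {d : ℝ}
    (hc : c 0 = z) (hρ : ρ 0 = r)
    (hball : ∀ᶠ t in 𝓝 0, 0 < ρ t ∧ x + t • h ∈ closedBall (c t) (ρ t))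
    (hd : HasDerivAt (fun t => ρ t ^ β * ⨍ y in ball (c t) (ρ t), |f y|) d 0) :
    fderiv ℝ (fracMax β f) x h = d := by
  have hline : HasDerivAt (fun t : ℝ => x + t • h) h 0 := by
    simpa using ((hasDerivAt_id (0 : ℝ)).smul_const h).const_add x
  have hM : HasDerivAt (fun t : ℝ => fracMax β f (x + t • h)) (fderiv ℝ (fracMax β f) x h) 0 :=
    hdiff.hasFDerivAt.comp_hasDerivAt_of_eq 0 hline (by simp)
  have hbdd : ∀ᶠ t : ℝ in 𝓝 0, BddAbove (maxSet β f (x + t • h)) :=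
    hline.continuousAt.eventually (by simpa using hfin)
  refine (hasDerivAt_eq_of_eventuallyLE hd hM ?_ ?_).symm
  · filter_upwards [hbdd, hball] with t ht hρt
    exact le_fracMax ht hρt.1 hρt.2
  · simpa [hc, hρ] using hB.2.2.symm

lemma fderiv_fracMax (hB : IsBestBall β f x z r) (hf0 : ∀ y, 0 ≤ f y) (hf : ContDiff ℝ 1 f)
    (hfin : ∀ᶠ y in 𝓝 x, BddAbove (maxSet β f y))
    (hdiff : DifferentiableAt ℝ (fracMax β f) x) :
    fderiv ℝ (fracMax β f) x = r ^ β • ⨍ y in ball z r, fderiv ℝ f y := by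
  have hfderiv : IntegrableOn (fderiv ℝ f) (ball z r) :=
    integrableOn_of_continuous_of_isBounded (hf.continuous_fderiv one_ne_zero) isBounded_ball
  ext1 h
  have hd : HasDerivAt (fun t : ℝ => r ^ β * ⨍ y in ball (z + t • h) r, |f y|)
      (r ^ β * ⨍ y in ball z r, fderiv ℝ f y h) 0 := by
    have havg := hasDerivAt_setAverage_comp_add_smul (μ := volume) (w := fun _ => h) hf
      continuous_const (measurableSet_ball (x := z) (ε := r)) isBounded_ball
    simpa only [abs_of_nonneg (hf0 _), ← setAverage_ball_comp_add_right] using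
      havg.const_mul (r ^ β)
  have hball (t : ℝ) : 0 < r ∧ x + t • h ∈ closedBall (z + t • h) r :=
    ⟨hB.1, by simpa using hB.2.1⟩
  rw [hB.fderiv_fracMax_apply_eq_of_hasDerivAt hfin hdiff (by simp) rfl (.of_forall hball) hd,
    smul_apply, smul_eq_mul, setAverage_continuousLinearMap_apply hfderiv]

lemma fderiv_fracMax_apply_self (hB : IsBestBall β f x z r) (hf0 : ∀ y, 0 ≤ f y)
    (hf : ContDiff ℝ 1 f) (hfin : ∀ᶠ y in 𝓝 x, BddAbove (maxSet β f y))
    (hdiff : DifferentiableAt ℝ (fracMax β f) x) :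
    fderiv ℝ (fracMax β f) x x =
      r ^ β * (β * (⨍ y in ball z r, f y) + ⨍ y in ball z r, fderiv ℝ f y y) := by
  have hpos : ∀ᶠ t : ℝ in 𝓝 0, 0 < 1 + t := by
    filter_upwards [Ioi_mem_nhds neg_one_lt_zero] with t ht
    exact neg_lt_iff_pos_add'.1 ht
  have hpow : HasDerivAt (fun t : ℝ => (1 + t) ^ β) β 0 := by
    simpa using ((hasDerivAt_id (0 : ℝ)).const_add 1).rpow_const (p := β) (by simp)
  have havg : HasDerivAt (fun t : ℝ => ⨍ y in ball z r, f (y + t • y))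
      (⨍ y in ball z r, fderiv ℝ f y y) 0 :=
    hasDerivAt_setAverage_comp_add_smul hf continuous_id measurableSet_ball isBounded_ball
  have hd : HasDerivAt
      (fun t : ℝ => ((1 + t) * r) ^ β * ⨍ y in ball ((1 + t) • z) ((1 + t) * r), |f y|)
      (r ^ β * (β * (⨍ y in ball z r, f y) + ⨍ y in ball z r, fderiv ℝ f y y)) 0 := by
    refine ((hpow.mul havg).const_mul (r ^ β)).congr_deriv (by simp) |>.congr_of_eventuallyEq ?_
    filter_upwards [hpos] with t ht
    have hdilate : ⨍ y in ball ((1 + t) • z) ((1 + t) * r), f y =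
        ⨍ y in ball z r, f (y + t • y) := by
      simpa only [Real.norm_of_nonneg ht.le, add_smul, one_smul] using
        (setAverage_ball_comp_smul volume f z r ht.ne').symm
    simp only [abs_of_nonneg (hf0 _), hdilate, Real.mul_rpow ht.le hB.1.le, Pi.mul_apply]
    ring
  refine hB.fderiv_fracMax_apply_eq_of_hasDerivAt hfin hdiff (by simp) (by simp) ?_ hd
  filter_upwards [hpos] with t ht
  refine ⟨mul_pos ht hB.1, ?_⟩
  rw [show x + t • x = (1 + t) • x by module, mem_closedBall, dist_smul₀, Real.norm_of_nonneg ht.le]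
  exact mul_le_mul_of_nonneg_left hB.2.1 ht.le

end IsBestBall

end FracMax

theorem stmt10_general {n : ℕ} {β : ℝ} (hβ : 0 ≤ β) {f : EuclideanSpace ℝ (Fin n) → ℝ}
    (hf0 : ∀ y, 0 ≤ f y) (hf : ContDiff ℝ 1 f) {x : EuclideanSpace ℝ (Fin n)}
    (hfin : ∀ᶠ y in 𝓝 x, BddAbove (maxSet β f y))
    (hdiff : DifferentiableAt ℝ (fracMax β f) x)
    {z : EuclideanSpace ℝ (Fin n)} {r : ℝ} (hB : IsBestBall β f x z r)
    (hsub : ball z r ⊆ ball 0 ‖x‖) :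
    ‖⨍ y in ball z r, gradient f y‖ ≤
      ⨍ y in ball z r, ‖gradient f y‖ * (‖y‖ / ‖x‖) := by
  have hx : 0 < ‖x‖ := pos_of_mem_ball (hsub (mem_ball_self hB.1))
  have hrβ : 0 < r ^ β := Real.rpow_pos_of_pos hB.1 β
  have hradial : ‖⨍ y in ball z r, gradient f y‖ * ‖x‖ ≤
      -(β * (⨍ y in ball z r, f y) + ⨍ y in ball z r, fderiv ℝ f y y) := by
    have h := hB.norm_fderiv_fracMax_mul_norm_le hfin hdiff hsub
    rw [hB.fderiv_fracMax_apply_self hf0 hf hfin hdiff, hB.fderiv_fracMax hf0 hf hfin hdiff,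
      norm_smul, Real.norm_of_nonneg hrβ.le, mul_assoc, ← mul_neg,
      ← norm_setAverage_gradient hf isBounded_ball] at h
    exact le_of_mul_le_mul_left h hrβ
  have hgradient : -⨍ y in ball z r, fderiv ℝ f y y ≤ ⨍ y in ball z r, ‖gradient f y‖ * ‖y‖ :=
    neg_setAverage_fderiv_apply_self_le hf isBounded_ball
  have hmean : 0 ≤ β * ⨍ y in ball z r, f y := mul_nonneg hβ (integral_nonneg hf0)
  have hdiv : ⨍ y in ball z r, ‖gradient f y‖ * (‖y‖ / ‖x‖) =
      (⨍ y in ball z r, ‖gradient f y‖ * ‖y‖) / ‖x‖ := by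
    simp only [← mul_div_assoc]
    exact integral_div _ _
  rw [hdiv, le_div_iff₀ hx]
  linarith

theorem stmt10 (n : ℕ) (hn : 1 ≤ n) (β : ℝ) (hβ0 : 0 < β) (hβn : β < n)
    (f : EuclideanSpace ℝ (Fin n) → ℝ) (hf0 : ∀ x, 0 ≤ f x) (hf : ContDiff ℝ 1 f)
    (hfi : Integrable f)
    (hrad : ∀ x y : EuclideanSpace ℝ (Fin n), ‖x‖ = ‖y‖ → f x = f y)
    (x : EuclideanSpace ℝ (Fin n)) (hx : x ≠ 0)
    (hfin : ∀ᶠ y in 𝓝 x, BddAbove (maxSet β f y))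
    (hdiff : DifferentiableAt ℝ (fracMax β f) x)
    (z : EuclideanSpace ℝ (Fin n)) (r : ℝ) (hB : IsBestBall β f x z r)
    (hsub : ball z r ⊆ ball 0 ‖x‖) :
    ‖⨍ y in ball z r, gradient f y‖ ≤
      ⨍ y in ball z r, ‖gradient f y‖ * (‖y‖ / ‖x‖) := by
  exact stmt10_general hβ0.le hf0 hf hfin hdiff hB hsub
end
end
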